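/- arXiv:2008.05430 — 2 statements merged into one kernel-verified Lean document; each statement's English description precedes it below -/
import Mathlib

section
/- Let k ≥ l ≥ 1 be integers with k + l ≥ 6, and let G be a finite oriented graph on n ≥ 1 vertices such that s(v) ≥ OPT(k,l) for every vertex v of G. Then s(G) ≤ OPT(k,l). -/
open scoped BigOperators

/-- The arc relation of the oriented star `S_{k,l}` on `Fin (k+l+1)`:
vertex `0` is the center, vertices `1,…,k` are the out-leaves and
vertices `k+1,…,k+l` are the in-leaves. -/
def StarArc (k l : ℕ) (a b : Fin (k + l + 1)) : Prop :=
  (a.val = 0 ∧ 1 ≤ b.val ∧ b.val ≤ k) ∨ (b.val = 0 ∧ k + 1 ≤ a.val)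

/-- `φ` witnesses an induced copy of `S_{k,l}` in the digraph with arc relation `A`:
it is injective and maps arcs to arcs and non-arcs to non-arcs. -/
def IsStarEmb (k l : ℕ) {V : Type*} (A : V → V → Prop) (φ : Fin (k + l + 1) → V) : Prop :=
  Function.Injective φ ∧ ∀ a b, StarArc k l a b ↔ A (φ a) (φ b)

/-- `s(G)`: the probability that a uniformly random map `V(S_{k,l}) → V(G)`
induces a copy of `S_{k,l}`. -/
noncomputable def starProb (k l : ℕ) (V : Type*) [Fintype V] (A : V → V → Prop) : ℝ :=
  (Nat.card {φ : Fin (k + l + 1) → V // IsStarEmb k l A φ} : ℝ) /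
    (Fintype.card V : ℝ) ^ (k + l + 1)

/-- The probability that a uniformly random map induces a copy of `S_{k,l}`
and moreover has property `P`. -/
noncomputable def starProbOn (k l : ℕ) {V : Type*} [Fintype V] (A : V → V → Prop)
    (P : (Fin (k + l + 1) → V) → Prop) : ℝ :=
  (Nat.card {φ : Fin (k + l + 1) → V // IsStarEmb k l A φ ∧ P φ} : ℝ) /
    (Fintype.card V : ℝ) ^ (k + l + 1)

/-- `s(z→v) = Pr[φ ∈ 𝒮 | φ z = v]`. -/
noncomputable def sCond (k l : ℕ) {V : Type*} [Fintype V] (A : V → V → Prop)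
    (z : Fin (k + l + 1)) (v : V) : ℝ :=
  (Nat.card {φ : Fin (k + l + 1) → V // IsStarEmb k l A φ ∧ φ z = v} : ℝ) /
    (Fintype.card V : ℝ) ^ (k + l)

/-- `Pr[φ ∈ 𝒮 ∧ P φ | φ(c) = v]`, where `c = 0` is the center of the star. -/
noncomputable def sCondOn (k l : ℕ) {V : Type*} [Fintype V] (A : V → V → Prop) (v : V)
    (P : (Fin (k + l + 1) → V) → Prop) : ℝ :=
  (Nat.card {φ : Fin (k + l + 1) → V // IsStarEmb k l A φ ∧ φ 0 = v ∧ P φ} : ℝ) /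
    (Fintype.card V : ℝ) ^ (k + l)

open scoped Fin.NatCast in
/-- `s(v) = (s(c→v) + l·s(i→v) + k·s(o→v))/(m+1)`, where the center is `0`,
`k+1` is an in-leaf and `1` is an out-leaf. -/
noncomputable def sVert (k l : ℕ) {V : Type*} [Fintype V] (A : V → V → Prop) (v : V) : ℝ :=
  (sCond k l A 0 v + l * sCond k l A ((k + 1 : ℕ) : Fin (k + l + 1)) v
      + k * sCond k l A 1 v) / ((k : ℝ) + l + 1)

/-- `ρ(v)`: the proportion of vertices adjacent to `v`. -/
noncomputable def rho {V : Type*} [Fintype V] (A : V → V → Prop) (v : V) : ℝ :=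
  (Nat.card {u : V // A v u ∨ A u v} : ℝ) / (Fintype.card V : ℝ)

/-- `ρ⁺_B(v)`: the proportion of vertices that are out-neighbours of `v` lying in `B`. -/
noncomputable def rhoPIn {V : Type*} [Fintype V] (A : V → V → Prop) (B : Set V) (v : V) : ℝ :=
  (Nat.card {u : V // A v u ∧ u ∈ B} : ℝ) / (Fintype.card V : ℝ)

/-- `ρ⁻_B(v)`: the proportion of vertices that are in-neighbours of `v` lying in `B`. -/
noncomputable def rhoMIn {V : Type*} [Fintype V] (A : V → V → Prop) (B : Set V) (v : V) : ℝ :=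
  (Nat.card {u : V // A u v ∧ u ∈ B} : ℝ) / (Fintype.card V : ℝ)

/-- `ρ_B(v)`: the proportion of vertices adjacent to `v` lying in `B`. -/
noncomputable def rhoIn {V : Type*} [Fintype V] (A : V → V → Prop) (B : Set V) (v : V) : ℝ :=
  (Nat.card {u : V // (A v u ∨ A u v) ∧ u ∈ B} : ℝ) / (Fintype.card V : ℝ)

/-- `μ(B) = |B|/n`. -/
noncomputable def muSet {V : Type*} [Fintype V] (B : Set V) : ℝ :=
  (Nat.card B : ℝ) / (Fintype.card V : ℝ)

/-- `X`: the set of vertices of large degree, `ρ(v) ≥ 1/2`. -/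
def bigX {V : Type*} [Fintype V] (A : V → V → Prop) : Set V := {v | 1 / 2 ≤ rho A v}

/-- `Y = V(G) \ X`. -/
def bigY {V : Type*} [Fintype V] (A : V → V → Prop) : Set V := (bigX A)ᶜ

/-- `α = μ(X)`. -/
noncomputable def alphaX {V : Type*} [Fintype V] (A : V → V → Prop) : ℝ := muSet (bigX A)

/-- `D = min_{x ∈ X} ρ(x)`. -/
noncomputable def Dmin {V : Type*} [Fintype V] (A : V → V → Prop) : ℝ :=
  sInf (rho A '' bigX A)

/-- `β = max_{y ∈ Y} ρ_Y(y)`. -/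
noncomputable def betaY {V : Type*} [Fintype V] (A : V → V → Prop) : ℝ :=
  sSup ((fun y => rhoIn A (bigY A) y) '' bigY A)

/-- `γ = min_{x ∈ X} ρ⁻_Y(x)`. -/
noncomputable def gammaX {V : Type*} [Fintype V] (A : V → V → Prop) : ℝ :=
  sInf ((fun x => rhoMIn A (bigY A) x) '' bigX A)

/-- `S = (m+1)·min_{v ∈ V(G)} s(v)`. -/
noncomputable def Smin (k l : ℕ) {V : Type*} [Fintype V] (A : V → V → Prop) : ℝ :=
  ((k : ℝ) + l + 1) * sInf (Set.range (sVert k l A))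

/-- `S₁ = min_{x ∈ X} (ρ⁺_Y(x))^k (ρ⁻_Y(x))^l`. -/
noncomputable def S1min (k l : ℕ) {V : Type*} [Fintype V] (A : V → V → Prop) : ℝ :=
  sInf ((fun x => rhoPIn A (bigY A) x ^ k * rhoMIn A (bigY A) x ^ l) '' bigX A)

/-- `S₂ = S₁ − ((m−1)/((m+1)·C(m,k)))·(α+β)(1−α)(1−D)^{m−2}`. -/
noncomputable def S2min (k l : ℕ) {V : Type*} [Fintype V] (A : V → V → Prop) : ℝ :=
  S1min k l A - (((k : ℝ) + l - 1) / (((k : ℝ) + l + 1) * (Nat.choose (k + l) k : ℝ)))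
    * (alphaX A + betaY A) * (1 - alphaX A) * (1 - Dmin A) ^ (k + l - 2)

/-- `λ₀ = k^k l^l / m^m`. -/
noncomputable def lam0 (k l : ℕ) : ℝ := (k : ℝ) ^ k * (l : ℝ) ^ l / ((k : ℝ) + l) ^ (k + l)

/-- `λ₁ = k^k l (l−1)^{l−1} / (m−1)^{m−1}` (with the convention `0⁰ = 1`). -/
noncomputable def lam1 (k l : ℕ) : ℝ :=
  (k : ℝ) ^ k * (l : ℝ) * ((l : ℝ) - 1) ^ (l - 1) / ((k : ℝ) + l - 1) ^ (k + l - 1)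

/-- The edge density `ρ(Z)` of a set of vertices `Z`: the number of unordered adjacent
pairs in `Z` divided by `C(|Z|,2)`. -/
noncomputable def densSet {V : Type*} [Fintype V] (A : V → V → Prop) (Z : Set V) : ℝ :=
  ((Nat.card {p : V × V // p.1 ∈ Z ∧ p.2 ∈ Z ∧ (A p.1 p.2 ∨ A p.2 p.1)} : ℝ) / 2) /
    (Nat.choose (Nat.card Z) 2 : ℝ)

/-- `d = 1 − (E_{x ∈ X} ρ⁻_Y(x))/(1−α)`. -/
noncomputable def dXY {V : Type*} [Fintype V] (A : V → V → Prop) : ℝ :=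
  1 - ((∑ᶠ x ∈ bigX A, rhoMIn A (bigY A) x) / (Nat.card (bigX A) : ℝ)) / (1 - alphaX A)

/-- `OPT(k,l)`. -/
noncomputable def OPT (k l : ℕ) : ℝ :=
  if k = l then
    (1 / 2 ^ (2 * k)) *
      sSup {y : ℝ | ∃ a ∈ Set.Icc (0 : ℝ) 1, y = a * (1 - a) ^ (2 * k) + (1 - a) * a ^ (2 * k)}
  else
    sSup {y : ℝ | ∃ a ∈ Set.Icc (0 : ℝ) (1 / 2),
      ∃ d ∈ Set.Icc (0 : ℝ) ((k : ℝ) / ((k : ℝ) + (l : ℝ))),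
      y = a * (1 - a) ^ (k + l) * d ^ k * (1 - d) ^ l
        + (((k : ℝ) - 1) ^ (k - 1) * (l : ℝ) ^ l / ((k : ℝ) + (l : ℝ) - 1) ^ (k + l - 1))
          * (1 - a) * a ^ (k + l) * (1 - d)}

section
open Finset
open scoped Classical

namespace OStar

section basics
variable {V : Type} [Fintype V] (A : V → V → Prop)

noncomputable def out (v : V) : Finset V := univ.filter (fun u => A v u)
noncomputable def inn (v : V) : Finset V := univ.filter (fun u => A u v)
noncomputable def nb (v : V) : Finset V := univ.filter (fun u => A v u ∨ A u v)
noncomputable def mu (S : Finset V) : ℝ := (S.card : ℝ) / (Fintype.card V : ℝ)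
noncomputable def avS (S : Finset V) (f : V → ℝ) : ℝ := (∑ v ∈ S, f v) / (Fintype.card V : ℝ)
noncomputable def lam (a b : ℕ) : ℝ := (a : ℝ) ^ a * (b : ℝ) ^ b / ((a : ℝ) + b) ^ (a + b)

variable {A}
@[simp] lemma mem_out {u v : V} : u ∈ out A v ↔ A v u := by simp [out]
@[simp] lemma mem_inn {u v : V} : u ∈ inn A v ↔ A u v := by simp [inn]
@[simp] lemma mem_nb {u v : V} : u ∈ nb A v ↔ (A v u ∨ A u v) := by simp [nb]
lemma nb_comm {u v : V} : u ∈ nb A v ↔ v ∈ nb A u := by simp [or_comm]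

lemma mu_nonneg (S : Finset V) : 0 ≤ mu S := by unfold mu; positivity
lemma mu_le_one (S : Finset V) : mu S ≤ 1 := by
  unfold mu
  apply div_le_one_of_le₀ _ (by positivity)
  exact_mod_cast card_le_univ S
lemma mu_mono {S T : Finset V} (h : S ⊆ T) : mu S ≤ mu T := by
  unfold mu; gcongr
lemma mu_union {S T : Finset V} (h : Disjoint S T) : mu (S ∪ T) = mu S + mu T := by
  unfold mu; rw [card_union_of_disjoint h]; push_cast; ring
lemma mu_union_le (S T : Finset V) : mu (S ∪ T) ≤ mu S + mu T := by
  unfold mu; rw [← add_div]; gcongr; exact_mod_cast card_union_le S T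
lemma mu_split (S T : Finset V) : mu S = mu (S ∩ T) + mu (S \ T) := by
  rw [← mu_union]
  · congr 1; ext x; simp; tauto
  · rw [disjoint_left]; intro x; simp; tauto
lemma mu_empty : mu (∅ : Finset V) = 0 := by simp [mu]
lemma mu_univ (hn : 1 ≤ Fintype.card V) : mu (univ : Finset V) = 1 := by
  unfold mu
  rw [card_univ]
  have : (0:ℝ) < Fintype.card V := by exact_mod_cast hn
  field_simp
lemma mu_pos {S : Finset V} (hn : 1 ≤ Fintype.card V) (h : S.Nonempty) : 0 < mu S := by
  unfold mu
  have : (0:ℝ) < Fintype.card V := by exact_mod_cast hn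
  have : (0:ℝ) < S.card := by exact_mod_cast h.card_pos
  positivity

lemma avS_mono {S : Finset V} {f g : V → ℝ} (h : ∀ v ∈ S, f v ≤ g v) : avS S f ≤ avS S g := by
  unfold avS; gcongr with v hv; exact h v hv
lemma avS_congr {S : Finset V} {f g : V → ℝ} (h : ∀ v ∈ S, f v = g v) : avS S f = avS S g := by
  unfold avS; rw [sum_congr rfl h]
lemma avS_const (S : Finset V) (c : ℝ) : avS S (fun _ => c) = c * mu S := by
  unfold avS mu; simp; ring
lemma avS_one (S : Finset V) : avS S (fun _ => 1) = mu S := by rw [avS_const, one_mul]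
lemma avS_mul (S : Finset V) (c : ℝ) (f : V → ℝ) : avS S (fun v => c * f v) = c * avS S f := by
  unfold avS; rw [← mul_sum]; ring
lemma avS_add (S : Finset V) (f g : V → ℝ) :
    avS S (fun v => f v + g v) = avS S f + avS S g := by
  unfold avS; rw [sum_add_distrib]; ring
lemma avS_sub (S : Finset V) (f g : V → ℝ) :
    avS S (fun v => f v - g v) = avS S f - avS S g := by
  unfold avS; rw [sum_sub_distrib]; ring
lemma avS_nonneg {S : Finset V} {f : V → ℝ} (h : ∀ v ∈ S, 0 ≤ f v) : 0 ≤ avS S f := by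
  unfold avS; have := sum_nonneg h; positivity
lemma avS_subset {S T : Finset V} {f : V → ℝ} (hst : S ⊆ T) (h : ∀ v ∈ T, 0 ≤ f v) :
    avS S f ≤ avS T f := by
  unfold avS; gcongr
  exact fun v hv _ => h v hv
lemma avS_le_const {S : Finset V} {f : V → ℝ} {c : ℝ} (h : ∀ v ∈ S, f v ≤ c) :
    avS S f ≤ c * mu S := by
  rw [← avS_const]; exact avS_mono h
lemma avS_union {S T : Finset V} (h : Disjoint S T) (f : V → ℝ) :
    avS (S ∪ T) f = avS S f + avS T f := by
  unfold avS; rw [sum_union h]; ring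
lemma avS_split (S T : Finset V) (f : V → ℝ) :
    avS S f = avS (S ∩ T) f + avS (S \ T) f := by
  rw [← avS_union]
  · congr 1; ext x; simp; tauto
  · rw [disjoint_left]; intro x; simp; tauto
lemma avS_filter (S : Finset V) (p : V → Prop) [DecidablePred p] (f : V → ℝ) :
    avS (S.filter p) f = avS S (fun v => if p v then f v else 0) := by
  unfold avS; rw [sum_filter]
lemma avS_comm (S T : Finset V) (f : V → V → ℝ) :
    avS S (fun u => avS T (fun v => f u v)) = avS T (fun v => avS S (fun u => f u v)) := by
  unfold avS; rw [← sum_div, ← sum_div, sum_comm]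
/-- swap for relations -/
lemma avS_rel (S T : Finset V) (r : V → V → Prop) [DecidableRel r] (f : V → V → ℝ) :
    avS S (fun u => avS (T.filter (fun v => r u v)) (f u)) =
    avS T (fun v => avS (S.filter (fun u => r u v)) (fun u => f u v)) := by
  simp_rw [avS_filter]
  exact avS_comm S T _
lemma mu_inter_nb (T : Finset V) (u : V) :
    mu (T ∩ nb A u) = avS (T.filter (fun v => v ∈ nb A u)) (fun _ => 1) := by
  rw [avS_one]; congr 1
lemma e_comm (S T : Finset V) :
    avS S (fun u => mu (T ∩ nb A u)) = avS T (fun u => mu (S ∩ nb A u)) := by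
  simp_rw [mu_inter_nb]
  rw [avS_rel S T (fun u v => v ∈ nb A u) (fun _ _ => 1)]
  apply avS_congr; intro v _; congr 1; ext x; simp [or_comm]
lemma avS_out_inn (S T : Finset V) (g : V → V → ℝ) :
    avS S (fun u => avS (out A u ∩ T) (g u)) = avS T (fun v => avS (inn A v ∩ S) (fun u => g u v)) := by
  have h1 : ∀ u, out A u ∩ T = T.filter (fun v => A u v) := by intro u; ext; simp [and_comm]
  have h2 : ∀ v, inn A v ∩ S = S.filter (fun u => A u v) := by intro u; ext; simp [and_comm]
  simp_rw [h1, h2]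
  exact avS_rel S T (fun u v => A u v) g
lemma avS_nb_nb (S T : Finset V) (g : V → V → ℝ) :
    avS S (fun u => avS (nb A u ∩ T) (g u)) = avS T (fun v => avS (nb A v ∩ S) (fun u => g u v)) := by
  have h1 : ∀ u, nb A u ∩ T = T.filter (fun v => v ∈ nb A u) := by intro u; ext; simp [and_comm]
  have h2 : ∀ v, nb A v ∩ S = S.filter (fun u => v ∈ nb A u) := by
    intro u; ext; simp [and_comm, or_comm]
  simp_rw [h1, h2]
  exact avS_rel S T (fun u v => v ∈ nb A u) g

lemma nb_eq (v : V) : nb A v = out A v ∪ inn A v := by ext; simp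
lemma disj_out_inn (hopp : ∀ u v, A u v → ¬ A v u) (v : V) : Disjoint (out A v) (inn A v) := by
  rw [disjoint_left]; intro x; simp; exact hopp v x
end basics

lemma lam_nonneg (a b : ℕ) : 0 ≤ lam a b := by unfold lam; positivity

lemma lam_pos (a b : ℕ) : 0 < lam a b := by
  have h : ∀ c : ℕ, (0:ℝ) < (c:ℝ)^c := by
    intro c; rcases Nat.eq_zero_or_pos c with h | h
    · subst h; simp
    · have : (0:ℝ) < c := by exact_mod_cast h
      positivity
  unfold lam
  have := h (a+b); push_cast at this
  have := h a; have := h b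
  positivity

lemma amgm (a b : ℕ) {p q : ℝ} (hp : 0 ≤ p) (hq : 0 ≤ q) :
    p ^ a * q ^ b ≤ lam a b * (p + q) ^ (a + b) := by
  unfold lam
  rcases Nat.eq_zero_or_pos a with ha | ha
  · subst ha
    rcases Nat.eq_zero_or_pos b with hb | hb
    · subst hb; simp
    · have hb' : (0:ℝ) < b := by exact_mod_cast hb
      simp
      gcongr; linarith
  rcases Nat.eq_zero_or_pos b with hb | hb
  · subst hb
    have ha' : (0:ℝ) < a := by exact_mod_cast ha
    simp
    gcongr; linarith
  have ha' : (0:ℝ) < a := by exact_mod_cast ha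
  have hb' : (0:ℝ) < b := by exact_mod_cast hb
  have h := Real.geom_mean_le_arith_mean2_weighted (w₁ := a/(a+b)) (w₂ := b/(a+b))
    (p₁ := p * (a+b)/a) (p₂ := q*(a+b)/b) (by positivity) (by positivity) (by positivity)
    (by positivity) (by field_simp)
  have e1 : (a/(a+b) : ℝ) * (p * (a+b)/a) + (b/(a+b)) * (q*(a+b)/b) = p + q := by field_simp
  rw [e1] at h
  have h2 := pow_le_pow_left₀ (by positivity) h (a+b)
  rw [mul_pow, ← Real.rpow_natCast, ← Real.rpow_mul (by positivity), ← Real.rpow_natCast,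
    ← Real.rpow_mul (by positivity)] at h2
  push_cast at h2
  rw [div_mul_cancel₀ _ (by positivity), div_mul_cancel₀ _ (by positivity), Real.rpow_natCast,
    Real.rpow_natCast] at h2
  have e2 : (p * (a+b)/a)^a * (q*(a+b)/b)^b = (p^a*q^b) * ((a+b)^(a+b) / (a^a*b^b) : ℝ) := by
    rw [div_pow, div_pow, mul_pow, mul_pow, pow_add]; field_simp
  rw [e2] at h2
  calc p^a*q^b = ((p^a*q^b) * ((a+b)^(a+b) / (a^a*b^b) : ℝ)) * (a^a*b^b/(a+b)^(a+b)) := by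
        field_simp
    _ ≤ (p+q)^(a+b) * (a^a*b^b/(a+b)^(a+b)) := by gcongr
    _ = _ := by ring

lemma bern_one {u : ℝ} (h0 : 0 ≤ u) (h1 : u ≤ 1) (n : ℕ) : (1 + n * u) * (1 - u) ^ n ≤ 1 := by
  have := one_add_mul_le_pow (a := u) (by linarith) n
  calc (1 + n * u) * (1 - u) ^ n ≤ (1+u)^n * (1-u)^n := by
        gcongr
    _ = (1 - u^2)^n := by rw [← mul_pow]; ring
    _ ≤ 1 := by apply pow_le_one₀ <;> nlinarith

end OStar
end

section
open Finset
open scoped Classical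

set_option linter.unusedSectionVars false
namespace OStar

section stars
variable {V : Type} [Fintype V]

def Indep (A : V → V → Prop) {ι : Type} (f : ι → V) : Prop := ∀ a b, ¬ A (f a) (f b)

noncomputable def D (k l : ℕ) (A : V → V → Prop) (c : V) (B : Finset V) :
    Fin k ⊕ Fin l → Finset V :=
  Sum.elim (fun _ => out A c ∩ B) (fun _ => inn A c ∩ B)

noncomputable def St (k l : ℕ) (A : V → V → Prop) (c : V) (B : Finset V) :
    Finset (Fin k ⊕ Fin l → V) :=
  (Fintype.piFinset (D k l A c B)).filter (fun f => Indep A f)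

noncomputable def dens {ι : Type} [Fintype ι] (S : Finset (ι → V)) : ℝ :=
  (S.card : ℝ) / (Fintype.card V : ℝ) ^ (Fintype.card ι)

noncomputable def J {ι : Type} [Fintype ι] (S : Finset (ι → V)) (a : ι) (v : V) : ℝ :=
  ((S.filter (fun f => f a = v)).card : ℝ) / (Fintype.card V : ℝ) ^ (Fintype.card ι - 1)

variable {ι : Type} [Fintype ι] [DecidableEq ι]

lemma dens_mono {S T : Finset (ι → V)} (h : S ⊆ T) : dens S ≤ dens T := by
  unfold dens; gcongr
lemma dens_nonneg (S : Finset (ι → V)) : 0 ≤ dens S := by unfold dens; positivity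
lemma J_nonneg (S : Finset (ι → V)) (a : ι) (v : V) : 0 ≤ J S a v := by unfold J; positivity
lemma J_mono {S T : Finset (ι → V)} (h : S ⊆ T) (a : ι) (v : V) : J S a v ≤ J T a v := by
  unfold J; gcongr
lemma dens_union_le (S T : Finset (ι → V)) : dens (S ∪ T) ≤ dens S + dens T := by
  unfold dens; rw [← add_div]; gcongr; exact_mod_cast card_union_le S T
lemma dens_biUnion_le {β : Type} (s : Finset β) (S : β → Finset (ι → V)) :
    dens (s.biUnion S) ≤ ∑ b ∈ s, dens (S b) := by
  unfold dens; rw [← sum_div]; gcongr; exact_mod_cast card_biUnion_le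

lemma dens_slot (hn : 1 ≤ Fintype.card V) (S : Finset (ι → V)) (a : ι) (T : Finset V) :
    dens (S.filter (fun f => f a ∈ T)) = avS T (J S a) := by
  unfold dens avS J
  have hn' : (0:ℝ) < Fintype.card V := by exact_mod_cast hn
  have hc : 0 < Fintype.card ι := Fintype.card_pos_iff.mpr ⟨a⟩
  rw [← sum_div, div_div, ← pow_succ, Nat.sub_add_cancel hc]
  congr 1
  rw [card_eq_sum_card_fiberwise (f := fun f => f a) (t := T)]
  · push_cast
    apply sum_congr rfl
    intro v hv
    congr 2
    ext f; simp; intro h1 h2; subst h1; exact hv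
  · intro f hf; simp at hf ⊢; exact hf.2

lemma slot_le (S : Finset (ι → V)) (a : ι) (v : V) (E : ι → Finset V)
    (h : ∀ f ∈ S, f a = v → ∀ b, b ≠ a → f b ∈ E b) :
    J S a v ≤ ∏ b ∈ univ.erase a, mu (E b) := by
  unfold J mu
  rw [prod_div_distrib, prod_const, card_erase_of_mem (mem_univ a), card_univ]
  gcongr
  have hsub : S.filter (fun f => f a = v) ⊆
      Fintype.piFinset (fun b => if b = a then {v} else E b) := by
    intro f hf
    simp only [mem_filter] at hf
    rw [Fintype.mem_piFinset]
    intro b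
    by_cases hb : b = a
    · subst hb; simp [hf.2]
    · simp [hb]; exact h f hf.1 hf.2 b hb
  have := card_le_card hsub
  rw [Fintype.card_piFinset, ← mul_prod_erase univ _ (mem_univ a)] at this
  simp only [if_true, card_singleton, one_mul] at this
  have h2 : ∏ b ∈ univ.erase a, (if b = a then {v} else E b).card
      = ∏ b ∈ univ.erase a, (E b).card := by
    apply prod_congr rfl
    intro b hb; rw [if_neg (ne_of_mem_erase hb)]
  rw [h2] at this
  exact_mod_cast this

lemma slot_zero (S : Finset (ι → V)) (a : ι) (v : V) (h : ∀ f ∈ S, f a ≠ v) : J S a v = 0 := by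
  unfold J
  rw [filter_eq_empty_iff.mpr (fun {f} hf => h f hf)]; simp

lemma piFinset_dens (S : Finset (ι → V)) (E : ι → Finset V) (h : ∀ f ∈ S, ∀ b, f b ∈ E b) :
    dens S ≤ ∏ b, mu (E b) := by
  unfold dens mu
  rw [prod_div_distrib, prod_const, card_univ]
  gcongr
  have hsub : S ⊆ Fintype.piFinset E := by
    intro f hf; rw [Fintype.mem_piFinset]; exact h f hf
  have := card_le_card hsub
  rw [Fintype.card_piFinset] at this
  exact_mod_cast this

variable {k l : ℕ} {A : V → V → Prop}

lemma mem_St {c : V} {B : Finset V} {f : Fin k ⊕ Fin l → V} :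
    f ∈ St k l A c B ↔ (∀ a, A c (f (Sum.inl a)) ∧ f (Sum.inl a) ∈ B) ∧
      (∀ b, A (f (Sum.inr b)) c ∧ f (Sum.inr b) ∈ B) ∧ Indep A f := by
  unfold St D
  simp [Fintype.mem_piFinset]
  tauto

lemma St_mem {c : V} {B : Finset V} {f : Fin k ⊕ Fin l → V} (h : f ∈ St k l A c B)
    (a : Fin k ⊕ Fin l) : f a ∈ nb A c ∩ B := by
  rw [mem_St] at h
  rcases a with a | b
  · have := h.1 a; simp; tauto
  · have := h.2.1 b; simp; tauto

lemma St_indep {c : V} {B : Finset V} {f : Fin k ⊕ Fin l → V} (h : f ∈ St k l A c B)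
    (a b : Fin k ⊕ Fin l) : f a ∉ nb A (f b) := by
  rw [mem_St] at h
  have h1 := h.2.2 a b
  have h2 := h.2.2 b a
  simp; tauto

lemma prod_erase_inl (p q : ℝ) (a : Fin k) :
    ∏ b ∈ univ.erase (Sum.inl a : Fin k ⊕ Fin l), Sum.elim (fun _ => p) (fun _ => q) b
      = p ^ (k - 1) * q ^ l := by
  have : univ.erase (Sum.inl a : Fin k ⊕ Fin l) = (univ.erase a).disjSum univ := by
    ext x; rcases x with x | x <;> simp
  rw [this, prod_disjSum]
  simp

lemma prod_erase_inr (p q : ℝ) (a : Fin l) :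
    ∏ b ∈ univ.erase (Sum.inr a : Fin k ⊕ Fin l), Sum.elim (fun _ => p) (fun _ => q) b
      = p ^ k * q ^ (l - 1) := by
  have : univ.erase (Sum.inr a : Fin k ⊕ Fin l) = univ.disjSum (univ.erase a) := by
    ext x; rcases x with x | x <;> simp
  rw [this, prod_disjSum]
  simp

lemma mu_nb_part (hopp : ∀ u v, A u v → ¬ A v u) (c : V) (T : Finset V) :
    mu (out A c ∩ T) + mu (inn A c ∩ T) = mu (nb A c ∩ T) := by
  rw [← mu_union]
  · congr 1; ext x; simp; tauto
  · exact (disj_out_inn hopp c).mono inter_subset_left inter_subset_left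

/-- B1 -/
lemma dens_St_T (c : V) (B : Finset V) :
    dens (St k l A c B) ≤ mu (out A c ∩ B) ^ k * mu (inn A c ∩ B) ^ l := by
  refine (piFinset_dens _ (D k l A c B) ?_).trans ?_
  · intro f hf; unfold St at hf; rw [mem_filter, Fintype.mem_piFinset] at hf; exact hf.1
  · unfold D; simp

lemma dens_St_le (hopp : ∀ u v, A u v → ¬ A v u) (c : V) (B : Finset V) :
    dens (St k l A c B) ≤ lam k l * mu (nb A c ∩ B) ^ (k + l) := by
  refine (dens_St_T c B).trans ?_
  rw [← mu_nb_part hopp]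
  exact amgm k l (mu_nonneg _) (mu_nonneg _)

/-- B2 -/
lemma J_inl_le (hopp : ∀ u v, A u v → ¬ A v u) (c v : V) (B : Finset V) (a : Fin k) :
    J (St k l A c B) (Sum.inl a) v ≤
      lam (k - 1) l * mu ((nb A c ∩ B) \ nb A v) ^ (k + l - 1) := by
  have h1 := slot_le (St k l A c B) (Sum.inl a) v
    (Sum.elim (fun _ => out A c ∩ (B \ nb A v)) (fun _ => inn A c ∩ (B \ nb A v))) (by
      intro f hf hv b hb
      have := St_indep hf b (Sum.inl a)
      rw [hv] at this
      rw [mem_St] at hf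
      rcases b with b | b
      · have := hf.1 b; simp at *; tauto
      · have := hf.2.1 b; simp at *; tauto)
  have h2 : ∀ b : Fin k ⊕ Fin l, mu (Sum.elim (fun _ => out A c ∩ (B \ nb A v))
      (fun _ => inn A c ∩ (B \ nb A v)) b) =
      Sum.elim (fun _ => mu (out A c ∩ (B \ nb A v))) (fun _ => mu (inn A c ∩ (B \ nb A v))) b := by
    intro b; rcases b with b | b <;> rfl
  simp_rw [h2] at h1
  rw [prod_erase_inl] at h1
  refine h1.trans ((amgm _ _ (mu_nonneg _) (mu_nonneg _)).trans ?_)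
  rw [mu_nb_part hopp, inter_sdiff_assoc]
  have hk : 1 ≤ k := by have := a.2; omega
  rw [show k - 1 + l = k + l - 1 by omega]

lemma J_inr_le (hopp : ∀ u v, A u v → ¬ A v u) (c v : V) (B : Finset V) (a : Fin l) :
    J (St k l A c B) (Sum.inr a) v ≤
      lam k (l - 1) * mu ((nb A c ∩ B) \ nb A v) ^ (k + l - 1) := by
  have h1 := slot_le (St k l A c B) (Sum.inr a) v
    (Sum.elim (fun _ => out A c ∩ (B \ nb A v)) (fun _ => inn A c ∩ (B \ nb A v))) (by
      intro f hf hv b hb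
      have := St_indep hf b (Sum.inr a)
      rw [hv] at this
      rw [mem_St] at hf
      rcases b with b | b
      · have := hf.1 b; simp at *; tauto
      · have := hf.2.1 b; simp at *; tauto)
  have h2 : ∀ b : Fin k ⊕ Fin l, mu (Sum.elim (fun _ => out A c ∩ (B \ nb A v))
      (fun _ => inn A c ∩ (B \ nb A v)) b) =
      Sum.elim (fun _ => mu (out A c ∩ (B \ nb A v))) (fun _ => mu (inn A c ∩ (B \ nb A v))) b := by
    intro b; rcases b with b | b <;> rfl
  simp_rw [h2] at h1
  rw [prod_erase_inr] at h1
  refine h1.trans ((amgm _ _ (mu_nonneg _) (mu_nonneg _)).trans ?_)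
  rw [mu_nb_part hopp, inter_sdiff_assoc]
  have hk : 1 ≤ l := by have := a.2; omega
  rw [show k + (l - 1) = k + l - 1 by omega]

lemma J_inl_zero {c v : V} {B : Finset V} (a : Fin k) (h : v ∉ out A c ∩ B) :
    J (St k l A c B) (Sum.inl a) v = 0 := by
  apply slot_zero
  intro f hf hv; rw [mem_St] at hf; subst hv; have := hf.1 a; simp at h; tauto

lemma J_inr_zero {c v : V} {B : Finset V} (a : Fin l) (h : v ∉ inn A c ∩ B) :
    J (St k l A c B) (Sum.inr a) v = 0 := by
  apply slot_zero
  intro f hf hv; rw [mem_St] at hf; subst hv; have := hf.2.1 a; simp at h; tauto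

/-! transfer -/
noncomputable def leaf (φ : Fin (k + l + 1) → V) : Fin k ⊕ Fin l → V :=
  Sum.elim (fun a => φ ⟨a + 1, by omega⟩) (fun b => φ ⟨k + 1 + b, by omega⟩)

lemma leaf_inj {φ ψ : Fin (k + l + 1) → V} (h0 : φ 0 = ψ 0) (h : leaf φ = leaf ψ) : φ = ψ := by
  funext z
  obtain ⟨z, hz⟩ := z
  rcases Nat.eq_zero_or_pos z with h1 | h1
  · subst h1; exact h0
  · by_cases h2 : z ≤ k
    · have := congrFun h (Sum.inl ⟨z - 1, by omega⟩)
      simp only [leaf, Sum.elim_inl] at this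
      have e : z - 1 + 1 = z := by omega
      simp only [e] at this; exact this
    · have := congrFun h (Sum.inr ⟨z - 1 - k, by omega⟩)
      simp only [leaf, Sum.elim_inr] at this
      have e : k + 1 + (z - 1 - k) = z := by omega
      simp only [e] at this; exact this

lemma leaf_St {φ : Fin (k + l + 1) → V} (h : IsStarEmb k l A φ) :
    leaf φ ∈ St k l A (φ 0) univ := by
  rw [mem_St]
  refine ⟨fun a => ⟨?_, mem_univ _⟩, fun b => ⟨?_, mem_univ _⟩, ?_⟩
  · exact (h.2 0 _).mp (Or.inl ⟨rfl, by simp, by simp⟩)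
  · exact (h.2 _ 0).mp (Or.inr ⟨rfl, by simp⟩)
  · intro a b
    have key : ∀ x y : Fin (k+l+1), x.val ≠ 0 → y.val ≠ 0 → ¬ A (φ x) (φ y) := by
      intro x y hx hy hA
      have := (h.2 x y).mpr hA
      unfold StarArc at this; omega
    rcases a with a | a <;> rcases b with b | b <;> simp only [leaf, Sum.elim_inl, Sum.elim_inr] <;>
      apply key <;> simp

lemma transfer (Q : (Fin (k + l + 1) → V) → Prop) (Q' : V → (Fin k ⊕ Fin l → V) → Prop)
    (h : ∀ φ, IsStarEmb k l A φ → Q φ → Q' (φ 0) (leaf φ)) :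
    Nat.card {φ : Fin (k + l + 1) → V // IsStarEmb k l A φ ∧ Q φ} ≤
      ∑ c, ((St k l A c univ).filter (Q' c)).card := by
  rw [Nat.card_eq_fintype_card, Fintype.card_subtype, ← card_sigma]
  apply card_le_card_of_injOn (fun φ => (⟨φ 0, leaf φ⟩ : (_ : V) × (Fin k ⊕ Fin l → V)))
  · intro φ hφ
    simp at hφ ⊢
    exact ⟨leaf_St hφ.1, h φ hφ.1 hφ.2⟩
  · intro φ _ ψ _ he
    simp only [Sigma.mk.injEq] at he
    exact leaf_inj he.1 (eq_of_heq he.2)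

lemma starProb_le : starProb k l V A ≤ avS univ (fun c => dens (St k l A c univ)) := by
  have h := transfer (k := k) (l := l) (A := A) (fun _ => True) (fun _ _ => True) (by simp)
  simp only [and_true, filter_true] at h
  unfold starProb avS dens
  rw [← sum_div, div_div, Fintype.card_sum, Fintype.card_fin, Fintype.card_fin, ← pow_succ]
  gcongr
  exact_mod_cast h

lemma sCond_zero_le (v : V) : sCond k l A 0 v ≤ dens (St k l A v univ) := by
  have h := transfer (k := k) (l := l) (A := A) (fun φ => φ 0 = v) (fun c _ => c = v)
    (by intro φ _ h; exact h)
  have h2 : ∑ c, ((St k l A c univ).filter (fun _ => c = v)).card = (St k l A v univ).card := by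
    rw [sum_eq_single v]
    · simp
    · intro b _ hb; simp [hb]
    · simp
  unfold sCond dens
  rw [Fintype.card_sum, Fintype.card_fin, Fintype.card_fin]
  gcongr
  rw [h2] at h; exact_mod_cast h

lemma sCond_leaf_le (v : V) (z : Fin (k + l + 1)) (a : Fin k ⊕ Fin l)
    (hz : ∀ φ : Fin (k + l + 1) → V, leaf φ a = φ z) (hn : 1 ≤ Fintype.card V) :
    sCond k l A z v ≤ avS univ (fun c => J (St k l A c univ) a v) := by
  have h := transfer (k := k) (l := l) (A := A) (fun φ => φ z = v) (fun c f => f a = v)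
    (by intro φ _ h; rw [hz]; exact h)
  unfold sCond avS J
  have hc : 0 < Fintype.card (Fin k ⊕ Fin l) := Fintype.card_pos_iff.mpr ⟨a⟩
  rw [← sum_div, div_div, ← pow_succ, Nat.sub_add_cancel hc, Fintype.card_sum, Fintype.card_fin,
    Fintype.card_fin]
  gcongr
  exact_mod_cast h

lemma sVert_le (hk : 1 ≤ k) (hl : 1 ≤ l) (hn : 1 ≤ Fintype.card V) (v : V) :
    ((k:ℝ) + l + 1) * sVert k l A v ≤ dens (St k l A v univ)
      + l * avS univ (fun c => J (St k l A c univ) (Sum.inr ⟨0, hl⟩) v)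
      + k * avS univ (fun c => J (St k l A c univ) (Sum.inl ⟨0, hk⟩) v) := by
  unfold sVert
  rw [mul_div_cancel₀ _ (by positivity)]
  gcongr
  · exact sCond_zero_le v
  · apply sCond_leaf_le _ _ _ _ hn
    intro φ; simp only [leaf, Sum.elim_inr]; congr 1
    ext; simp [Fin.val_natCast]
    rw [Nat.mod_eq_of_lt (by omega)]
  · apply sCond_leaf_le _ _ _ _ hn
    intro φ; simp only [leaf, Sum.elim_inl]; congr 1
    ext; simp
    rw [Nat.mod_eq_of_lt (by omega)]
end stars
end OStar
end

section
open Finset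
open scoped Classical

set_option linter.unusedSectionVars false
namespace OStar

noncomputable def Lam (m : ℕ) : ℝ := (m : ℝ) ^ m / ((m : ℝ) - 1) ^ (m - 1)

lemma Lam_nonneg {m : ℕ} (hm : 1 ≤ m) : 0 ≤ Lam m := by
  unfold Lam
  have : (0:ℝ) ≤ (m:ℝ) - 1 := by
    have : (1:ℝ) ≤ m := by exact_mod_cast hm
    linarith
  positivity

lemma lam_comm (a b : ℕ) : lam a b = lam b a := by
  unfold lam; rw [add_comm a b, add_comm (a:ℝ) b, mul_comm ((a:ℝ)^a)]

lemma k_lam_le {k l : ℕ} (hk : 1 ≤ k) (hm : 2 ≤ k + l) :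
    (k:ℝ) * lam (k - 1) l ≤ lam k l * Lam (k + l) := by
  unfold lam Lam
  rw [Nat.cast_sub hk, show k - 1 + l = k + l - 1 by omega]
  push_cast
  have h2 : (2:ℝ) ≤ k + l := by exact_mod_cast hm
  have hk' : (1:ℝ) ≤ k := by exact_mod_cast hk
  rw [show (k:ℝ) - 1 + l = k + l - 1 by ring]
  have h3 : (0:ℝ) < (k:ℝ) + l - 1 := by linarith
  have h4 : (0:ℝ) < (k:ℝ) + l := by linarith
  have e : (k:ℝ) ^ k * (l:ℝ) ^ l / ((k:ℝ) + l) ^ (k + l) * (((k:ℝ) + l) ^ (k + l) / ((k:ℝ) + l - 1) ^ (k + l - 1))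
     = (k:ℝ) ^ k * (l:ℝ) ^ l / ((k:ℝ) + l - 1) ^ (k + l - 1) := by field_simp
  rw [e, ← mul_div_assoc]
  gcongr ?_ / _
  rw [← mul_assoc]
  gcongr ?_ * _
  obtain ⟨j, rfl⟩ : ∃ j, k = j + 1 := ⟨k - 1, by omega⟩
  rw [pow_succ']
  gcongr
  push_cast; simp
  gcongr; linarith

lemma l_lam_le {k l : ℕ} (hl : 1 ≤ l) (hm : 2 ≤ k + l) :
    (l:ℝ) * lam k (l - 1) ≤ lam k l * Lam (k + l) := by
  rw [lam_comm k (l-1), lam_comm k l, add_comm k l]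
  exact k_lam_le hl (by omega)

section
variable {V : Type} [Fintype V] {k l : ℕ} {A : V → V → Prop}

lemma J2_le (hopp : ∀ u v, A u v → ¬ A v u) (hk : 1 ≤ k) (hl : 1 ≤ l) (c v : V) (B : Finset V)
    (a : Fin k) (b : Fin l) :
    (l:ℝ) * J (St k l A c B) (Sum.inr b) v + k * J (St k l A c B) (Sum.inl a) v ≤
      if v ∈ nb A c ∩ B then
        lam k l * Lam (k + l) * mu ((nb A c ∩ B) \ nb A v) ^ (k + l - 1) else 0 := by
  by_cases h1 : v ∈ out A c ∩ B
  · have h2 : v ∉ inn A c ∩ B := by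
      simp at h1 ⊢; intro h; exact absurd h (hopp _ _ h1.1)
    rw [J_inr_zero b h2, if_pos (by simp at h1 ⊢; tauto), mul_zero, zero_add]
    calc (k:ℝ) * J (St k l A c B) (Sum.inl a) v
        ≤ k * (lam (k - 1) l * mu ((nb A c ∩ B) \ nb A v) ^ (k + l - 1)) := by
          gcongr; exact J_inl_le hopp c v B a
      _ = (k * lam (k - 1) l) * mu ((nb A c ∩ B) \ nb A v) ^ (k + l - 1) := by ring
      _ ≤ _ := by
        have := mu_nonneg ((nb A c ∩ B) \ nb A v)
        exact mul_le_mul_of_nonneg_right (k_lam_le hk (by omega)) (by positivity)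
  · rw [J_inl_zero a h1, mul_zero, add_zero]
    by_cases h2 : v ∈ inn A c ∩ B
    · rw [if_pos (by simp at h2 ⊢; tauto)]
      calc (l:ℝ) * J (St k l A c B) (Sum.inr b) v
          ≤ l * (lam k (l - 1) * mu ((nb A c ∩ B) \ nb A v) ^ (k + l - 1)) := by
            gcongr; exact J_inr_le hopp c v B b
        _ = (l * lam k (l - 1)) * mu ((nb A c ∩ B) \ nb A v) ^ (k + l - 1) := by ring
        _ ≤ _ := by
          have := mu_nonneg ((nb A c ∩ B) \ nb A v)
          exact mul_le_mul_of_nonneg_right (l_lam_le hl (by omega)) (by positivity)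
    · rw [J_inr_zero b h2, mul_zero]
      split_ifs with h
      · simp at h h1 h2; tauto
      · exact le_rfl

/-- LF -/
lemma leaf_bound (hopp : ∀ u v, A u v → ¬ A v u) (hk : 1 ≤ k) (hl : 1 ≤ l) (v : V)
    (a : Fin k) (b : Fin l) :
    (l:ℝ) * avS univ (fun c => J (St k l A c univ) (Sum.inr b) v)
      + k * avS univ (fun c => J (St k l A c univ) (Sum.inl a) v) ≤
    lam k l * Lam (k + l) * avS (nb A v) (fun c => mu (nb A c \ nb A v) ^ (k + l - 1)) := by
  rw [← avS_mul, ← avS_mul, ← avS_add, ← avS_mul]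
  have : nb A v = univ.filter (fun c => v ∈ nb A c) := by ext; simp [or_comm]
  rw [this, avS_filter, ← this]
  apply avS_mono
  intro c _
  have := J2_le hopp hk hl c v univ a b
  simpa using this

/-- LS -/
lemma bad_bound (hopp : ∀ u v, A u v → ¬ A v u) (hn : 1 ≤ Fintype.card V) (hk : 1 ≤ k) (hl : 1 ≤ l)
    (c : V) (B Bad : Finset V) :
    dens ((St k l A c B).filter (fun f => ∃ a, f a ∈ Bad)) ≤
     lam k l * Lam (k + l) * avS (Bad.filter (fun v => v ∈ nb A c ∩ B))
      (fun v => mu ((nb A c ∩ B) \ nb A v) ^ (k + l - 1)) := by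
  have h1 : (St k l A c B).filter (fun f => ∃ a, f a ∈ Bad) =
      univ.biUnion (fun a => (St k l A c B).filter (fun f => f a ∈ Bad)) := by
    ext f; simp
  rw [h1]
  refine (dens_biUnion_le _ _).trans ?_
  simp_rw [dens_slot hn]
  rw [← avS_mul, avS_filter]
  unfold avS
  rw [← sum_div, sum_comm]
  gcongr with v hv
  have ha : ∀ a : Fin k, J (St k l A c B) (Sum.inl a) v = J (St k l A c B) (Sum.inl a) v := fun _ => rfl
  have key := fun a b => J2_le (k := k) (l := l) hopp hk hl c v B a b
  rw [Fintype.sum_sum_type]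
  obtain ⟨a, ha⟩ : ∃ a : Fin k, ∀ a', J (St k l A c B) (Sum.inl a') v ≤ J (St k l A c B) (Sum.inl a) v := by
    have : Nonempty (Fin k) := ⟨⟨0, hk⟩⟩
    exact Finite.exists_max _
  obtain ⟨b, hb⟩ : ∃ a : Fin l, ∀ a', J (St k l A c B) (Sum.inr a') v ≤ J (St k l A c B) (Sum.inr a) v := by
    have : Nonempty (Fin l) := ⟨⟨0, hl⟩⟩
    exact Finite.exists_max _
  refine le_trans ?_ (key a b)
  rw [add_comm]
  gcongr
  · refine (sum_le_card_nsmul univ _ _ (fun x _ => hb x)).trans ?_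
    simp
  · refine (sum_le_card_nsmul univ _ _ (fun x _ => ha x)).trans ?_
    simp

/-- LO -/
lemma out_bound (hopp : ∀ u v, A u v → ¬ A v u) (hn : 1 ≤ Fintype.card V) (hk : 1 ≤ k)
    (D' B : Finset V) :
    avS D' (fun c => dens (St k l A c B)) ≤
      avS B (fun v => mu (inn A v ∩ D') * (lam (k - 1) l * mu (B \ nb A v) ^ (k + l - 1))) := by
  have h1 : ∀ c, dens (St k l A c B) ≤ avS (out A c ∩ B) (fun v =>
      lam (k - 1) l * mu (B \ nb A v) ^ (k + l - 1)) := by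
    intro c
    have : St k l A c B = (St k l A c B).filter (fun f => f (Sum.inl ⟨0, hk⟩) ∈ out A c ∩ B) := by
      ext f; simp only [mem_filter]
      constructor
      · intro h; refine ⟨h, ?_⟩; rw [mem_St] at h; have := h.1 ⟨0, hk⟩; simp; tauto
      · exact fun h => h.1
    rw [this, dens_slot hn]
    apply avS_mono
    intro v _
    refine (J_inl_le hopp c v B _).trans ?_
    have := lam_nonneg (k-1) l
    have := mu_nonneg ((nb A c ∩ B) \ nb A v)
    gcongr
    apply mu_mono; intro x; simp; tauto
  refine (avS_mono (fun c _ => h1 c)).trans ?_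
  rw [avS_out_inn D' B (fun _ v => lam (k - 1) l * mu (B \ nb A v) ^ (k + l - 1))]
  apply avS_mono
  intro v _
  rw [avS_const, mul_comm]

noncomputable def nn (A : V → V → Prop) (P Q : Finset V) : ℝ := avS P (fun u => mu (Q \ nb A u))

lemma pair_le {ι : Type} [Fintype ι] [DecidableEq ι] (hn : 1 ≤ Fintype.card V) (E : ι → Finset V)
    (a b : ι) (hab : a ≠ b) :
    dens ((Fintype.piFinset E).filter (fun f => Indep A f)) * (mu (E a) * mu (E b)) ≤
      nn A (E a) (E b) * ∏ c, mu (E c) := by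
  set S := (Fintype.piFinset E).filter (fun f => Indep A f) with hS
  have h0 : S = S.filter (fun f => f a ∈ E a) := by
    ext f; simp only [mem_filter]
    constructor
    · intro h; refine ⟨h, ?_⟩
      rw [hS, mem_filter, Fintype.mem_piFinset] at h; exact h.1 a
    · exact fun h => h.1
  have hb : b ∈ univ.erase a := by simp [hab.symm]
  have h1 : dens S ≤ nn A (E a) (E b) * ∏ c ∈ (univ.erase a).erase b, mu (E c) := by
    rw [h0, dens_slot hn]
    unfold nn
    rw [mul_comm, ← avS_mul]
    apply avS_mono
    intro u hu
    have := slot_le S a u (fun c => if c = b then E b \ nb A u else E c) (by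
      intro f hf hu c hc
      rw [hS, mem_filter, Fintype.mem_piFinset] at hf
      by_cases hcb : c = b
      · subst hcb
        have h1 := hf.1 c
        have h2 := hf.2 a c
        have h3 := hf.2 c a
        rw [hu] at h2 h3
        simp; tauto
      · simp [hcb]; exact hf.1 c)
    refine this.trans ?_
    rw [← mul_prod_erase _ _ hb, mul_comm]
    simp only [if_true]
    apply le_of_eq
    congr 1
    apply prod_congr rfl
    intro c hc; rw [if_neg (ne_of_mem_erase hc)]
  calc _ ≤ (nn A (E a) (E b) * ∏ c ∈ (univ.erase a).erase b, mu (E c)) * (mu (E a) * mu (E b)) := by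
        have := mu_nonneg (E a); have := mu_nonneg (E b)
        gcongr
    _ = _ := by
        rw [← mul_prod_erase univ _ (mem_univ a), ← mul_prod_erase _ _ hb]; ring

lemma pair_St (hn : 1 ≤ Fintype.card V) (c : V) (B : Finset V) (a b : Fin k ⊕ Fin l) (hab : a ≠ b) :
    dens (St k l A c B) * (mu (D k l A c B a) * mu (D k l A c B b)) ≤
      nn A (D k l A c B a) (D k l A c B b) * (mu (out A c ∩ B) ^ k * mu (inn A c ∩ B) ^ l) := by
  have := pair_le (A := A) hn (D k l A c B) a b hab
  have e : ∏ x, mu (D k l A c B x) = mu (out A c ∩ B) ^ k * mu (inn A c ∩ B) ^ l := by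
    unfold D; simp
  rw [e] at this
  exact this

lemma nn_union_left {P Q : Finset V} (h : Disjoint P Q) (R : Finset V) :
    nn A (P ∪ Q) R = nn A P R + nn A Q R := by unfold nn; exact avS_union h _
lemma nn_union_right {P Q : Finset V} (h : Disjoint P Q) (R : Finset V) :
    nn A R (P ∪ Q) = nn A R P + nn A R Q := by
  unfold nn; rw [← avS_add]; apply avS_congr; intro u _
  rw [union_sdiff_distrib, mu_union (h.mono sdiff_subset sdiff_subset)]

lemma nn_eq (P Q : Finset V) :
    nn A P Q = mu P * mu Q - avS P (fun u => mu (Q ∩ nb A u)) := by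
  unfold nn
  rw [mul_comm, ← avS_const, ← avS_sub]
  apply avS_congr; intro u _
  rw [mu_split Q (nb A u)]; ring

lemma nn_le (P Q : Finset V) : nn A P Q ≤ mu P * mu Q := by
  rw [nn_eq]; have := avS_nonneg (S := P) (f := fun u => mu (Q ∩ nb A u)) (fun _ _ => mu_nonneg _)
  linarith

/-- pair lemma for l ≥ 2 -/
lemma pair2 (hopp : ∀ u v, A u v → ¬ A v u) (hn : 1 ≤ Fintype.card V) (hk : 2 ≤ k) (hl : 2 ≤ l)
    (c : V) (B : Finset V) :
    dens (St k l A c B) * mu (nb A c ∩ B) ^ 2 ≤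
      nn A (nb A c ∩ B) (nb A c ∩ B) * (mu (out A c ∩ B) ^ k * mu (inn A c ∩ B) ^ l) := by
  have h1 := pair_St (k := k) (l := l) (A := A) hn c B (Sum.inl ⟨0, by omega⟩) (Sum.inl ⟨1, by omega⟩) (by simp)
  have h2 := pair_St (k := k) (l := l) (A := A) hn c B (Sum.inl ⟨0, by omega⟩) (Sum.inr ⟨0, by omega⟩) (by simp)
  have h3 := pair_St (k := k) (l := l) (A := A) hn c B (Sum.inr ⟨0, by omega⟩) (Sum.inl ⟨0, by omega⟩) (by simp)
  have h4 := pair_St (k := k) (l := l) (A := A) hn c B (Sum.inr ⟨0, by omega⟩) (Sum.inr ⟨1, by omega⟩) (by simp)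
  simp only [D, Sum.elim_inl, Sum.elim_inr] at h1 h2 h3 h4
  have e : nb A c ∩ B = (out A c ∩ B) ∪ (inn A c ∩ B) := by ext; simp; tauto
  have hd : Disjoint (out A c ∩ B) (inn A c ∩ B) :=
    (disj_out_inn hopp c).mono inter_subset_left inter_subset_left
  rw [e, nn_union_left hd, nn_union_right hd, nn_union_right hd, mu_union hd]
  linarith

/-- pair lemma for l ≥ 1 -/
lemma pair1 (hopp : ∀ u v, A u v → ¬ A v u) (hn : 1 ≤ Fintype.card V) (hk : 2 ≤ k) (hl : 1 ≤ l)
    (c : V) (B : Finset V) :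
    dens (St k l A c B) * (mu (out A c ∩ B) ^ 2 + 2 * (mu (out A c ∩ B) * mu (inn A c ∩ B))) ≤
      (nn A (out A c ∩ B) (nb A c ∩ B) + nn A (inn A c ∩ B) (out A c ∩ B))
        * (mu (out A c ∩ B) ^ k * mu (inn A c ∩ B) ^ l) := by
  have h1 := pair_St (k := k) (l := l) (A := A) hn c B (Sum.inl ⟨0, by omega⟩) (Sum.inl ⟨1, by omega⟩) (by simp)
  have h2 := pair_St (k := k) (l := l) (A := A) hn c B (Sum.inl ⟨0, by omega⟩) (Sum.inr ⟨0, by omega⟩) (by simp)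
  have h3 := pair_St (k := k) (l := l) (A := A) hn c B (Sum.inr ⟨0, by omega⟩) (Sum.inl ⟨0, by omega⟩) (by simp)
  simp only [D, Sum.elim_inl, Sum.elim_inr] at h1 h2 h3
  have e : nb A c ∩ B = (out A c ∩ B) ∪ (inn A c ∩ B) := by ext; simp; tauto
  have hd : Disjoint (out A c ∩ B) (inn A c ∩ B) :=
    (disj_out_inn hopp c).mono inter_subset_left inter_subset_left
  rw [e, nn_union_right hd]
  linarith

/-- two-slot bound for mixed stars -/
lemma mix_slot {ι : Type} [Fintype ι] [DecidableEq ι] (hn : 1 ≤ Fintype.card V)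
    (S : Finset (ι → V)) (hS : ∀ f ∈ S, ∀ a b, f a ∉ nb A (f b)) (X Y : Finset V) (κ : ℝ)
    (hX : ∀ x ∈ X, mu (univ \ nb A x) ≤ κ) (a b : ι) (hab : a ≠ b) :
    dens (S.filter (fun f => f a ∈ X ∧ f b ∈ Y)) ≤
      κ ^ (Fintype.card ι - 2) * avS X (fun x => mu (Y \ nb A x)) := by
  have e : S.filter (fun f => f a ∈ X ∧ f b ∈ Y) =
    (S.filter (fun f => f b ∈ Y)).filter (fun f => f a ∈ X) := by
    ext f; simp; tauto
  rw [e, dens_slot hn, ← avS_mul]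
  apply avS_mono
  intro x hx
  refine (slot_le _ a x (fun c => if c = b then Y \ nb A x else univ \ nb A x) ?_).trans ?_
  · intro f hf hfx c hc
    rw [mem_filter] at hf
    have := hS f hf.1 c a
    rw [hfx] at this
    by_cases hcb : c = b
    · subst hcb; simp only [if_true, mem_sdiff]; exact ⟨hf.2, this⟩
    · simp only [hcb, if_false, mem_sdiff]; exact ⟨mem_univ _, this⟩
  · have hb : b ∈ univ.erase a := by simp [hab.symm]
    rw [← mul_prod_erase _ _ hb, mul_comm]
    simp only [if_true]
    have h0 := mu_nonneg (univ \ nb A x)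
    gcongr
    · exact mu_nonneg _
    · calc ∏ c ∈ (univ.erase a).erase b, mu (if c = b then Y \ nb A x else univ \ nb A x)
          ≤ ∏ c ∈ (univ.erase a).erase b, κ := by
            apply prod_le_prod
            · intro c _; exact mu_nonneg _
            · intro c hc; rw [if_neg (ne_of_mem_erase hc)]; exact hX x hx
        _ = _ := by
          rw [prod_const, card_erase_of_mem hb, card_erase_of_mem (mem_univ a), card_univ]; rfl

lemma mix_bound {ι : Type} [Fintype ι] [DecidableEq ι] (hn : 1 ≤ Fintype.card V)
    (S : Finset (ι → V)) (hS : ∀ f ∈ S, ∀ a b, f a ∉ nb A (f b)) (X Y : Finset V) (κ : ℝ)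
    (hX : ∀ x ∈ X, mu (univ \ nb A x) ≤ κ) (hXY : X ∪ Y = univ) (o : ι) :
    dens (S.filter (fun f => (∃ a, f a ∈ X) ∧ (∃ b, f b ∈ Y))) ≤
      2 * (Fintype.card ι - 1 : ℕ) * κ ^ (Fintype.card ι - 2) * avS X (fun x => mu (Y \ nb A x))
      + dens (S.filter (fun f => f o ∈ X ∧ f o ∈ Y)) := by
  set T := κ ^ (Fintype.card ι - 2) * avS X (fun x => mu (Y \ nb A x)) with hT
  have hsub : S.filter (fun f => (∃ a, f a ∈ X) ∧ (∃ b, f b ∈ Y)) ⊆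
     ((univ.erase o).biUnion (fun b => S.filter (fun f => f o ∈ X ∧ f b ∈ Y))
     ∪ (univ.erase o).biUnion (fun a => S.filter (fun f => f a ∈ X ∧ f o ∈ Y)))
     ∪ S.filter (fun f => f o ∈ X ∧ f o ∈ Y) := by
    intro f hf
    simp only [mem_filter] at hf
    obtain ⟨hfS, ⟨a, ha⟩, ⟨b, hb⟩⟩ := hf
    have ho : f o ∈ X ∨ f o ∈ Y := by
      have := mem_univ (f o); rw [← hXY, mem_union] at this; exact this
    simp only [mem_union, mem_biUnion, mem_filter, mem_erase, mem_univ, and_true]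
    rcases ho with ho | ho
    · by_cases hbo : b = o
      · subst hbo; right; exact ⟨hfS, ho, hb⟩
      · left; left; exact ⟨b, hbo, hfS, ho, hb⟩
    · by_cases hao : a = o
      · subst hao; right; exact ⟨hfS, ha, ho⟩
      · left; right; exact ⟨a, hao, hfS, ha, ho⟩
  refine (dens_mono hsub).trans ((dens_union_le _ _).trans ?_)
  gcongr
  refine (dens_union_le _ _).trans ?_
  have h1 := (dens_biUnion_le (univ.erase o) (fun b => S.filter (fun f => f o ∈ X ∧ f b ∈ Y))).trans
    (sum_le_card_nsmul _ _ T (fun b hb => mix_slot hn S hS X Y κ hX o b (ne_of_mem_erase hb).symm))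
  have h2 := (dens_biUnion_le (univ.erase o) (fun a => S.filter (fun f => f a ∈ X ∧ f o ∈ Y))).trans
    (sum_le_card_nsmul _ _ T (fun a ha => mix_slot hn S hS X Y κ hX a o (ne_of_mem_erase ha)))
  rw [card_erase_of_mem (mem_univ o), card_univ, nsmul_eq_mul] at h1 h2
  calc _ ≤ _ := add_le_add h1 h2
    _ = _ := by rw [hT]; ring
end
end OStar
end

section
open Finset

namespace OStar

noncomputable def c0 (m : ℕ) : ℝ := ((m:ℝ) / (m + 1)) ^ m

lemma e_hi : Real.exp 1 < 2.7183 := by have := Real.exp_one_lt_d9; linarith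
lemma e_lo : 2.7182 < Real.exp 1 := by have := Real.exp_one_gt_d9; linarith
lemma einv_lo : 0.3678 < (Real.exp 1)⁻¹ := by
  rw [lt_inv_comm₀ (by norm_num) (Real.exp_pos 1)]
  have := e_hi; linarith
lemma einv_hi : (Real.exp 1)⁻¹ < 0.3679 := by
  rw [inv_lt_comm₀ (Real.exp_pos 1) (by norm_num)]
  have := e_lo; linarith

lemma one_add_pow_le {n : ℕ} {x y : ℝ} (h0 : 0 ≤ 1 + x) (h : n * x ≤ y) :
    (1 + x) ^ n ≤ Real.exp y := by
  calc (1 + x) ^ n ≤ (Real.exp x) ^ n := by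
        gcongr; have := Real.add_one_le_exp x; linarith
    _ = Real.exp (n * x) := by rw [← Real.exp_nat_mul]
    _ ≤ _ := Real.exp_le_exp.mpr h

lemma c0_ge {m : ℕ} (hm : 1 ≤ m) : 0.3678 ≤ c0 m := by
  have hm' : (1:ℝ) ≤ m := by exact_mod_cast hm
  have h := one_add_pow_le (n := m) (x := 1 / m) (y := 1) (by positivity)
    (by apply le_of_eq; field_simp)
  have e : c0 m = ((1 + 1 / (m:ℝ)) ^ m)⁻¹ := by
    unfold c0; rw [← inv_pow]; congr 1; field_simp
  rw [e]
  have : (Real.exp 1)⁻¹ ≤ ((1 + 1 / (m:ℝ)) ^ m)⁻¹ := by gcongr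
  linarith [einv_lo]

lemma c0_pos (m : ℕ) (hm : 1 ≤ m) : 0 < c0 m := by linarith [c0_ge hm]
lemma c0_le_one (m : ℕ) : c0 m ≤ 1 := by
  unfold c0; apply pow_le_one₀ (by positivity)
  rw [div_le_one (by positivity)]; linarith

lemma Lam_le {m : ℕ} (hm : 2 ≤ m) : Lam m ≤ 2.7183 * m := by
  have hm' : (2:ℝ) ≤ m := by exact_mod_cast hm
  obtain ⟨j, rfl⟩ : ∃ j, m = j + 1 := ⟨m - 1, by omega⟩
  have hj : (1:ℝ) ≤ j := by push_cast at hm'; linarith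
  have h := one_add_pow_le (n := j) (x := 1 / j) (y := 1) (by positivity)
    (by apply le_of_eq; field_simp)
  have e : Lam (j+1) = (j + 1) * (1 + 1 / (j:ℝ)) ^ j := by
    unfold Lam
    rw [Nat.add_sub_cancel]
    push_cast
    rw [show (j:ℝ) + 1 - 1 = j by ring,
      show 1 + 1/(j:ℝ) = (j+1)/j by field_simp, div_pow, pow_succ]
    field_simp
  rw [e]; push_cast
  have := e_hi
  nlinarith

lemma lam_one_Lam {k : ℕ} (hk : 1 ≤ k) : lam k 1 * Lam (k + 1) = 1 := by
  have : (1:ℝ) ≤ k := by exact_mod_cast hk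
  unfold lam Lam; push_cast
  rw [show (k:ℝ) + 1 - 1 = k by ring]
  have h1 : (k:ℝ) + 1 ≠ 0 := by positivity
  simp
  field_simp
  exact h1

lemma lam1_ge {k : ℕ} (hk : 1 ≤ k) : 0.3678 / (k + 1) ≤ lam k 1 := by
  have h1 := lam_one_Lam hk
  have h2 := Lam_le (m := k + 1) (by omega)
  have h3 := lam_pos k 1
  push_cast at h2
  rw [div_le_iff₀ (by positivity)]
  nlinarith

lemma lam1_le {k : ℕ} (hk : 1 ≤ k) : lam k 1 ≤ 0.3679 / k := by
  have hk' : (1:ℝ) ≤ k := by exact_mod_cast hk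
  have e : lam k 1 = (1 / k) * (1 + (- (1 / ((k:ℝ) + 1)))) ^ (k + 1) := by
    unfold lam
    rw [show 1 + (- (1 / ((k:ℝ) + 1))) = k / (k + 1) by field_simp; ring, div_pow]
    simp; rw [pow_succ (k:ℝ)]; field_simp
  have h := one_add_pow_le (n := k+1) (x := -(1 / (k+1))) (y := -1) (by
    have : 1 / ((k:ℝ)+1) ≤ 1 := by rw [div_le_one (by positivity)]; linarith
    linarith)
    (by apply le_of_eq; push_cast; field_simp)
  rw [Real.exp_neg] at h
  rw [e]
  calc _ ≤ 1 / (k:ℝ) * 0.3679 := by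
        gcongr; linarith [einv_hi]
    _ = _ := by ring

/-- `(m + a) x^m` decreasing -/
lemma geo (a x : ℝ) (m0 : ℕ) (ha : 0 ≤ a) (hx : 0 ≤ x) (h : x * (m0 + a + 1) ≤ m0 + a)  :
    ∀ m : ℕ, m0 ≤ m → ((m:ℝ) + a) * x ^ m ≤ (m0 + a) * x ^ m0 := by
  intro m hm
  induction m, hm using Nat.le_induction with
  | base => exact le_rfl
  | succ j hj ih =>
    refine le_trans ?_ ih
    push_cast
    rw [pow_succ]
    have hj' : (m0:ℝ) ≤ j := by exact_mod_cast hj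
    have h2 : x * (j + a + 1) ≤ j + a := by nlinarith
    have := pow_nonneg hx j
    nlinarith

lemma pow_inv_le (m : ℕ) (hm : 6 ≤ m) (j : ℕ) (n : ℕ) (hn : n ≤ j) :
    (1 / (m:ℝ)) ^ j ≤ (1 / 6) ^ n := by
  have hm' : (6:ℝ) ≤ m := by exact_mod_cast hm
  have h1 : 1 / (m:ℝ) ≤ 1 / 6 := by gcongr
  calc (1 / (m:ℝ)) ^ j ≤ (1/6) ^ j := by gcongr
    _ ≤ _ := pow_le_pow_of_le_one (by norm_num) (by norm_num) hn

/-- N1 -/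
lemma N1 {m : ℕ} (hm : 6 ≤ m) : Lam m * (1 / (m:ℝ)) ^ (m - 1) ≤ 0.0021 := by
  have hm' : (6:ℝ) ≤ m := by exact_mod_cast hm
  have h2 := Lam_le (m := m) (by omega)
  have h3 := pow_inv_le m hm (m - 2) 4 (by omega)
  have e : (1 / (m:ℝ)) ^ (m - 1) = (1 / (m:ℝ)) ^ (m - 2) * (1 / m) := by
    rw [← pow_succ]; congr 1; omega
  rw [e]
  calc Lam m * ((1 / (m:ℝ)) ^ (m - 2) * (1 / m)) ≤ (2.7183 * m) * ((1/6)^4 * (1/m)) := by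
        gcongr
    _ = 2.7183 / 1296 := by field_simp; norm_num
    _ ≤ _ := by norm_num

lemma N0a {m : ℕ} (hm : 6 ≤ m) : (1 - 2 / (m:ℝ)) ^ m + Lam m * (1/4 * (1/2)^(m-2)) < c0 m := by
  rcases Nat.eq_or_lt_of_le hm with h | h
  · subst h; unfold Lam c0; norm_num
  · have hm' : (7:ℝ) ≤ m := by exact_mod_cast h
    have h1 := one_add_pow_le (n := m) (x := -(2 / m)) (y := -2) (by
      have : 2 / (m:ℝ) ≤ 1 := by rw [div_le_one (by positivity)]; linarith
      linarith) (by apply le_of_eq; field_simp)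
    rw [show (-2:ℝ) = -1 + -1 by norm_num, Real.exp_add, Real.exp_neg] at h1
    have h2 := Lam_le (m := m) (by omega)
    have h3 := geo 0 (1/2) 7 le_rfl (by norm_num) (by norm_num) m h
    have e : 1/4 * (1/2:ℝ)^(m-2) = (1/2)^m := by
      rw [show m = (m - 2) + 2 by omega, pow_add]; norm_num; ring
    rw [e]
    have h4 : Lam m * (1/2)^m ≤ 2.7183 * (m * (1/2)^m) := by rw [← mul_assoc]; gcongr
    have h5 := c0_ge (m := m) (by omega)
    have h6 := einv_hi
    have h7 : (0:ℝ) < (Real.exp 1)⁻¹ := by positivity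
    norm_num at h3
    rw [← sub_eq_add_neg] at h1
    have h8 : (Real.exp 1)⁻¹ * (Real.exp 1)⁻¹ ≤ 0.3679*0.3679 := by gcongr
    linarith

lemma N0b {m : ℕ} (hm : 6 ≤ m) :
    (1 - 1 / (m:ℝ)) ^ m + Lam m * (((1 - 2/m) * (2/m)) * (2/m)^(m-2)) < c0 m := by
  rcases Nat.eq_or_lt_of_le hm with h | h
  · subst h; unfold Lam c0; norm_num
  · have hm' : (7:ℝ) ≤ m := by exact_mod_cast h
    have hb : (0:ℝ) < 1 - 1 / (m:ℝ) := by
      rw [sub_pos, div_lt_one (by positivity)]; linarith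
    -- c0 ≥ (1-1/m)^m (1+1/m)
    have h1 : (1 - 1 / (m:ℝ)) ^ m * (1 + 1/m) ≤ c0 m := by
      have e : c0 m = (1 - 1 / (m:ℝ)) ^ m * (1 + 1 / ((m:ℝ)^2 - 1)) ^ m := by
        unfold c0
        rw [← mul_pow]
        congr 1
        have : (m:ℝ)^2 - 1 ≠ 0 := by nlinarith
        have : (m:ℝ) + 1 ≠ 0 := by positivity
        field_simp
        ring
      rw [e]
      gcongr
      have hp : (0:ℝ) < (m:ℝ)^2 - 1 := by nlinarith
      have := one_add_mul_le_pow (a := 1 / ((m:ℝ)^2-1)) (by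
        have : (0:ℝ) ≤ 1 / ((m:ℝ)^2-1) := by positivity
        linarith) m
      refine le_trans ?_ this
      rw [add_le_add_iff_left, mul_one_div, div_le_div_iff₀ (by positivity) hp]
      nlinarith
    have h2 : 0.3152 ≤ (1 - 1 / (m:ℝ)) ^ m := by
      have h := one_add_pow_le (n := m - 1) (x := 1 / ((m:ℝ) - 1)) (y := 1) (by
        have : (0:ℝ) ≤ 1 / ((m:ℝ)-1) := by
          have : (0:ℝ) < (m:ℝ) - 1 := by linarith
          positivity
        linarith) (by
          rw [Nat.cast_sub (by omega)]; push_cast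
          have : (m:ℝ) - 1 ≠ 0 := by intro h; linarith
          apply le_of_eq; field_simp)
      have e : (1 - 1 / (m:ℝ)) ^ m = (1 - 1 / (m:ℝ)) * ((1 + 1 / ((m:ℝ) - 1))^(m-1))⁻¹ := by
        rw [← inv_pow]
        have : (m:ℝ) - 1 ≠ 0 := by intro h; linarith
        rw [show (1 + 1 / ((m:ℝ) - 1))⁻¹ = 1 - 1/(m:ℝ) by
          have : (m:ℝ) ≠ 0 := by positivity
          rw [show 1 + 1 / ((m:ℝ) - 1) = m / (m - 1) by field_simp; ring, inv_div, sub_div, div_self this], ← pow_succ']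
        congr 1; omega
      rw [e]
      have h3 : (Real.exp 1)⁻¹ ≤ ((1 + 1 / ((m:ℝ) - 1))^(m-1))⁻¹ := by
        have : (0:ℝ) < (m:ℝ) - 1 := by linarith
        gcongr
      have h4 : 1 / (m:ℝ) ≤ 1/7 := by gcongr
      have := einv_lo
      calc (0.3152:ℝ) ≤ (6/7) * 0.3678 := by norm_num
        _ ≤ _ := by gcongr <;> linarith
    have h3 := Lam_le (m := m) (by omega)
    have h4 : ((2:ℝ)/m)^(m-2) ≤ (2/7)^4 * (2/m) := by
      rw [show m - 2 = (m-3) + 1 by omega, pow_succ]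
      gcongr
      calc ((2:ℝ)/m)^(m-3) ≤ (2/7)^(m-3) := by gcongr
        _ ≤ _ := pow_le_pow_of_le_one (by norm_num) (by norm_num) (by omega)
    have h5 : (1:ℝ) - 2/m ≤ 1 := by have : (0:ℝ) ≤ 2/m := by positivity
                                    linarith
    have h50 : (0:ℝ) ≤ 1 - 2/m := by rw [sub_nonneg, div_le_one (by positivity)]; linarith
    calc (1 - 1 / (m:ℝ)) ^ m + Lam m * (((1 - 2/m) * (2/m)) * (2/m)^(m-2))
        ≤ (1 - 1 / (m:ℝ)) ^ m + (2.7183 * m) * ((1 * (2/m)) * ((2/7)^4 * (2/m))) := by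
          gcongr
      _ = (1 - 1 / (m:ℝ)) ^ m + (2.7183 * 4 * (2/7)^4) * (1/m) := by field_simp; norm_num
      _ < (1 - 1 / (m:ℝ)) ^ m + (1 - 1 / (m:ℝ)) ^ m * (1/m) := by
          gcongr
          linarith
      _ = (1 - 1 / (m:ℝ)) ^ m * (1 + 1/m) := by ring
      _ ≤ _ := h1

lemma N0 {m : ℕ} (hm : 6 ≤ m) {ρ : ℝ} (h0 : 1/2 ≤ ρ) (h1 : ρ ≤ 1 - 1/m) :
    ρ ^ m + Lam m * (ρ * (1 - ρ) ^ (m - 1)) < c0 m := by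
  have hm' : (6:ℝ) ≤ m := by exact_mod_cast hm
  have hL := Lam_nonneg (m := m) (by omega)
  have hmi : (0:ℝ) ≤ 1/m := by positivity
  have e : (1 - ρ) ^ (m-1) = (1-ρ) * (1-ρ)^(m-2) := by rw [← pow_succ']; congr 1; omega
  rw [e, ← mul_assoc ρ]
  by_cases h : ρ ≤ 1 - 2/m
  · refine lt_of_le_of_lt ?_ (N0a hm)
    gcongr
    · apply pow_nonneg; linarith
    · nlinarith [sq_nonneg (ρ - 1/2)]
    · linarith
    · linarith
  · push Not at h
    refine lt_of_le_of_lt ?_ (N0b hm)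
    have h2 : (2:ℝ)/m ≤ 1/2 := by rw [div_le_div_iff₀ (by positivity) (by norm_num)]; linarith
    have hq : ρ * (1 - ρ) ≤ (1 - 2/(m:ℝ)) * (2/m) := by nlinarith
    gcongr
    · apply pow_nonneg; linarith
    · apply mul_nonneg
      · linarith
      · positivity
    · linarith
    · linarith

lemma N1b {m : ℕ} (hm : 6 ≤ m) {z : ℝ} (hz1 : z ≤ 1) (h : c0 m - 0.0042 ≤ (1 - z) ^ m) :
    z ≤ 1.05 / (m + 1) := by
  have hm' : (6:ℝ) ≤ m := by exact_mod_cast hm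
  by_contra hc
  push Not at hc
  have h1 : (1 - z)^m ≤ (1 - 1.05/(m+1))^m := by gcongr
  have e : 1 - 1.05/((m:ℝ)+1) = (m/(m+1)) * (1 - 0.05/m) := by field_simp; ring
  rw [e, mul_pow] at h1
  have h2 : 1.05 * (1 - 0.05/(m:ℝ))^m ≤ 1 := by
    have := bern_one (u := 0.05/m) (by positivity) (by rw [div_le_one (by positivity)]; linarith) m
    rw [show (m:ℝ) * (0.05/m) = 0.05 by field_simp] at this
    linarith
  have h3 := c0_ge (m := m) (by omega)
  change (1-z)^m ≤ c0 m * _ at h1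
  have : (1 - 0.05/(m:ℝ))^m ≤ 1/1.05 := by rw [le_div_iff₀ (by norm_num)]; linarith
  have : c0 m * (1 - 0.05/(m:ℝ))^m ≤ c0 m * (1/1.05) := by gcongr
  linarith

lemma N3 {m : ℕ} (hm : 6 ≤ m) {ρ f : ℝ} (h0 : 0.4 ≤ ρ) (h1 : ρ ≤ 1/2)
    (hf : f ≤ 1.05 / (m + 1)) :
    ρ ^ m + Lam m * (f * (1 - ρ) ^ (m - 1) + ρ * (1/2) ^ (m-1)) < c0 m := by
  have hL := Lam_nonneg (m := m) (by omega)
  rcases Nat.eq_or_lt_of_le hm with h | h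
  · subst h
    have hf' : f ≤ 0.15 := by linarith
    have : Lam 6 = 46656/3125 := by unfold Lam; norm_num
    have hc : c0 6 = 46656/117649 := by unfold c0; norm_num
    by_cases h45 : ρ ≤ 0.45
    · calc _ ≤ (0.45:ℝ)^6 + Lam 6 * (0.15 * 0.6^(6-1) + 0.45 * (1/2)^(6-1)) := by
            gcongr
            · apply pow_nonneg; linarith
            · linarith
            · linarith
        _ < _ := by rw [this, hc]; norm_num
    · push Not at h45
      calc _ ≤ (0.5:ℝ)^6 + Lam 6 * (0.15 * 0.55^(6-1) + 0.5 * (1/2)^(6-1)) := by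
            gcongr
            · linarith
            · apply pow_nonneg; linarith
            · linarith
            · linarith
            · linarith
        _ < _ := by rw [this, hc]; norm_num
  · have hm' : (7:ℝ) ≤ m := by exact_mod_cast h
    have h2 := Lam_le (m := m) (by omega)
    have h3 := geo 0 (1/2) 7 le_rfl (by norm_num) (by norm_num) m h
    have h6 : (0.6:ℝ)^(m-1) ≤ 0.6^6 := pow_le_pow_of_le_one (by norm_num) (by norm_num) (by omega)
    have h7 : (1/2:ℝ)^m ≤ (1/2)^7 := pow_le_pow_of_le_one (by norm_num) (by norm_num) (by omega)
    have e : 1/2 * (1/2:ℝ)^(m-1) = (1/2)^m := by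
      rw [← pow_succ']; congr 1; omega
    calc _ ≤ (1/2:ℝ)^m + Lam m * (1.05/(m+1) * 0.6^(m-1) + 1/2 * (1/2)^(m-1)) := by
          gcongr
          · apply pow_nonneg; linarith
          · linarith
          · linarith
      _ ≤ (1/2)^7 + (2.7183 * m) * (1.05/(m+1) * 0.6^6 + (1/2)^m) := by
          rw [e]; gcongr
      _ = (1/2)^7 + 2.7183 * (1.05 * 0.6^6) * (m/(m+1)) + 2.7183 * (m * (1/2)^m) := by ring
      _ ≤ (1/2)^7 + 2.7183 * (1.05 * 0.6^6) * 1 + 2.7183 * (7 * (1/2)^7) := by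
          have : (m:ℝ) * (1/2)^m ≤ 7 * (1/2)^7 := by simpa using h3
          have : (m:ℝ)/(m+1) ≤ 1 := by rw [div_le_one (by positivity)]; linarith
          gcongr
      _ < 0.3678 := by norm_num
      _ ≤ _ := c0_ge (by omega)

lemma N4geo {m : ℕ} (hm : 6 ≤ m) : ((m:ℝ) + 1) * 0.4 ^ m ≤ 0.0287 := by
  have := geo 1 0.4 6 (by norm_num) (by norm_num) (by norm_num) m hm
  linarith

lemma exp04 : Real.exp 0.4 ≤ 1.492 := by
  have h : (Real.exp 0.4)^5 ≤ 1.492^5 := by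
    rw [← Real.exp_nat_mul]
    rw [show ((5:ℕ):ℝ) * 0.4 = 1 + 1 by norm_num, Real.exp_add]
    have := e_hi
    have := Real.exp_pos 1
    calc Real.exp 1 * Real.exp 1 ≤ 2.7183 * 2.7183 := by gcongr
      _ ≤ _ := by norm_num
  exact le_of_pow_le_pow_left₀ (by norm_num) (by norm_num) h

lemma N4 {m : ℕ} (hm : 6 ≤ m) {α : ℝ} (h0 : 0 ≤ α) (h1 : α ≤ 0.6 / (m + 1)) :
    α * ((1 - α) ^ m + Lam m * (α * (1 / (m:ℝ)) ^ (m - 1))) + (1 - α) * 0.4 ^ m < c0 m / (m + 1) := by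
  have hm' : (6:ℝ) ≤ m := by exact_mod_cast hm
  have hp : (0:ℝ) < (m:ℝ) + 1 := by positivity
  obtain ⟨s, hs⟩ : ∃ s, α = s / (m+1) := ⟨α * (m+1), by field_simp⟩
  have hs0 : 0 ≤ s := by rw [hs] at h0; by_contra h; push Not at h; have := div_neg_of_neg_of_pos h hp; linarith
  have hs1 : s ≤ 0.6 := by rw [hs] at h1; rwa [div_le_div_iff_of_pos_right hp] at h1
  have hα1 : α ≤ 0.1 := by
    refine h1.trans ?_
    rw [div_le_iff₀ hp]; linarith
  have hc := c0_ge (m := m) (by omega)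
  have a1 : (1 - α)^m ≤ c0 m * Real.exp (1 - s) := by
    have e : 1 - α = (m/(m+1)) * (1 + (1-s)/m) := by rw [hs]; field_simp; ring
    rw [e, mul_pow]
    unfold c0
    gcongr
    apply one_add_pow_le
    · have : 0 ≤ (1-s)/m := by apply div_nonneg <;> linarith
      linarith
    · apply le_of_eq; field_simp
  have a2 : s * Real.exp (1 - s) ≤ 0.8953 := by
    have h1 : s ≤ 0.6 * Real.exp (s - 0.6) := by
      have := Real.add_one_le_exp (s - 0.6); nlinarith
    have e : Real.exp (s - 0.6) * Real.exp (1 - s) = Real.exp 0.4 := by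
      rw [← Real.exp_add]; congr 1; ring
    calc s * Real.exp (1-s) ≤ (0.6 * Real.exp (s - 0.6)) * Real.exp (1-s) := by gcongr
      _ = 0.6 * Real.exp 0.4 := by rw [mul_assoc, e]
      _ ≤ _ := by have := exp04; linarith
  have a3 := N1 hm
  have a4 := N4geo hm
  rw [lt_div_iff₀ hp]
  have b1 : α * (1-α)^m * (m+1) ≤ c0 m * 0.8953 := by
    calc α * (1-α)^m * (m+1) = s * (1-α)^m := by rw [hs]; field_simp
      _ ≤ s * (c0 m * Real.exp (1-s)) := by gcongr
      _ = c0 m * (s * Real.exp (1-s)) := by ring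
      _ ≤ _ := by gcongr
  have b2 : α * (Lam m * (α * (1 / (m:ℝ)) ^ (m - 1))) * (m+1) ≤ 0.6 * 0.1 * 0.0021 := by
    calc _ = s * α * (Lam m * (1 / (m:ℝ)) ^ (m - 1)) := by
          have : α * (m+1) = s := by rw [hs]; field_simp
          rw [← this]; ring
      _ ≤ _ := by
        have : 0 ≤ Lam m * (1 / (m:ℝ)) ^ (m - 1) := by
          have := Lam_nonneg (m := m) (by omega); positivity
        gcongr
  have b3 : (1 - α) * 0.4^m * (m+1) ≤ 0.0287 := by
    calc (1 - α) * 0.4^m * (m+1) ≤ 1 * 0.4^m * (m+1) := by gcongr; linarith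
      _ = (m+1) * 0.4^m := by ring
      _ ≤ _ := a4
  nlinarith

end OStar
end

section
open Finset

namespace OStar

lemma lam_ge_half (k l : ℕ) : (1/2:ℝ) ^ (k + l) ≤ lam k l := by
  have := amgm k l (p := 1/2) (q := 1/2) (by norm_num) (by norm_num)
  rw [← pow_add] at this
  norm_num at this ⊢; exact this

lemma lam_self {k : ℕ} (hk : 1 ≤ k) : lam k k = 1 / 2 ^ (2 * k) := by
  have hk' : (0:ℝ) < k := by exact_mod_cast hk
  unfold lam
  rw [← two_mul, ← two_mul, mul_pow, ← pow_add, ← two_mul]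
  field_simp

lemma OPT_eq_ge {k : ℕ} (hk : 1 ≤ k) {a : ℝ} (h0 : 0 ≤ a) (h1 : a ≤ 1) :
    lam k k * (a * (1 - a) ^ (k + k) + (1 - a) * a ^ (k + k)) ≤ OPT k k := by
  unfold OPT
  rw [if_pos rfl, lam_self hk]
  gcongr
  apply le_csSup
  · refine ⟨2, ?_⟩
    rintro y ⟨a, ⟨h0, h1⟩, rfl⟩
    have e1 : a * (1-a)^(2*k) ≤ 1 := by
      apply mul_le_one₀ h1 (by apply pow_nonneg; linarith)
      apply pow_le_one₀ <;> linarith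
    have e2 : (1 - a) * a^(2*k) ≤ 1 := by
      apply mul_le_one₀ (by linarith) (by apply pow_nonneg; linarith)
      apply pow_le_one₀ <;> linarith
    linarith
  · exact ⟨a, ⟨h0, h1⟩, by rw [two_mul]⟩

lemma OPT_lt_ge {k l : ℕ} (hl : 1 ≤ l) (hkl : l < k) {a d : ℝ} (h0 : 0 ≤ a) (h1 : a ≤ 1/2)
    (hd0 : 0 ≤ d) (hd1 : d ≤ (k:ℝ)/(k+l)) :
    a * (1 - a) ^ (k + l) * d ^ k * (1 - d) ^ l
        + lam (k - 1) l * (1 - a) * a ^ (k + l) * (1 - d) ≤ OPT k l := by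
  unfold OPT
  rw [if_neg (by omega)]
  have hC : ((k : ℝ) - 1) ^ (k - 1) * (l : ℝ) ^ l / ((k : ℝ) + (l : ℝ) - 1) ^ (k + l - 1) = lam (k-1) l := by
    unfold lam
    rw [Nat.cast_sub (by omega), show k - 1 + l = k + l - 1 by omega]
    push_cast
    rw [show (k:ℝ) - 1 + l = k + l - 1 by ring]
  rw [hC]
  have hk1 : (k:ℝ)/(k+l) ≤ 1 := by
    have : (0:ℝ) < l := by exact_mod_cast hl
    rw [div_le_one (by positivity)]; linarith
  apply le_csSup
  · refine ⟨1 + lam (k-1) l, ?_⟩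
    rintro y ⟨a, ⟨h0, h1⟩, d, ⟨hd0, hd1⟩, rfl⟩
    have hd2 : d ≤ 1 := hd1.trans hk1
    have p1 : 0 ≤ (1-a)^(k+l) := by apply pow_nonneg; linarith
    have p2 : (1-a)^(k+l) ≤ 1 := by apply pow_le_one₀ <;> linarith
    have p3 : 0 ≤ d^k := by positivity
    have p4 : d^k ≤ 1 := by apply pow_le_one₀ <;> linarith
    have p5 : 0 ≤ (1-d)^l := by apply pow_nonneg; linarith
    have p6 : (1-d)^l ≤ 1 := by apply pow_le_one₀ <;> linarith
    have p7 : a^(k+l) ≤ 1 := by apply pow_le_one₀ <;> linarith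
    have p8 : 0 ≤ a^(k+l) := by positivity
    have := lam_nonneg (k-1) l
    have e1 : a * (1-a)^(k+l) * d^k * (1-d)^l ≤ 1 * 1 * 1 * 1 := by gcongr; linarith
    have e2 : lam (k-1) l * (1 - a) * a^(k+l) * (1-d) ≤ lam (k-1) l * 1 * 1 * 1 := by
      gcongr <;> linarith
    linarith
  · exact ⟨a, ⟨h0, h1⟩, d, ⟨hd0, hd1⟩, rfl⟩

lemma OPT_ge {k l : ℕ} (hl : 1 ≤ l) (hlk : l ≤ k) :
    lam k l * (c0 (k + l) / ((k + l : ℕ) + 1)) ≤ OPT k l := by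
  have hl' : (1:ℝ) ≤ l := by exact_mod_cast hl
  have hk' : (1:ℝ) ≤ k := by exact_mod_cast hl.trans hlk
  rcases Nat.eq_or_lt_of_le hlk with h | h
  · subst h
    refine le_trans ?_ (OPT_eq_ge (a := 1 / ((l + l : ℕ) + 1)) hl (by positivity) ?_)
    · have := lam_nonneg l l
      gcongr
      unfold c0
      have : (0:ℝ) ≤ (1 - 1 / (((l + l : ℕ):ℝ) + 1)) * (1 / (((l + l : ℕ):ℝ) + 1))^(l+l) := by
        apply mul_nonneg
        · rw [sub_nonneg, div_le_one (by positivity)]; push_cast; linarith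
        · positivity
      refine le_trans (le_of_eq ?_) (le_add_of_nonneg_right this)
      rw [show 1 - 1 / (((l + l : ℕ):ℝ) + 1) = ((l + l : ℕ):ℝ) / (((l + l : ℕ):ℝ) + 1) by field_simp; ring]
      ring
    · rw [div_le_one (by positivity)]; push_cast; linarith
  · refine le_trans ?_ (OPT_lt_ge (a := 1 / ((k + l : ℕ) + 1)) (d := k / (k+l)) hl h (by positivity) ?_ (by positivity) le_rfl)
    · have e1 : 1 - (k:ℝ)/(k+l) = l / (k+l) := by field_simp; ring
      have : (0:ℝ) ≤ lam (k-1) l * (1 - 1 / (((k + l : ℕ):ℝ) + 1)) * (1 / (((k + l : ℕ):ℝ) + 1))^(k+l) * (1 - (k:ℝ)/(k+l)) := by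
        have := lam_nonneg (k-1) l
        have : 0 ≤ (1 - 1 / (((k + l : ℕ):ℝ) + 1)) := by
          rw [sub_nonneg, div_le_one (by positivity)]; push_cast; linarith
        rw [e1]; positivity
      refine le_trans (le_of_eq ?_) (le_add_of_nonneg_right this)
      rw [e1]
      rw [show 1 - 1 / (((k + l : ℕ):ℝ) + 1) = ((k + l : ℕ):ℝ) / (((k + l : ℕ):ℝ) + 1) by field_simp; ring]
      unfold c0 lam
      rw [div_pow (k:ℝ), div_pow (l:ℝ), pow_add ((k:ℝ)+l)]
      field_simp
    · rw [div_le_div_iff₀ (by positivity) (by norm_num)]; push_cast; linarith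

/-- O4 -/
lemma OPT_final {k l : ℕ} (hl : 1 ≤ l) (hkl : l < k) {α q : ℝ} (h0 : 0 ≤ α) (h1 : α ≤ 1/2)
    (hq0 : 0 ≤ q) (hq1 : q ≤ 1 - α) :
    α * ((1 - α - q) ^ k * q ^ l + lam (k - 1) l * α ^ (k + l - 1) * q) ≤ OPT k l := by
  have hl' : (1:ℝ) ≤ l := by exact_mod_cast hl
  have hk' : (1:ℝ) ≤ k := by exact_mod_cast hl.trans hkl.le
  have hα : 0 < 1 - α := by linarith
  have hpow : α * α^(k+l-1) = α^(k+l) := by rw [← pow_succ']; congr 1; omega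
  have hC := lam_nonneg (k-1) l
  by_cases hd : 1 - q/(1-α) ≤ (k:ℝ)/(k+l)
  · refine le_trans (le_of_eq ?_) (OPT_lt_ge (a := α) (d := 1 - q/(1-α)) hl hkl h0 h1 ?_ hd)
    · have e1 : 1 - (1 - q/(1-α)) = q/(1-α) := by ring
      have e2 : 1 - q/(1-α) = (1-α-q)/(1-α) := by field_simp
      rw [e1, e2, div_pow, div_pow, ← hpow, pow_add (1-α)]
      field_simp
    · rw [sub_nonneg, div_le_one hα]; exact hq1
  · push Not at hd
    refine le_trans ?_ (OPT_lt_ge (a := α) (d := k/(k+l)) hl hkl h0 h1 (by positivity) le_rfl)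
    have e1 : 1 - (k:ℝ)/(k+l) = l / (k+l) := by field_simp; ring
    rw [e1]
    have hq2 : q ≤ (1-α) * (l/(k+l)) := by
      have : q/(1-α) ≤ l/(k+l) := by linarith
      rw [div_le_iff₀ hα] at this; linarith
    have b1 : (1 - α - q)^k * q^l ≤ (1-α)^(k+l) * (k/(k+l))^k * (l/(k+l))^l := by
      refine (amgm k l (by linarith) hq0).trans (le_of_eq ?_)
      unfold lam
      rw [div_pow, div_pow, pow_add ((k:ℝ)+l)]
      rw [show 1 - α - q + q = 1 - α by ring]
      field_simp
    calc α * ((1 - α - q) ^ k * q ^ l + lam (k - 1) l * α ^ (k + l - 1) * q)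
        = α * ((1 - α - q) ^ k * q ^ l) + lam (k - 1) l * α ^ (k + l) * q := by rw [← hpow]; ring
      _ ≤ α * ((1-α)^(k+l) * (k/(k+l))^k * (l/(k+l))^l) + lam (k - 1) l * α ^ (k + l) * ((1-α) * (l/(k+l))) := by
          gcongr
      _ = _ := by ring

/-- N5 -/
lemma N5 {m : ℕ} (hm : 6 ≤ m) : ((m:ℝ) + 1) * 0.4 ^ (m - 1) ≤ 0.216 := by
  have h := N4geo hm
  have e : (0.4:ℝ)^m = 0.4^(m-1) * 0.4 := by rw [← pow_succ]; congr 1; omega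
  rw [e] at h
  linarith

/-- mix weight -/
lemma N5h {k l : ℕ} (hm : 6 ≤ k + l) :
    2 * ((k + l - 1 : ℕ) : ℝ) * (1 / ((k + l : ℕ):ℝ)) ^ (k + l - 2) ≤ 0.6 * lam k l := by
  set m := k + l with hmdef
  have hm' : (6:ℝ) ≤ m := by exact_mod_cast hm
  have h1 := lam_ge_half k l
  rw [← hmdef] at h1
  have h2 : (2/(m:ℝ))^(m-3) ≤ (1/3)^3 := by
    have h23 : 2/(m:ℝ) ≤ 1/3 := by
      rw [div_le_div_iff₀ (by positivity) (by norm_num)]; linarith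
    calc (2/(m:ℝ))^(m-3) ≤ (1/3)^(m-3) := pow_le_pow_left₀ (by positivity) h23 _
      _ ≤ _ := pow_le_pow_of_le_one (by norm_num) (by norm_num) (by omega)
  have h3 : ((m - 1 : ℕ):ℝ) ≤ m := by exact_mod_cast Nat.sub_le m 1
  have e : (m:ℝ) * (1/(m:ℝ))^(m-2) = 8 * (2/(m:ℝ))^(m-3) * (1/2)^m := by
    rw [show m - 2 = (m-3)+1 by omega, pow_succ]
    have : (1/2:ℝ)^m = (1/2)^(m-3) * (1/8) := by
      conv_lhs => rw [show m = (m-3)+3 by omega, pow_add]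
      norm_num
    rw [this]
    have : (2/(m:ℝ))^(m-3) * (1/2)^(m-3) = (1/m)^(m-3) := by
      rw [← mul_pow]; congr 1; field_simp
    rw [← this]; field_simp
  calc 2 * ((m - 1 : ℕ) : ℝ) * (1 / (m:ℝ)) ^ (m - 2) ≤ 2 * m * (1 / (m:ℝ)) ^ (m - 2) := by gcongr
    _ = 2 * (8 * (2/(m:ℝ))^(m-3) * (1/2)^m) := by rw [← e]; ring
    _ ≤ 2 * (8 * (1/3)^3 * (1/2)^m) := by gcongr
    _ ≤ 0.6 * lam k l := by
      have : (0:ℝ) ≤ (1/2)^m := by positivity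
      linarith

/-! l = 1; m = k+1 -/
lemma R1 {k : ℕ} (hk : 5 ≤ k) :
    (0.4:ℝ) ^ (k + 1) * (1 + lam k 1) ≤ 0.2 * (lam k 1 * c0 (k + 1)) := by
  rcases Nat.eq_or_lt_of_le hk with h | h
  · subst h; unfold lam c0; norm_num
  · have h1 := lam1_ge (k := k) (by omega)
    have h2 := lam1_le (k := k) (by omega)
    have h3 := c0_ge (m := k+1) (by omega)
    have hk' : (6:ℝ) ≤ k := by exact_mod_cast h
    have h4 := geo 0 0.4 7 le_rfl (by norm_num) (by norm_num) (k+1) (by omega)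
    push_cast at h4
    have h5 : (0.4:ℝ)^(k+1) ≤ 0.0115/(k+1) := by
      rw [le_div_iff₀ (by positivity)]; norm_num at h4 ⊢; linarith
    have h6 : lam k 1 ≤ 0.1 := by
      refine h2.trans ?_
      rw [div_le_iff₀ (by positivity)]; linarith
    have h7 : (0:ℝ) ≤ 0.0115/(k+1) := by positivity
    have h8 := lam_nonneg k 1
    calc (0.4:ℝ) ^ (k + 1) * (1 + lam k 1) ≤ 0.0115/(k+1) * (1 + 0.1) := by gcongr
      _ ≤ 0.2 * (0.3678/(k+1) * 0.3678) := by
          rw [div_mul_eq_mul_div, div_mul_eq_mul_div, ← mul_div_assoc]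
          exact div_le_div_of_nonneg_right (by norm_num) (by positivity)
      _ ≤ _ := by gcongr

lemma R2 {k : ℕ} (hk : 5 ≤ k) :
    lam k 1 * (2.3/((k:ℝ)+2)) ^ (k+1) + 1.25/((k:ℝ)+2) * (2.3/((k:ℝ)+2)) ^ k
      ≤ (1 - 1/1.04) * (lam k 1 * c0 (k + 1)) := by
  rcases Nat.eq_or_lt_of_le hk with h | h
  · subst h; unfold lam c0; norm_num
  · have h1 := lam1_ge (k := k) (by omega)
    have h3 := c0_ge (m := k+1) (by omega)
    have hk' : (6:ℝ) ≤ k := by exact_mod_cast h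
    have ht : 2.3/((k:ℝ)+2) ≤ 0.2875 := by rw [div_le_iff₀ (by positivity)]; linarith
    have h4 : (2.3/((k:ℝ)+2)) ^ k ≤ 0.2875^6 := by
      calc (2.3/((k:ℝ)+2)) ^ k ≤ 0.2875^k := by gcongr
        _ ≤ _ := pow_le_pow_of_le_one (by norm_num) (by norm_num) (by omega)
    have h5 : (2.3/((k:ℝ)+2)) ^ (k+1) ≤ 0.2875^7 := by
      calc (2.3/((k:ℝ)+2)) ^ (k+1) ≤ 0.2875^(k+1) := by gcongr
        _ ≤ _ := pow_le_pow_of_le_one (by norm_num) (by norm_num) (by omega)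
    have hl := lam_pos k 1
    have h6 : 1.25/((k:ℝ)+2) ≤ 3.4 * lam k 1 := by
      calc 1.25/((k:ℝ)+2) ≤ 1.25/((k:ℝ)+1) := by gcongr; linarith
        _ ≤ 3.4 * (0.3678/(k+1)) := by
            rw [← mul_div_assoc]; exact div_le_div_of_nonneg_right (by norm_num) (by positivity)
        _ ≤ _ := by gcongr
    calc _ ≤ lam k 1 * 0.2875^7 + 3.4 * lam k 1 * 0.2875^6 := by gcongr
      _ = lam k 1 * (0.2875^7 + 3.4 * 0.2875^6) := by ring
      _ ≤ lam k 1 * ((1 - 1/1.04) * 0.3678) := by gcongr; norm_num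
      _ ≤ lam k 1 * ((1 - 1/1.04) * c0 (k+1)) := by gcongr
      _ = _ := by ring

/-- E: 4 m R^k (m+1)/.6 ≤ .36 λ0 -/
lemma NE {k : ℕ} (hk : 5 ≤ k) :
    4 * ((k:ℝ) + 1) * (1.04/((k:ℝ)+2)) ^ k * (((k:ℝ)+2)/0.6) ≤ 0.36 * lam k 1 := by
  rcases Nat.eq_or_lt_of_le hk with h | h
  · subst h; unfold lam; norm_num
  · have h1 := lam1_ge (k := k) (by omega)
    have hk' : (6:ℝ) ≤ k := by exact_mod_cast h
    have ht : 1.04/((k:ℝ)+2) ≤ 0.13 := by rw [div_le_iff₀ (by positivity)]; linarith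
    have h4 : (1.04/((k:ℝ)+2)) ^ k ≤ 0.13^3 * (1.04/((k:ℝ)+2))^3 := by
      rw [show k = (k-3)+3 by omega, pow_add]
      push_cast [Nat.cast_sub (show 3 ≤ k by omega)]
      rw [show (k:ℝ) - 3 + 3 + 2 = k + 2 by ring]
      gcongr
      calc (1.04/((k:ℝ)+2)) ^ (k-3) ≤ 0.13^(k-3) := by gcongr
        _ ≤ _ := pow_le_pow_of_le_one (by norm_num) (by norm_num) (by omega)
    calc _ ≤ 4 * ((k:ℝ) + 1) * (0.13^3 * (1.04/((k:ℝ)+2))^3) * (((k:ℝ)+2)/0.6) := by gcongr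
      _ = (4 * 0.13^3 * 1.04^3 / 0.6) * (((k:ℝ)+1)^2/((k:ℝ)+2)^2) / (k+1) := by field_simp
      _ ≤ (4 * 0.13^3 * 1.04^3 / 0.6) * 1 / (k+1) := by
          gcongr
          rw [div_le_one (by positivity)]; gcongr; linarith
      _ ≤ 0.36 * (0.3678/(k+1)) := by
          rw [← mul_div_assoc]; exact div_le_div_of_nonneg_right (by norm_num) (by positivity)
      _ ≤ _ := by gcongr

lemma exp15 : Real.exp 1.5 ≤ 4.4818 := by
  have h : (Real.exp 1.5)^2 ≤ 4.4818^2 := by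
    rw [← Real.exp_nat_mul]
    rw [show ((2:ℕ):ℝ) * 1.5 = 1 + 1 + 1 by norm_num, Real.exp_add, Real.exp_add]
    have := Real.exp_one_lt_d9
    have := Real.exp_pos 1
    calc Real.exp 1 * Real.exp 1 * Real.exp 1 ≤ 2.7182818286 * 2.7182818286 * 2.7182818286 := by gcongr
      _ ≤ _ := by norm_num
  exact le_of_pow_le_pow_left₀ (by norm_num) (by norm_num) h

/-- 1/C = Lam k, C = lam (k-1) 1 -/
lemma NW {k : ℕ} (hk : 5 ≤ k) :
    1/(4*((k:ℝ)+1)) + lam (k-1) 1 * (lam k 1 * (1 + 3/(2*((k:ℝ)+1)))^(k+1) + lam k 1 / (0.55 - 1/k))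
      ≤ lam (k-1) 1 := by
  rcases Nat.eq_or_lt_of_le hk with h | h
  · subst h; unfold lam; norm_num
  rcases Nat.eq_or_lt_of_le h with h | h
  · have h : k = 6 := by omega
    subst h; unfold lam; norm_num
  have hk' : (7:ℝ) ≤ k := by exact_mod_cast h
  have h0 := lam1_le (k := k) (by omega)
  have hC := lam_pos (k-1) 1
  have h1 := lam_one_Lam (k := k-1) (by omega)
  rw [Nat.sub_add_cancel (by omega)] at h1
  have h2 := Lam_le (m := k) (by omega)
  have h3 := one_add_pow_le (n := k+1) (x := 3/(2*((k:ℝ)+1))) (y := 1.5) (by positivity)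
    (by apply le_of_eq; push_cast; field_simp; norm_num)
  have h4 := h3.trans exp15
  have h5 : (0.4:ℝ) ≤ 0.55 - 1/k := by
    have : 1/(k:ℝ) ≤ 1/7 := by gcongr
    linarith
  have h6 : (1:ℝ) ≤ 2.7183 * k * lam (k-1) 1 := by rw [← h1, mul_comm]; gcongr
  have h7 : 1/(4*((k:ℝ)+1)) ≤ lam (k-1) 1 * (2.7183 * k/(4*((k:ℝ)+1))) := by
    rw [← mul_div_assoc]; gcongr; linarith
  have h8 : lam k 1 * (1 + 3/(2*((k:ℝ)+1)))^(k+1) + lam k 1 / (0.55 - 1/k) ≤ (0.3679/k) * 4.4818 + (0.3679/k)/0.4 := by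
    have := lam_nonneg k 1
    gcongr
  have h9 : 2.7183 * (k:ℝ)/(4*((k:ℝ)+1)) + ((0.3679/k) * 4.4818 + (0.3679/k)/0.4) ≤ 1 := by
    rw [show (0.3679/(k:ℝ)) * 4.4818 + (0.3679/k)/0.4 = (0.3679 * 4.4818 + 0.3679/0.4)/k by ring,
      div_add_div _ _ (by positivity) (by positivity), div_le_one (by positivity)]
    nlinarith
  calc _ ≤ lam (k-1) 1 * (2.7183 * k/(4*((k:ℝ)+1))) + lam (k-1) 1 * ((0.3679/k) * 4.4818 + (0.3679/k)/0.4) := by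
        gcongr
    _ = lam (k-1) 1 * (2.7183 * (k:ℝ)/(4*((k:ℝ)+1)) + ((0.3679/k) * 4.4818 + (0.3679/k)/0.4)) := by ring
    _ ≤ lam (k-1) 1 * 1 := by gcongr
    _ = _ := mul_one _

lemma NeC {k : ℕ} (hk : 5 ≤ k) : 1/(4*((k:ℝ)+1)) ≤ lam (k-1) 1 := by
  have h := lam1_ge (k := k-1) (by omega)
  rw [Nat.cast_sub (by omega)] at h
  refine le_trans ?_ h
  have hk' : (5:ℝ) ≤ k := by exact_mod_cast hk
  push_cast
  rw [sub_add_cancel, div_le_div_iff₀ (by positivity) (by positivity)]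
  linarith

lemma Nhalf {k : ℕ} (hk : 5 ≤ k) : (1/2:ℝ)^(k+1) < 0.36 * lam k 1 := by
  rcases Nat.eq_or_lt_of_le hk with h | h
  · subst h; unfold lam; norm_num
  have h1 := lam1_ge (k := k) (by omega)
  have h3 := geo 0 (1/2) 7 le_rfl (by norm_num) (by norm_num) (k+1) (by omega)
  push_cast at h3
  have h5 : (1/2:ℝ)^(k+1) ≤ 0.055/(k+1) := by
    rw [le_div_iff₀ (by positivity)]; norm_num at h3 ⊢; linarith
  refine h5.trans_lt ?_
  calc 0.055/((k:ℝ)+1) < 0.36 * (0.3678/(k+1)) := by rw [← mul_div_assoc]; gcongr; norm_num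
    _ ≤ _ := by gcongr

lemma Nq {k : ℕ} (hk : 5 ≤ k) {α q : ℝ} (h0 : 0 ≤ α) (hα : α ≤ 1.05/((k:ℝ)+2)) (hq0 : 0 ≤ q) (hq : q ≤ 1/2) :
    lam (k-1) 1 * (α^(k+1) * q + lam k 1 * α^(k+2) + lam k 1 * q^(k+2))
      ≤ (3/(4*(k:ℝ)+7))^2 * (lam k 1 * c0 (k+1)/((k:ℝ)+2)) := by
  have hk0 := lam_nonneg k 1
  have hC0 := lam_nonneg (k-1) 1
  rcases Nat.eq_or_lt_of_le hk with h | h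
  · subst h
    have hα' : α ≤ 0.15 := by norm_num at hα; linarith
    calc _ ≤ lam (5-1) 1 * (0.15^(5+1) * (1/2) + lam 5 1 * 0.15^(5+2) + lam 5 1 * (1/2)^(5+2)) := by
          gcongr
      _ ≤ _ := by unfold lam c0; norm_num
  have hk' : (6:ℝ) ≤ k := by exact_mod_cast h
  have h1 := lam1_ge (k := k) (by omega)
  have hC := lam1_le (k := k-1) (by omega)
  rw [Nat.cast_sub (by omega)] at hC
  push_cast at hC
  have h3 := c0_ge (m := k+1) (by omega)
  set B : ℝ := 1.05/((k:ℝ)+2) with hB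
  have hB0 : 0 ≤ B := by positivity
  have hB1 : B ≤ 0.13125 := by rw [hB, div_le_iff₀ (by positivity)]; linarith
  have hBk : B * (k+2) = 1.05 := by rw [hB]; field_simp
  -- small part
  have h1' : (1:ℝ) ≤ 2.72 * (k+1) * lam k 1 := by
    rw [div_le_iff₀ (by positivity)] at h1; linarith
  have s1 : B^(k+1) * (1/2) ≤ lam k 1 * (1.43 * B^k) := by
    calc B^(k+1) * (1/2) = B^k * B * (1/2) * 1 := by rw [pow_succ]; ring
      _ ≤ B^k * B * (1/2) * (2.72 * (k+1) * lam k 1) := by gcongr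
      _ = lam k 1 * (1.36 * (B * (k+1)) * B^k) := by ring
      _ ≤ lam k 1 * (1.43 * B^k) := by
        gcongr
        nlinarith
  have s2 : B^(k+2) ≤ 0.02 * B^k := by
    rw [pow_add, mul_comm]; gcongr; nlinarith
  have s3 : (4*(k:ℝ)+7)^2 * B^k ≤ 0.006 := by
    have e : B^k = B^(k-2) * B^2 := by rw [← pow_add]; congr 1; omega
    have : B^(k-2) ≤ 0.13125^4 := by
      calc B^(k-2) ≤ 0.13125^(k-2) := by gcongr
        _ ≤ _ := pow_le_pow_of_le_one (by norm_num) (by norm_num) (by omega)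
    have h4 : (4*(k:ℝ)+7) * B ≤ 4.2 := by nlinarith
    calc (4*(k:ℝ)+7)^2 * B^k = B^(k-2) * ((4*(k:ℝ)+7) * B)^2 := by rw [e]; ring
      _ ≤ 0.13125^4 * 4.2^2 := by gcongr
      _ ≤ _ := by norm_num
  have s4 : (4*(k:ℝ)+7)^2 * (1/2)^(k+2) ≤ 3.76 := by
    have : ∀ j : ℕ, 6 ≤ j → (4*(j:ℝ)+7)^2 * (1/2)^(j+2) ≤ 3.76 := by
      intro j hj
      induction j, hj using Nat.le_induction with
      | base => norm_num
      | succ i hi ih =>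
        refine le_trans ?_ ih
        have hi' : (6:ℝ) ≤ i := by exact_mod_cast hi
        rw [show i + 1 + 2 = (i+2)+1 by ring, pow_succ (1/2:ℝ) (i+2)]
        push_cast
        have : (4*((i:ℝ)+1)+7)^2 * (1/2) ≤ (4*(i:ℝ)+7)^2 := by nlinarith
        have hp : (0:ℝ) ≤ (1/2)^(i+2) := by positivity
        nlinarith
    exact this k h
  have main : (4*(k:ℝ)+7)^2 * (1.45 * B^k + (1/2)^(k+2)) ≤ 3.77 := by nlinarith
  have main2 : lam (k-1) 1 * ((k:ℝ)+2) ≤ 0.3679 * 1.6 := by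
    rw [le_div_iff₀ (by linarith)] at hC
    have : (k:ℝ)+2 ≤ 1.6 * (k-1) := by linarith
    calc lam (k-1) 1 * ((k:ℝ)+2) ≤ lam (k-1) 1 * (1.6 * (k-1)) := by gcongr
      _ ≤ _ := by linarith
  calc _ ≤ lam (k-1) 1 * (B^(k+1) * (1/2) + lam k 1 * B^(k+2) + lam k 1 * (1/2)^(k+2)) := by gcongr
    _ ≤ lam (k-1) 1 * (lam k 1 * (1.43 * B^k) + lam k 1 * (0.02 * B^k) + lam k 1 * (1/2)^(k+2)) := by gcongr
    _ = lam k 1 * (lam (k-1) 1 * (1.45 * B^k + (1/2)^(k+2))) := by ring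
    _ = lam k 1 * ((lam (k-1) 1 * ((k:ℝ)+2)) * ((4*(k:ℝ)+7)^2 * (1.45 * B^k + (1/2)^(k+2)))) / ((4*(k:ℝ)+7)^2 * ((k:ℝ)+2)) := by
        field_simp
    _ ≤ lam k 1 * (0.3679 * 1.6 * 3.77) / ((4*(k:ℝ)+7)^2 * ((k:ℝ)+2)) := by gcongr
    _ ≤ lam k 1 * (9 * 0.3678) / ((4*(k:ℝ)+7)^2 * ((k:ℝ)+2)) :=
        div_le_div_of_nonneg_right (mul_le_mul_of_nonneg_left (by norm_num) (lam_nonneg _ _)) (by positivity)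
    _ ≤ lam k 1 * (9 * c0 (k+1)) / ((4*(k:ℝ)+7)^2 * ((k:ℝ)+2)) := by gcongr
    _ = _ := by field_simp; norm_num

end OStar
end

section
open Finset
open scoped Classical

namespace OStar
section
variable {V : Type} [Fintype V] {k l : ℕ} {A : V → V → Prop}

lemma mu_compl_nb (hn : 1 ≤ Fintype.card V) (v : V) : mu (univ \ nb A v) = 1 - mu (nb A v) := by
  have := mu_split (univ : Finset V) (nb A v)
  rw [mu_univ hn, univ_inter] at this; linarith

lemma F_ge (hopp : ∀ u v, A u v → ¬ A v u) (hn : 1 ≤ Fintype.card V)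
    (hl : 1 ≤ l) (hlk : l ≤ k) (hvert : ∀ v : V, OPT k l ≤ sVert k l A v) (v : V) :
    lam k l * c0 (k + l) ≤ dens (St k l A v univ) + lam k l * Lam (k + l) *
      avS (nb A v) (fun c => mu (nb A c \ nb A v) ^ (k + l - 1)) := by
  have hk : 1 ≤ k := hl.trans hlk
  have h1 := OPT_ge hl hlk
  have h2 := hvert v
  have h3 := sVert_le (A := A) hk hl hn v
  have h4 := leaf_bound hopp hk hl v ⟨0, hk⟩ ⟨0, hl⟩
  push_cast at h1
  have h5 : lam k l * c0 (k+l) ≤ ((k:ℝ) + l + 1) * sVert k l A v := by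
    have : lam k l * (c0 (k+l) / ((k:ℝ)+l+1)) ≤ sVert k l A v := h1.trans h2
    rw [← mul_div_assoc, div_le_iff₀ (by positivity)] at this
    linarith
  linarith

lemma step0 (hopp : ∀ u v, A u v → ¬ A v u) (hn : 1 ≤ Fintype.card V)
    (hl : 1 ≤ l) (hlk : l ≤ k) (hm : 6 ≤ k + l) (hvert : ∀ v : V, OPT k l ≤ sVert k l A v) (x : V)
    (hx : 1/2 ≤ mu (nb A x)) : mu (univ \ nb A x) ≤ 1 / ((k+l:ℕ):ℝ) := by
  by_contra hcon
  push Not at hcon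
  have hF := F_ge hopp hn hl hlk hvert x
  have e := mu_compl_nb (A := A) hn x
  have hlam := lam_pos k l
  have hL : 0 ≤ Lam (k+l) := Lam_nonneg (by omega)
  have hN := N0 hm hx (by linarith)
  have d := dens_St_le (k := k) (l := l) hopp x univ
  rw [inter_univ] at d
  have a : avS (nb A x) (fun c => mu (nb A c \ nb A x) ^ (k + l - 1)) ≤
      (1 - mu (nb A x)) ^ (k+l-1) * mu (nb A x) := by
    apply avS_le_const
    intro c _
    rw [← e]
    exact pow_le_pow_left₀ (mu_nonneg _) (mu_mono (sdiff_subset_sdiff (subset_univ _) (le_refl _))) _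
  have b := mul_le_mul_of_nonneg_left a (mul_nonneg hlam.le hL)
  have c := mul_lt_mul_of_pos_left hN hlam
  nlinarith

/-- the basic situation -/
structure Good (k l : ℕ) (A : V → V → Prop) (X Y : Finset V) (α : ℝ) : Prop where
  hXY : Y = univ \ X
  hα : α = mu X
  hα0 : 0.6 / (((k+l:ℕ):ℝ) + 1) ≤ α
  hα1 : α ≤ 1.05 / (((k+l:ℕ):ℝ) + 1)
  hκ : ∀ x ∈ X, mu (univ \ nb A x) ≤ 1 / ((k+l:ℕ):ℝ)
  hT : ∀ x ∈ X, 0.36 * lam k l ≤ mu (out A x ∩ Y) ^ k * mu (inn A x ∩ Y) ^ l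
  hh : ∀ x ∈ X, α + mu (Y \ nb A x) ≤ 1.05 / (((k+l:ℕ):ℝ) + 1)
  hq : ∀ x ∈ X, 0.55 * α ≤ mu (inn A x ∩ Y)
  hY : ∀ y ∈ Y, mu (nb A y) ≤ 0.4
  hF : ∀ v, lam k l * c0 (k + l) ≤ dens (St k l A v univ) + lam k l * Lam (k + l) *
      avS (nb A v) (fun c => mu (nb A c \ nb A v) ^ (k + l - 1))

lemma St_split (c : V) (X : Finset V) : dens (St k l A c univ) ≤
    dens ((St k l A c univ).filter (fun f => ∃ a, f a ∈ X)) + dens (St k l A c (univ \ X)) := by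
  refine (dens_mono ?_).trans (dens_union_le _ _)
  intro f hf
  rw [mem_union, mem_filter]
  by_cases h : ∃ a, f a ∈ X
  · exact Or.inl ⟨hf, h⟩
  · right
    push Not at h
    rw [mem_St] at hf ⊢
    exact ⟨fun a => ⟨(hf.1 a).1, by simpa using h _⟩, fun a => ⟨(hf.2.1 a).1, by simpa using h _⟩, hf.2.2⟩

lemma good_of (hopp : ∀ u v, A u v → ¬ A v u) (hn : 1 ≤ Fintype.card V)
    (hl : 1 ≤ l) (hlk : l ≤ k) (hm : 6 ≤ k + l) (hvert : ∀ v : V, OPT k l ≤ sVert k l A v)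
    (hs : OPT k l < starProb k l V A) : ∃ X Y α, Good k l A X Y α := by
  set X : Finset V := univ.filter (fun v => 1/2 ≤ mu (nb A v)) with hX
  set Y := univ \ X with hYd
  set α := mu X with hα
  set m := k + l with hmd
  have hk : 1 ≤ k := hl.trans hlk
  have hF := F_ge hopp hn hl hlk hvert
  have hlam := lam_pos k l
  have hL : 0 ≤ Lam m := Lam_nonneg (by omega)
  have hLL : 0 ≤ lam k l * Lam m := mul_nonneg hlam.le hL
  have hα0 : 0 ≤ α := mu_nonneg _
  have hκ : ∀ x ∈ X, mu (univ \ nb A x) ≤ 1 / (m:ℝ) := by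
    intro x hx
    exact step0 hopp hn hl hlk hm hvert x (by simpa [hX] using hx)
  have hN1 := N1 hm
  have hmuY : mu Y = 1 - α := by
    have := mu_split (univ : Finset V) X
    rw [mu_univ hn, univ_inter] at this; linarith
  have hpow : 0 ≤ (1/(m:ℝ))^(m-1) := by positivity
  -- center in X
  have hbad : ∀ x ∈ X, dens (St k l A x univ) ≤ mu (out A x ∩ Y) ^ k * mu (inn A x ∩ Y) ^ l
      + lam k l * Lam m * ((1/(m:ℝ))^(m-1) * α) := by
    intro x hx
    have h1 := St_split (k := k) (l := l) (A := A) x X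
    have h2 := bad_bound hopp hn hk hl x univ X
    have h3 := dens_St_T (k := k) (l := l) (A := A) x Y
    have h4 : avS (X.filter (fun v => v ∈ nb A x ∩ univ))
      (fun v => mu ((nb A x ∩ univ) \ nb A v) ^ (k + l - 1)) ≤ (1/(m:ℝ))^(m-1) * α := by
      refine (avS_le_const (c := (1/(m:ℝ))^(m-1)) ?_).trans ?_
      · intro v hv
        refine pow_le_pow_left₀ (mu_nonneg _) ((mu_mono ?_).trans (hκ v (mem_filter.1 hv).1)) _
        exact sdiff_subset_sdiff (subset_univ _) (le_refl _)
      · exact mul_le_mul_of_nonneg_left (mu_mono (filter_subset _ _)) hpow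
    have h5 := mul_le_mul_of_nonneg_left h4 hLL
    linarith
  have hα1' : α ≤ 1 := mu_le_one _
  have hT1 : ∀ x ∈ X, lam k l * (c0 m - 0.0042) ≤ mu (out A x ∩ Y) ^ k * mu (inn A x ∩ Y) ^ l := by
    intro x hx
    have h1 := hbad x hx
    have h2 := hF x
    have h3 : avS (nb A x) (fun c => mu (nb A c \ nb A x) ^ (k + l - 1)) ≤ (1/(m:ℝ))^(m-1) := by
      refine (avS_le_const (c := (1/(m:ℝ))^(m-1)) ?_).trans ?_
      · intro v hv
        refine pow_le_pow_left₀ (mu_nonneg _) ((mu_mono ?_).trans (hκ x hx)) _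
        exact sdiff_subset_sdiff (subset_univ _) (le_refl _)
      · exact mul_le_of_le_one_right hpow (mu_le_one _)
    have h4 := mul_le_mul_of_nonneg_left h3 hLL
    have h5 : lam k l * Lam m * ((1/(m:ℝ))^(m-1) * α) ≤ lam k l * Lam m * (1/(m:ℝ))^(m-1) :=
      mul_le_mul_of_nonneg_left (mul_le_of_le_one_right hpow hα1') hLL
    have h6 := mul_le_mul_of_nonneg_left hN1 hlam.le
    linarith
  have hpq : ∀ x, mu (out A x ∩ Y) + mu (inn A x ∩ Y) = 1 - (α + mu (Y \ nb A x)) := by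
    intro x
    rw [mu_nb_part hopp, inter_comm]
    have := mu_split Y (nb A x)
    linarith
  have hc0 := c0_ge (m := m) (by omega)
  have hT : ∀ x ∈ X, 0.36 * lam k l ≤ mu (out A x ∩ Y) ^ k * mu (inn A x ∩ Y) ^ l := by
    intro x hx
    refine le_trans ?_ (hT1 x hx)
    nlinarith
  have hh : ∀ x ∈ X, α + mu (Y \ nb A x) ≤ 1.05 / ((m:ℝ) + 1) := by
    intro x hx
    have h1 := hT1 x hx
    have h2 := amgm k l (mu_nonneg (out A x ∩ Y)) (mu_nonneg (inn A x ∩ Y))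
    have h3 := hpq x
    have h4 : 0 ≤ mu (out A x ∩ Y) + mu (inn A x ∩ Y) := add_nonneg (mu_nonneg _) (mu_nonneg _)
    apply N1b hm (by linarith)
    rw [h3] at h2
    exact le_of_mul_le_mul_left (h1.trans h2) hlam
  have hAnn : (0:ℝ) ≤ 1.05 / ((m:ℝ) + 1) := by positivity
  have hα1 : α ≤ 1.05 / ((m:ℝ) + 1) := by
    rcases X.eq_empty_or_nonempty with h | ⟨x, hx⟩
    · rw [hα, h, mu_empty]; exact hAnn
    · have := hh x hx
      have := mu_nonneg (Y \ nb A x)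
      linarith
  have hq : ∀ x ∈ X, 0.55 * α ≤ mu (inn A x ∩ Y) := by
    intro x hx
    by_contra hcon
    push Not at hcon
    have h1 := hT x hx
    have h3 := hpq x
    have hp := mu_nonneg (out A x ∩ Y)
    have hq0 := mu_nonneg (inn A x ∩ Y)
    have hh0 := mu_nonneg (Y \ nb A x)
    set p := mu (out A x ∩ Y)
    set q := mu (inn A x ∩ Y)
    have h2 := amgm k l hp (show 0 ≤ q + α by linarith)
    have h4 : q ≤ (0.55/1.55) * (q + α) := by norm_num; linarith
    have h5 : q ^ l ≤ (0.55/1.55) * (q+α)^l := by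
      calc q ^ l ≤ ((0.55/1.55) * (q + α))^l := pow_le_pow_left₀ hq0 h4 _
        _ = (0.55/1.55)^l * (q+α)^l := mul_pow _ _ _
        _ ≤ (0.55/1.55)^1 * (q+α)^l := by
            apply mul_le_mul_of_nonneg_right _ (by positivity)
            exact pow_le_pow_of_le_one (by norm_num) (by norm_num) hl
        _ = _ := by rw [pow_one]
    have h6 : p^k * q^l ≤ (0.55/1.55) * (p^k * (q+α)^l) := by
      calc p^k*q^l ≤ p^k * ((0.55/1.55) * (q+α)^l) := by gcongr
        _ = _ := by ring
    have h7 : (p + (q+α))^(k+l) ≤ 1 := pow_le_one₀ (by positivity) (by linarith)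
    have h8 : lam k l * (p + (q+α))^(k+l) ≤ lam k l := mul_le_of_le_one_right hlam.le h7
    norm_num at h6
    linarith
  have hY : ∀ y ∈ Y, mu (nb A y) ≤ 0.4 := by
    intro y hy
    by_contra hcon
    push Not at hcon
    have hy2 : mu (nb A y) ≤ 1/2 := by
      have : y ∉ X := (mem_sdiff.1 hy).2
      simp only [hX, mem_filter, mem_univ, true_and] at this
      linarith
    have hN := N3 (f := mu (nb A y ∩ X)) hm hcon.le hy2 ((mu_mono inter_subset_right).trans hα1)
    have h2 := hF y
    have d := dens_St_le (k := k) (l := l) hopp y univ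
    rw [inter_univ] at d
    have e := mu_compl_nb (A := A) hn y
    have a : avS (nb A y) (fun c => mu (nb A c \ nb A y) ^ (k + l - 1)) ≤
        (mu (nb A y ∩ X)) * (1 - mu (nb A y)) ^ (m-1) + mu (nb A y) * (1/2)^(m-1) := by
      rw [avS_split _ X]
      apply add_le_add
      · rw [mul_comm]; apply avS_le_const
        intro c _
        rw [← e]
        exact pow_le_pow_left₀ (mu_nonneg _) (mu_mono (sdiff_subset_sdiff (subset_univ _) (le_refl _))) _
      · refine (avS_le_const (c := (1/2)^(m-1)) ?_).trans ?_
        · intro c hc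
          refine pow_le_pow_left₀ (mu_nonneg _) ((mu_mono sdiff_subset).trans ?_) _
          have : c ∉ X := (mem_sdiff.1 hc).2
          simp only [hX, mem_filter, mem_univ, true_and] at this
          linarith
        · rw [mul_comm]
          exact mul_le_mul_of_nonneg_right (mu_mono sdiff_subset) (by positivity)
    have b := mul_le_mul_of_nonneg_left a hLL
    have c := mul_lt_mul_of_pos_left hN hlam
    nlinarith
  refine ⟨X, Y, α, rfl, rfl, ?_, hα1, hκ, hT, hh, hq, hY, hF⟩
  by_contra hcon
  push Not at hcon
  have hN := N4 hm hα0 hcon.le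
  have hO := OPT_ge hl hlk
  have hsp := starProb_le (k := k) (l := l) (V := V) (A := A)
  rw [avS_split univ X, univ_inter] at hsp
  have hx : avS X (fun c => dens (St k l A c univ)) ≤
      (lam k l * ((1-α)^m + Lam m * (α * (1/(m:ℝ))^(m-1)))) * α := by
    apply avS_le_const
    intro x hx
    have h1 := hbad x hx
    have h2 := amgm k l (mu_nonneg (out A x ∩ Y)) (mu_nonneg (inn A x ∩ Y))
    have h3 := hpq x
    have h5 := mu_nonneg (Y \ nb A x)
    have h4 : (mu (out A x ∩ Y) + mu (inn A x ∩ Y))^(k+l) ≤ (1-α)^(k+l) :=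
      pow_le_pow_left₀ (add_nonneg (mu_nonneg _) (mu_nonneg _)) (by linarith) _
    have h6 := mul_le_mul_of_nonneg_left h4 hlam.le
    linarith
  have hy : avS (univ \ X) (fun c => dens (St k l A c univ)) ≤ (lam k l * 0.4^m) * (1-α) := by
    rw [← hmuY]
    apply avS_le_const
    intro y hy
    have d := dens_St_le (k := k) (l := l) hopp y univ
    rw [inter_univ] at d
    exact d.trans (mul_le_mul_of_nonneg_left (pow_le_pow_left₀ (mu_nonneg _) (hY y hy) _) hlam.le)
  have c := mul_lt_mul_of_pos_left hN hlam
  nlinarith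

end
end OStar
end

section
open Finset
open scoped Classical

namespace OStar
section
variable {V : Type} [Fintype V] {k l : ℕ} {A : V → V → Prop} {X Y : Finset V} {α : ℝ}

lemma Good.hα_pos (g : Good k l A X Y α) : 0 < α := lt_of_lt_of_le (by positivity) g.hα0

lemma Good.hα_small (g : Good k l A X Y α) (hm : 6 ≤ k + l) : α ≤ 0.15 := by
  refine g.hα1.trans ?_
  have : (6:ℝ) ≤ ((k+l:ℕ):ℝ) := by exact_mod_cast hm
  rw [div_le_iff₀ (by positivity)]; linarith

lemma Good.muY (g : Good k l A X Y α) (hn : 1 ≤ Fintype.card V) : mu Y = 1 - α := by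
  have := mu_split (univ : Finset V) X
  rw [mu_univ hn, univ_inter] at this
  rw [g.hXY, g.hα]; linarith

lemma Good.hpq (g : Good k l A X Y α) (hopp : ∀ u v, A u v → ¬ A v u) (hn : 1 ≤ Fintype.card V) (x : V) :
    mu (out A x ∩ Y) + mu (inn A x ∩ Y) + mu (Y \ nb A x) = 1 - α := by
  rw [mu_nb_part hopp, inter_comm, ← g.muY hn]
  have := mu_split Y (nb A x)
  linarith

/-- decomposition of the star count according to where leaves lie -/
lemma Good.decomp (g : Good k l A X Y α) (hn : 1 ≤ Fintype.card V) (hl : 1 ≤ l) (hm : 6 ≤ k + l) :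
    starProb k l V A ≤ avS X (fun x => 0.6 * lam k l * mu (Y \ nb A x))
      + avS univ (fun c => dens (St k l A c X))
      + avS X (fun c => dens (St k l A c Y)) + avS Y (fun c => dens (St k l A c Y)) := by
  have h1 := starProb_le (k := k) (l := l) (V := V) (A := A)
  have h2 : ∀ c ∈ (univ : Finset V), dens (St k l A c univ) ≤
     (avS X (fun x => 0.6 * lam k l * mu (Y \ nb A x)) + dens (St k l A c X)) + dens (St k l A c Y) := by
    intro c _
    have h3 : St k l A c univ ⊆ ((St k l A c univ).filter (fun f => (∃ a, f a ∈ X) ∧ (∃ b, f b ∈ Y)) ∪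
        St k l A c X) ∪ St k l A c Y := by
      intro f hf
      have hc : ∀ v : V, v ∈ X ∨ v ∈ Y := by intro v; rw [g.hXY]; simp [em]
      rw [mem_union, mem_union, mem_filter]
      by_cases ha : ∃ a, f a ∈ X
      · by_cases hb : ∃ b, f b ∈ Y
        · exact Or.inl (Or.inl ⟨hf, ha, hb⟩)
        · left; right
          push Not at hb
          have hb' : ∀ a, f a ∈ X := fun a => (hc (f a)).resolve_right (hb a)
          rw [mem_St] at hf ⊢
          exact ⟨fun a => ⟨(hf.1 a).1, hb' _⟩, fun a => ⟨(hf.2.1 a).1, hb' _⟩, hf.2.2⟩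
      · right
        push Not at ha
        have hb' : ∀ a, f a ∈ Y := fun a => (hc (f a)).resolve_left (ha a)
        rw [mem_St] at hf ⊢
        exact ⟨fun a => ⟨(hf.1 a).1, hb' _⟩, fun a => ⟨(hf.2.1 a).1, hb' _⟩, hf.2.2⟩
    refine (dens_mono h3).trans ((dens_union_le _ _).trans ?_)
    gcongr
    refine (dens_union_le _ _).trans ?_
    gcongr
    have hmix := mix_bound hn (St k l A c univ) (fun f hf a b => St_indep hf a b) X Y _ g.hκ
      (by rw [g.hXY]; simp) (Sum.inr ⟨0, hl⟩)
    have he : (St k l A c univ).filter (fun f => f (Sum.inr ⟨0, hl⟩) ∈ X ∧ f (Sum.inr ⟨0, hl⟩) ∈ Y) = ∅ := by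
      rw [filter_eq_empty_iff]
      rintro f _ ⟨h, h'⟩
      rw [g.hXY] at h'
      exact (mem_sdiff.1 h').2 h
    rw [he] at hmix
    have hz : dens (∅ : Finset (Fin k ⊕ Fin l → V)) = 0 := by simp [dens]
    rw [hz, add_zero] at hmix
    simp only [Fintype.card_sum, Fintype.card_fin] at hmix
    rw [avS_mul]
    exact hmix.trans (mul_le_mul_of_nonneg_right (N5h hm) (avS_nonneg fun _ _ => mu_nonneg _))
  have h3 := avS_mono h2
  rw [avS_add, avS_add, avS_const, mu_univ hn, mul_one] at h3
  have h4 := avS_split univ X (fun c => dens (St k l A c Y))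
  rw [univ_inter, ← g.hXY] at h4
  linarith

lemma loss {p q h : ℝ} (hp : 0 ≤ p) (hp1 : p ≤ 1) (hq : 0 ≤ q) (hh : 0 ≤ h) (k l : ℕ) :
    p ^ k * q ^ l + k * h * (p ^ k * q ^ l) ≤ (p + h) ^ k * q ^ l := by
  have h1 : p * (1 + h) ≤ p + h := by nlinarith
  have h2 := one_add_mul_le_pow (show (-2:ℝ) ≤ h by linarith) k
  have h3 : p ^ k * (1 + k * h) ≤ (p+h)^k := by
    calc p^k * (1 + k*h) ≤ p^k * (1+h)^k := by gcongr
      _ = (p * (1+h))^k := (mul_pow _ _ _).symm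
      _ ≤ _ := pow_le_pow_left₀ (by positivity) h1 _
  calc _ = (p ^ k * (1 + k * h)) * q^l := by ring
    _ ≤ _ := by gcongr

lemma eYY (x : V) {t : ℝ} (ht : ∀ y ∈ Y, mu (nb A y) ≤ t) :
    avS Y (fun u => mu (Y ∩ nb A u)) ≤
      avS (nb A x ∩ Y) (fun u => mu ((nb A x ∩ Y) ∩ nb A u)) + 2 * t * mu (Y \ nb A x) := by
  rw [avS_split Y (nb A x), inter_comm Y (nb A x)]
  have h1 : avS (nb A x ∩ Y) (fun u => mu (Y ∩ nb A u)) =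
      avS (nb A x ∩ Y) (fun u => mu ((nb A x ∩ Y) ∩ nb A u)) +
      avS (nb A x ∩ Y) (fun u => mu ((Y \ nb A x) ∩ nb A u)) := by
    rw [← avS_add]
    apply avS_congr
    intro u _
    rw [mu_split (Y ∩ nb A u) (nb A x)]
    congr 2 <;> ext z <;> simp only [mem_inter, mem_sdiff] <;> tauto
  rw [h1, e_comm (nb A x ∩ Y) (Y \ nb A x)]
  have h2 : ∀ S : Finset V, avS (Y \ nb A x) (fun u => mu (S ∩ nb A u)) ≤ t * mu (Y \ nb A x) := by
    intro S
    apply avS_le_const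
    intro u hu
    exact (mu_mono inter_subset_right).trans (ht u (mem_sdiff.1 hu).1)
  have := h2 (nb A x ∩ Y)
  have := h2 Y
  linarith

lemma Good.main2 (g : Good k l A X Y α) (hopp : ∀ u v, A u v → ¬ A v u) (hn : 1 ≤ Fintype.card V)
    (hl : 2 ≤ l) (hlk : l ≤ k) (hm : 6 ≤ k + l) :
    starProb k l V A ≤ avS X (fun x => (1 - α - mu (inn A x ∩ Y)) ^ k * mu (inn A x ∩ Y) ^ l)
      + avS univ (fun c => dens (St k l A c X)) := by
  have hd := g.decomp hn (by omega) hm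
  have hlam := lam_pos k l
  have hαp := g.hα_pos
  set m := k + l with hmd
  set E : V → ℝ := fun x => avS (nb A x ∩ Y) (fun u => mu ((nb A x ∩ Y) ∩ nb A u)) with hE
  set h : V → ℝ := fun x => mu (Y \ nb A x) with hh
  have hE0 : ∀ x, 0 ≤ E x := fun x => avS_nonneg fun _ _ => mu_nonneg _
  have hh0 : ∀ x, 0 ≤ h x := fun x => mu_nonneg _
  -- d0
  have hP : lam k l * 0.4^(m-1) ≤ 0.36 * lam k l * α := by
    have h1 := N5 hm
    have h2 := g.hα0
    have hmp : (0:ℝ) < (m:ℝ) + 1 := by positivity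
    rw [div_le_iff₀ hmp] at h2
    have h3 : (0.4:ℝ)^(m-1) ≤ 0.36 * α := by
      by_contra hc
      push Not at hc
      have := mul_lt_mul_of_pos_left hc hmp
      linarith
    have := mul_le_mul_of_nonneg_left h3 hlam.le
    linarith
  have hd0 : avS Y (fun c => dens (St k l A c Y)) ≤
      (lam k l * 0.4^(m-1)) * avS Y (fun u => mu (Y ∩ nb A u)) := by
    rw [← avS_mul]
    apply avS_mono
    intro y hy
    have h1 := dens_St_le (k := k) (l := l) hopp y Y
    rw [inter_comm] at h1
    refine h1.trans ?_
    have h2 : mu (Y ∩ nb A y) ≤ 0.4 := (mu_mono inter_subset_right).trans (g.hY y hy)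
    rw [mul_assoc]
    apply mul_le_mul_of_nonneg_left _ hlam.le
    conv_lhs => rw [show k + l = (m-1)+1 by omega, pow_succ]
    exact mul_le_mul_of_nonneg_right (pow_le_pow_left₀ (mu_nonneg _) h2 _) (mu_nonneg _)
  have hd1 : avS Y (fun u => mu (Y ∩ nb A u)) * α ≤ avS X (fun x => E x + 0.8 * h x) := by
    rw [g.hα, ← avS_const]
    apply avS_mono
    intro x _
    have := eYY (A := A) x g.hY
    change _ ≤ E x + 2 * 0.4 * h x at this
    linarith
  have hd2 : avS Y (fun c => dens (St k l A c Y)) ≤ avS X (fun x => 0.36 * lam k l * (E x + 0.8 * h x)) := by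
    rw [avS_mul]
    have e0 : 0 ≤ avS Y (fun u => mu (Y ∩ nb A u)) := avS_nonneg fun _ _ => mu_nonneg _
    calc _ ≤ _ := hd0
      _ ≤ (0.36 * lam k l * α) * avS Y (fun u => mu (Y ∩ nb A u)) := mul_le_mul_of_nonneg_right hP e0
      _ = 0.36 * lam k l * (avS Y (fun u => mu (Y ∩ nb A u)) * α) := by ring
      _ ≤ _ := mul_le_mul_of_nonneg_left hd1 (by positivity)
  have hfin : avS X (fun x => 0.6 * lam k l * h x + dens (St k l A x Y) + 0.36 * lam k l * (E x + 0.8 * h x))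
      ≤ avS X (fun x => (1 - α - mu (inn A x ∩ Y)) ^ k * mu (inn A x ∩ Y) ^ l) := by
    apply avS_mono
    intro x hx
    have hT := g.hT x hx
    have hpq := g.hpq hopp hn x
    have hp0 := mu_nonneg (out A x ∩ Y)
    have hq0 := mu_nonneg (inn A x ∩ Y)
    have hp1 := mu_le_one (out A x ∩ Y)
    have hl1 := loss hp0 hp1 hq0 (hh0 x) k l
    have hpr := pair2 hopp hn (by omega) hl x Y (k := k) (l := l)
    rw [nn_eq] at hpr
    have hν0 := mu_nonneg (nb A x ∩ Y)
    have hν1 := mu_le_one (nb A x ∩ Y)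
    have hνe := mu_nb_part hopp x Y
    have hν : 0 < mu (nb A x ∩ Y) := by
      rcases hν0.eq_or_lt with h0 | h0
      · exfalso
        have : mu (inn A x ∩ Y) = 0 := by linarith
        rw [this, zero_pow (by omega), mul_zero] at hT
        linarith
      · exact h0
    have hkR : (3:ℝ) ≤ k := by exact_mod_cast (by omega : 3 ≤ k)
    rw [show 1 - α - mu (inn A x ∩ Y) = mu (out A x ∩ Y) + h x by simp only [hh]; linarith]
    change dens (St k l A x Y) * _ ≤ (_ - E x) * _ at hpr
    have hEx := hE0 x
    have hhx := hh0 x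
    generalize hTd : mu (out A x ∩ Y) ^ k * mu (inn A x ∩ Y) ^ l = T at *
    generalize mu (nb A x ∩ Y) = ν at *
    generalize dens (St k l A x Y) = K at *
    have hK : K ≤ T - T * E x := by
      have hT0 : 0 ≤ T := by linarith
      have h1 : K * ν^2 ≤ (T - T * E x) * ν^2 := by
        have : ν^2 ≤ 1 := by nlinarith
        have := mul_le_mul_of_nonneg_left this (mul_nonneg hT0 hEx)
        nlinarith
      exact le_of_mul_le_mul_right h1 (by positivity)
    have h3 : 0.36 * lam k l * E x ≤ T * E x := mul_le_mul_of_nonneg_right hT hEx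
    have h4 : 3 * (0.36 * lam k l * h x) ≤ k * h x * T := by
      have a1 : 0.36 * lam k l * h x ≤ h x * T := by nlinarith
      have a2 : 0 ≤ h x * T := mul_nonneg hhx (by linarith)
      nlinarith
    have h5 : 0 ≤ lam k l * h x := mul_nonneg hlam.le hhx
    linarith
  rw [avS_add, avS_add] at hfin
  linarith

lemma bern2 {a q r : ℝ} (n : ℕ) (ha : 0 < a) (hr : 0 ≤ r) (hra : r ≤ a) (hq : a ≤ n * q) :
    (q + r) * (a - r) ^ n ≤ q * a ^ n := by
  have h1 := bern_one (u := r / a) (by positivity) ((div_le_one ha).2 hra) n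
  have e : a - r = a * (1 - r/a) := by field_simp
  have hq0 : 0 ≤ q := by
    by_contra hc
    push Not at hc
    have : (n:ℝ) * q ≤ 0 := mul_nonpos_of_nonneg_of_nonpos (by positivity) hc.le
    linarith
  have h2 : q + r ≤ q * (1 + n * (r/a)) := by
    have : r * a ≤ r * (n * q) := mul_le_mul_of_nonneg_left hq hr
    have : r ≤ r * (n*q) / a := by rw [le_div_iff₀ ha]; exact this
    have e2 : q * (1 + n * (r/a)) = q + r * (n*q)/a := by ring
    linarith
  have h0 : 0 ≤ (a - r)^n := pow_nonneg (by linarith) _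
  calc (q+r) * (a-r)^n ≤ (q * (1 + n * (r/a))) * (a - r)^n := mul_le_mul_of_nonneg_right h2 h0
    _ = q * a^n * ((1 + n * (r/a)) * (1 - r/a)^n) := by rw [e, mul_pow]; ring
    _ ≤ q * a^n * 1 := by
        apply mul_le_mul_of_nonneg_left h1; positivity
    _ = _ := mul_one _

lemma Good.muXr (g : Good k l A X Y α) (x : V) : mu (X \ nb A x) = α - mu (nb A x ∩ X) := by
  have := mu_split X (nb A x)
  rw [inter_comm] at this
  rw [g.hα]; linarith

lemma Good.inn_split (g : Good k l A X Y α) (x : V) :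
    mu (inn A x) ≤ mu (inn A x ∩ Y) + mu (nb A x ∩ X) := by
  rw [mu_split (inn A x) X]
  have h1 : inn A x \ X = inn A x ∩ Y := by rw [g.hXY]; ext z; simp
  rw [h1]
  have : mu (inn A x ∩ X) ≤ mu (nb A x ∩ X) :=
    mu_mono (inter_subset_inter_right (by rw [nb_eq]; exact subset_union_right))
  linarith

/-- conclusion for k > l ≥ 2 -/
lemma Good.final_gt (g : Good k l A X Y α) (hopp : ∀ u v, A u v → ¬ A v u) (hn : 1 ≤ Fintype.card V)
    (hl : 2 ≤ l) (hlk : l < k) (hm : 6 ≤ k + l) : starProb k l V A ≤ OPT k l := by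
  have h1 := g.main2 hopp hn hl hlk.le hm
  have h2 := out_bound (l := l) hopp hn (by omega : 1 ≤ k) univ X
  have hαp := g.hα_pos
  have hαs := g.hα_small hm
  have h3 : avS X (fun x => (1 - α - mu (inn A x ∩ Y)) ^ k * mu (inn A x ∩ Y) ^ l
     + mu (inn A x ∩ univ) * (lam (k - 1) l * mu (X \ nb A x) ^ (k + l - 1))) ≤ (OPT k l / α) * mu X := by
    apply avS_le_const
    intro x hx
    have hpq := g.hpq hopp hn x
    have hp0 := mu_nonneg (out A x ∩ Y)
    have hq0 := mu_nonneg (inn A x ∩ Y)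
    have hh0 := mu_nonneg (Y \ nb A x)
    have hf := OPT_final (by omega : 1 ≤ l) hlk hαp.le (by linarith) hq0 (by linarith : mu (inn A x ∩ Y) ≤ 1 - α)
    rw [le_div_iff₀ hαp, mul_comm]
    refine le_trans (mul_le_mul_of_nonneg_left ?_ hαp.le) hf
    apply add_le_add le_rfl
    rw [inter_univ, g.muXr]
    have hr := g.muXr x
    have hr0 := mu_nonneg (X \ nb A x)
    have hi := g.inn_split x
    have hb := bern2 (a := α) (q := mu (inn A x ∩ Y)) (r := mu (nb A x ∩ X)) (k+l-1) hαp (mu_nonneg _)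
      (by linarith) (by
        have := g.hq x hx
        have h5 : (5:ℝ) ≤ ((k+l-1:ℕ):ℝ) := by exact_mod_cast (by omega : 5 ≤ k+l-1)
        nlinarith)
    have hlam := lam_nonneg (k-1) l
    have hpn : 0 ≤ (α - mu (nb A x ∩ X))^(k+l-1) := pow_nonneg (by linarith) _
    calc _ ≤ (mu (inn A x ∩ Y) + mu (nb A x ∩ X)) * (lam (k-1) l * (α - mu (nb A x ∩ X))^(k+l-1)) := by
          gcongr
      _ = lam (k-1) l * ((mu (inn A x ∩ Y) + mu (nb A x ∩ X)) * (α - mu (nb A x ∩ X))^(k+l-1)) := by ring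
      _ ≤ lam (k-1) l * (mu (inn A x ∩ Y) * α^(k+l-1)) := by gcongr
      _ = _ := by ring
  rw [avS_add, ← g.hα, div_mul_cancel₀ _ hαp.ne'] at h3
  linarith

/-- conclusion for k = l -/
lemma Good.final_eq (g : Good k k A X Y α) (hopp : ∀ u v, A u v → ¬ A v u) (hn : 1 ≤ Fintype.card V)
    (hm : 6 ≤ k + k) : starProb k k V A ≤ OPT k k := by
  have h1 := g.main2 hopp hn (by omega) le_rfl hm
  have hαp := g.hα_pos
  have hαs := g.hα_small hm
  have hlam := lam_pos k k
  have hO := OPT_eq_ge (k := k) (by omega) hαp.le (by linarith)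
  have ha : avS X (fun x => (1 - α - mu (inn A x ∩ Y)) ^ k * mu (inn A x ∩ Y) ^ k) ≤
      (lam k k * (1-α)^(k+k)) * α := by
    rw [g.hα, ← g.hα]
    conv_rhs => rw [g.hα]
    rw [← g.hα]
    have : avS X (fun x => (1 - α - mu (inn A x ∩ Y)) ^ k * mu (inn A x ∩ Y) ^ k) ≤
      (lam k k * (1-α)^(k+k)) * mu X := by
      apply avS_le_const
      intro x hx
      have hpq := g.hpq hopp hn x
      have hp0 := mu_nonneg (out A x ∩ Y)
      have hq0 := mu_nonneg (inn A x ∩ Y)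
      have hh0 := mu_nonneg (Y \ nb A x)
      refine (amgm k k (by linarith) hq0).trans (le_of_eq ?_)
      congr 2; ring
    rwa [← g.hα] at this
  set EX := avS X (fun u => mu (X ∩ nb A u)) with hEX
  have hEX0 : 0 ≤ EX := avS_nonneg fun _ _ => mu_nonneg _
  have hX1 : avS X (fun c => dens (St k k A c X)) ≤ lam k k * α^(k+k-1) * EX := by
    rw [hEX, ← avS_mul]
    apply avS_mono
    intro x _
    refine (dens_St_le hopp x X).trans ?_
    rw [inter_comm, mul_assoc]
    apply mul_le_mul_of_nonneg_left _ hlam.le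
    conv_lhs => rw [show k + k = (k+k-1)+1 by omega, pow_succ]
    apply mul_le_mul_of_nonneg_right _ (mu_nonneg _)
    exact pow_le_pow_left₀ (mu_nonneg _) (by rw [g.hα]; exact mu_mono inter_subset_left) _
  have hnn := nn_eq (A := A) X X
  rw [← g.hα, ← hEX] at hnn
  have hY1 : avS Y (fun c => dens (St k k A c X)) ≤ (lam k k * α^(k+k-2) * (α*α - EX)) * mu Y := by
    apply avS_le_const
    intro y _
    rw [← hnn]
    have hnn0 : 0 ≤ nn A X X := avS_nonneg fun _ _ => mu_nonneg _
    have hν0 := mu_nonneg (nb A y ∩ X)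
    have hνα : mu (nb A y ∩ X) ≤ α := by rw [g.hα]; exact mu_mono inter_subset_right
    have hd := dens_St_le (k := k) (l := k) hopp y X
    rcases hν0.eq_or_lt with h0 | h0
    · rw [← h0, zero_pow (by omega), mul_zero] at hd
      exact hd.trans (by positivity)
    · have hp := pair2 hopp hn (by omega) (by omega) y X (k := k) (l := k)
      have ham := amgm k k (mu_nonneg (out A y ∩ X)) (mu_nonneg (inn A y ∩ X))
      rw [mu_nb_part hopp] at ham
      have hsub : nn A (nb A y ∩ X) (nb A y ∩ X) ≤ nn A X X := by
        unfold nn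
        refine (avS_mono (fun u _ => mu_mono (sdiff_subset_sdiff inter_subset_right (le_refl _)))).trans ?_
        exact avS_subset inter_subset_right (fun _ _ => mu_nonneg _)
      have h2 : dens (St k k A y X) * mu (nb A y ∩ X)^2 ≤
          (lam k k * mu (nb A y ∩ X)^(k+k-2) * nn A X X) * mu (nb A y ∩ X)^2 := by
        calc _ ≤ _ := hp
          _ ≤ nn A X X * (lam k k * mu (nb A y ∩ X)^(k+k)) := by
              apply mul_le_mul hsub ham _ hnn0
              exact mul_nonneg (pow_nonneg (mu_nonneg _) _) (pow_nonneg (mu_nonneg _) _)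
          _ = _ := by
              conv_lhs => rw [show k + k = (k+k-2)+2 by omega, pow_add]
              ring
      refine (le_of_mul_le_mul_right h2 (by positivity)).trans ?_
      gcongr
  rw [g.muY hn] at hY1
  have hsp := avS_split univ X (fun c => dens (St k k A c X))
  rw [univ_inter, ← g.hXY] at hsp
  have e1 : α^(k+k) = α^(k+k-2) * (α*α) := by
    conv_lhs => rw [show k + k = (k+k-2)+2 by omega, pow_add, pow_two]
  have e2 : α^(k+k-1) = α^(k+k-2) * α := by
    rw [← pow_succ]; congr 1; omega
  rw [e2] at hX1
  have hz : 0 ≤ lam k k * α^(k+k-2) * EX := by positivity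
  have hfin : lam k k * (α^(k+k-2) * α) * EX + (lam k k * α^(k+k-2) * (α*α - EX)) * (1 - α) ≤
      lam k k * ((1-α) * α^(k+k)) := by
    rw [e1]
    nlinarith
  linarith
end
end OStar
end

section
open Finset
open scoped Classical

namespace OStar
section

lemma O1_eq {k : ℕ} (hk : 1 ≤ k) : lam 2 k / 4 = lam k 1 * c0 (k+1) / ((k:ℝ)+2) := by
  have hk' : (0:ℝ) < k := by exact_mod_cast hk
  unfold lam c0
  push_cast
  rw [show (k:ℝ) + 1 + 1 = k + 2 by ring, div_pow, show 2 + k = k + 1 + 1 by ring,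
    show (2:ℝ) + k = k + 2 by ring, pow_succ ((k:ℝ)+2) (k+1)]
  have h1 : ((k:ℝ)+2)^(k+1) ≠ 0 := by positivity
  have h2 : ((k:ℝ)+1)^(k+1) ≠ 0 := by positivity
  field_simp
  norm_num

/-- the pointwise final inequality for l = 1 -/
lemma final1 {k : ℕ} (hk : 5 ≤ k) {α q w r : ℝ} (hα : 0 < α) (hα1 : α ≤ 1.05/((k:ℝ)+2))
    (hq : 0.55 * α ≤ q) (hq1 : q ≤ 1/2) (hw : 0 ≤ w) (hwq : w ≤ q) (hr : 0 ≤ r) (hrα : r ≤ α) :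
    α * ((1-α-q)^k * q + lam (k-1) 1 * ((q - w + r) * (α - r)^k) + 1/(4*((k:ℝ)+1)) * w * α^k
      + lam (k-1) 1 * (lam k 1 * w^(k+2) / α)) ≤ OPT k 1 := by
  have hk' : (5:ℝ) ≤ k := by exact_mod_cast hk
  have hα2 : α ≤ 0.15 := by
    refine hα1.trans ?_
    rw [div_le_iff₀ (by positivity)]; linarith
  have hq0 : 0 ≤ q := by linarith
  have hC := lam_pos (k-1) 1
  have hL := lam_pos k 1
  have hamr : r * (α - r)^k ≤ lam k 1 * α^(k+1) := by
    have := amgm k 1 (p := α - r) (q := r) (by linarith) hr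
    rw [pow_one, sub_add_cancel] at this
    linarith
  have hak : (α - r)^k ≤ α^k := pow_le_pow_left₀ (by linarith) (by linarith) _
  have hsplit : (q - w + r) * (α - r)^k ≤ (q-w) * α^k + lam k 1 * α^(k+1) := by
    have := mul_le_mul_of_nonneg_left hak (show 0 ≤ q - w by linarith)
    linarith
  set C := lam (k-1) 1 with hCd
  set L := lam k 1 with hLd
  set ζ : ℝ := 1 + 3/(2*((k:ℝ)+1)) with hζ
  have hζ1 : 1 ≤ ζ := by rw [hζ]; have : 0 ≤ 3/(2*((k:ℝ)+1)) := by positivity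
                         linarith
  rcases le_total q (ζ * α) with hc | hc
  · have hNW := NW hk
    rw [← hCd, ← hLd, ← hζ] at hNW
    have hk5 : 1/(k:ℝ) ≤ 0.2 := by rw [div_le_iff₀ (by linarith)]; linarith
    have hθ : 0 < 0.55 - 1/(k:ℝ) := by linarith
    have hwp : w^(k+2)/α ≤ w * ζ^(k+1) * α^k := by
      rw [div_le_iff₀ hα]
      calc w^(k+2) = w * w^(k+1) := by ring
        _ ≤ w * (ζ*α)^(k+1) := by
            apply mul_le_mul_of_nonneg_left _ hw
            exact pow_le_pow_left₀ hw (hwq.trans hc) _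
        _ = _ := by rw [mul_pow]; ring
    have hwp2 : C * (L * w^(k+2)/α) ≤ C * (L * (w * ζ^(k+1) * α^k)) := by
      rw [mul_div_assoc]; gcongr
    have key : C * ((q - w + r) * (α - r)^k) + 1/(4*((k:ℝ)+1)) * w * α^k + C * (L * w^(k+2)/α) ≤
        C * α^k * q := by
      have hNw := mul_le_mul_of_nonneg_right hNW (show 0 ≤ w * α^k by positivity)
      rcases le_total α (k * (q-w)) with hb | hb
      · have h1 := mul_le_mul_of_nonneg_left (bern2 k hα hr hrα hb) hC.le
        have h2 : 0 ≤ C * (L/(0.55 - 1/(k:ℝ))) * (w * α^k) := by positivity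
        linarith
      · have hwl : (0.55 - 1/(k:ℝ)) * α ≤ w := by
          have : q - w ≤ 1/(k:ℝ) * α := by
            rw [one_div, ← div_eq_inv_mul, le_div_iff₀ (by linarith)]; linarith
          linarith
        have h1 := mul_le_mul_of_nonneg_left hsplit hC.le
        have h2 : L * α^(k+1) ≤ L/(0.55 - 1/(k:ℝ)) * (w * α^k) := by
          have : α ≤ w / (0.55 - 1/(k:ℝ)) := by rw [le_div_iff₀ hθ]; linarith
          calc L * α^(k+1) = L * α^k * α := by ring
            _ ≤ L * α^k * (w / (0.55 - 1/(k:ℝ))) := by gcongr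
            _ = _ := by ring
        have h3 := mul_le_mul_of_nonneg_left h2 hC.le
        linarith
    have hf := OPT_final (le_refl 1) (show 1 < k by omega) hα.le (by linarith) hq0 (by linarith : q ≤ 1 - α)
    refine le_trans (mul_le_mul_of_nonneg_left ?_ hα.le) hf
    rw [pow_one, show k + 1 - 1 = k by omega, ← hCd]
    linarith
  · have hO := OPT_ge (le_refl 1) (show 1 ≤ k by omega)
    have hO1 := O1_eq (show 1 ≤ k by omega)
    have hNq := Nq hk hα.le hα1 hq0 hq1
    rw [← hCd, ← hLd] at hNq
    rw [← hLd] at hO1 hO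
    rw [← hO1] at hNq
    have hO' : lam 2 k / 4 ≤ OPT k 1 := by
      rw [hO1, mul_div_assoc]
      push_cast at hO
      rw [show (k:ℝ) + 1 + 1 = k + 2 by ring] at hO
      exact hO
    have hεC := NeC hk
    rw [← hCd] at hεC
    have ham := amgm 2 k (p := α + q) (q := 1 - α - q) (by linarith) (by linarith)
    rw [show α + q + (1 - α - q) = 1 by ring, one_pow, mul_one] at ham
    have hp0 : 0 ≤ (1-α-q)^k := pow_nonneg (by linarith) _
    have h1 : α * q * (1+ζ)^2 ≤ ζ * (α+q)^2 := by
      have : 0 ≤ (q - ζ*α) * (ζ*q - α) := by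
        apply mul_nonneg (by linarith)
        nlinarith
      nlinarith
    have h2 : α * (q * (1-α-q)^k) * (1+ζ)^2 ≤ ζ * lam 2 k := by
      calc _ = (α * q * (1+ζ)^2) * (1-α-q)^k := by ring
        _ ≤ (ζ * (α+q)^2) * (1-α-q)^k := mul_le_mul_of_nonneg_right h1 hp0
        _ = ζ * ((α+q)^2 * (1-α-q)^k) := by ring
        _ ≤ _ := mul_le_mul_of_nonneg_left ham (by linarith)
    have h3 : α * (q * (1-α-q)^k) ≤ (1 - (3/(4*(k:ℝ)+7))^2) * (lam 2 k/4) := by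
      have e : 1 - (3/(4*(k:ℝ)+7))^2 = 4 * ζ / (1+ζ)^2 := by
        rw [hζ]; field_simp; ring
      rw [e]
      have h4 := (le_div_iff₀ (by positivity : 0 < (1+ζ)^2)).2 h2
      refine h4.trans (le_of_eq ?_)
      ring
    have h5 : C * ((q - w + r) * (α - r)^k) + 1/(4*((k:ℝ)+1)) * w * α^k ≤ C * (q * α^k + L * α^(k+1)) := by
      have a1 := mul_le_mul_of_nonneg_left hsplit hC.le
      have a2 := mul_le_mul_of_nonneg_right hεC (show 0 ≤ w * α^k by positivity)
      linarith
    have h6 : α * (C * (L * w^(k+2)/α)) ≤ C * (L * q^(k+2)) := by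
      have : α * (C * (L * w^(k+2)/α)) = C * (L * w^(k+2)) := by field_simp
      rw [this]
      have := pow_le_pow_left₀ hw hwq (k+2)
      gcongr
    have h7 := mul_le_mul_of_nonneg_left h5 hα.le
    calc _ = α * (q * (1-α-q)^k) + α * (C * ((q - w + r) * (α - r)^k) + 1/(4*((k:ℝ)+1)) * w * α^k)
          + α * (C * (L * w^(k+2)/α)) := by ring
      _ ≤ (1 - (3/(4*(k:ℝ)+7))^2) * (lam 2 k/4) + α * (C * (q * α^k + L * α^(k+1))) + C * (L * q^(k+2)) := by
          linarith
      _ = (1 - (3/(4*(k:ℝ)+7))^2) * (lam 2 k/4) + C * (α^(k+1) * q + L * α^(k+2) + L * q^(k+2)) := by ring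
      _ ≤ (1 - (3/(4*(k:ℝ)+7))^2) * (lam 2 k/4) + (3/(4*(k:ℝ)+7))^2 * (lam 2 k/4) := by linarith
      _ = lam 2 k / 4 := by ring
      _ ≤ _ := hO'

variable {V : Type} [Fintype V] {k : ℕ} {A : V → V → Prop} {X Y : Finset V} {α : ℝ}

/-- bootstrapping the bound on degrees inside `Y` -/
lemma Good.rstep (g : Good k 1 A X Y α) (hopp : ∀ u v, A u v → ¬ A v u) (hn : 1 ≤ Fintype.card V)
    (hk : 5 ≤ k) {t r0 δ : ℝ} (ht : ∀ y ∈ Y, mu (nb A y) ≤ t) (hr : ∀ y ∈ Y, mu (nb A y ∩ Y) ≤ r0)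
    (hδ : lam k 1 * t^(k+1) + r0 * t^k ≤ (1 - δ) * (lam k 1 * c0 (k+1))) (hδ0 : 0 < δ) :
    ∀ y ∈ Y, mu (nb A y ∩ Y) ≤ (1/δ)/((k:ℝ)+2) := by
  intro y hy
  have hF := g.hF y
  rw [lam_one_Lam (by omega), one_mul, show k + 1 - 1 = k by omega] at hF
  have d := dens_St_le (k := k) (l := 1) hopp y univ
  rw [inter_univ] at d
  have hL := lam_pos k 1
  have hty := ht y hy
  have ht0 : 0 ≤ t := (mu_nonneg _).trans hty
  have d2 : lam k 1 * mu (nb A y)^(k+1) ≤ lam k 1 * t^(k+1) :=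
    mul_le_mul_of_nonneg_left (pow_le_pow_left₀ (mu_nonneg _) hty _) hL.le
  have e := mu_compl_nb (A := A) hn y
  have hsd : nb A y \ X = nb A y ∩ Y := by rw [g.hXY]; ext z; simp
  have hρ := mu_split (nb A y) X
  rw [hsd] at hρ
  have a : avS (nb A y) (fun c => mu (nb A c \ nb A y) ^ k) ≤
      (1 - mu (nb A y))^k * mu (nb A y ∩ X) + r0 * t^k := by
    rw [avS_split _ X, hsd]
    apply add_le_add
    · apply avS_le_const
      intro c _
      rw [← e]
      exact pow_le_pow_left₀ (mu_nonneg _) (mu_mono (sdiff_subset_sdiff (subset_univ _) (le_refl _))) _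
    · refine (avS_le_const (c := t^k) ?_).trans ?_
      · intro c hc
        exact pow_le_pow_left₀ (mu_nonneg _) ((mu_mono sdiff_subset).trans (ht c (mem_inter.1 hc).2)) _
      · rw [mul_comm]
        exact mul_le_mul_of_nonneg_right (hr y hy) (by positivity)
  have h1 : δ * (lam k 1 * c0 (k+1)) ≤ (1 - mu (nb A y))^k * mu (nb A y ∩ X) := by linarith
  have hO1 := O1_eq (show 1 ≤ k by omega)
  have ham := amgm 2 k (p := mu (nb A y)) (q := 1 - mu (nb A y)) (mu_nonneg _) (by linarith [mu_le_one (nb A y)])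
  rw [add_sub_cancel, one_pow, mul_one] at ham
  have hf0 := mu_nonneg (nb A y ∩ X)
  have hr0 := mu_nonneg (nb A y ∩ Y)
  have hp0 : 0 ≤ (1 - mu (nb A y))^k := pow_nonneg (by linarith [mu_le_one (nb A y)]) _
  have hLc : 0 < lam k 1 * c0 (k+1) := mul_pos hL (c0_pos _ (by omega))
  generalize mu (nb A y ∩ X) = f at *
  generalize mu (nb A y ∩ Y) = r at *
  generalize hG : (1 - mu (nb A y))^k = G at *
  rw [hρ] at ham
  have h2 : r * (δ * (lam k 1 * c0 (k+1))) ≤ lam k 1 * c0 (k+1) / ((k:ℝ)+2) := by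
    rw [← hO1]
    have h3 := mul_le_mul_of_nonneg_left h1 hr0
    have h4 : 4 * (r * f) * G ≤ (f+r)^2 * G := by
      apply mul_le_mul_of_nonneg_right _ hp0
      nlinarith [sq_nonneg (f-r)]
    linarith
  rw [le_div_iff₀ (by positivity)] at h2 ⊢
  rw [le_div_iff₀ hδ0]
  have : (lam k 1 * c0 (k+1)) * (r * (k+2) * δ) ≤ (lam k 1 * c0 (k+1)) * 1 := by linarith
  exact le_of_mul_le_mul_left this hLc

lemma Good.rbound (g : Good k 1 A X Y α) (hopp : ∀ u v, A u v → ¬ A v u) (hn : 1 ≤ Fintype.card V)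
    (hk : 5 ≤ k) : ∀ y ∈ Y, mu (nb A y ∩ Y) ≤ 1.04/((k:ℝ)+2) := by
  have h1 := g.rstep hopp hn hk (δ := 0.8) g.hY (fun y hy => (mu_mono inter_subset_left).trans (g.hY y hy))
    (by have := R1 hk; norm_num at this ⊢; rw [pow_succ] at this ⊢; linarith) (by norm_num)
  have hα1 := g.hα1
  push_cast at hα1
  rw [show (k:ℝ) + 1 + 1 = k + 2 by ring] at hα1
  have h1' : ∀ y ∈ Y, mu (nb A y ∩ Y) ≤ 1.25/((k:ℝ)+2) := by
    intro y hy; have := h1 y hy; norm_num at this ⊢; exact this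
  have h2 : ∀ y ∈ Y, mu (nb A y) ≤ 2.3/((k:ℝ)+2) := by
    intro y hy
    have hsd : nb A y \ X = nb A y ∩ Y := by rw [g.hXY]; ext z; simp
    have hρ := mu_split (nb A y) X
    rw [hsd] at hρ
    have h3 : mu (nb A y ∩ X) ≤ α := by rw [g.hα]; exact mu_mono inter_subset_right
    have h4 := h1' y hy
    have e : 2.3/((k:ℝ)+2) = 1.05/((k:ℝ)+2) + 1.25/((k:ℝ)+2) := by rw [← add_div]; norm_num
    linarith
  have h3 := g.rstep hopp hn hk (δ := 1/1.04) h2 h1' (R2 hk) (by norm_num)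
  intro y hy; have := h3 y hy; rwa [one_div_one_div] at this

end
end OStar
end

section
open Finset
open scoped Classical

namespace OStar
section
variable {V : Type} [Fintype V] {k : ℕ} {A : V → V → Prop} {X Y : Finset V} {α : ℝ}

lemma dens_swap {ι : Type} [Fintype ι] [DecidableEq ι] (S : Finset (ι → V)) (X : Finset V)
    (P : V → (ι → V) → Prop) [∀ x f, Decidable (P x f)] :
    avS X (fun x => dens (S.filter (P x))) =
      (∑ f ∈ S, mu (X.filter (fun x => P x f))) / (Fintype.card V : ℝ) ^ (Fintype.card ι) := by
  unfold avS dens mu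
  simp only [card_filter, Nat.cast_sum]
  simp only [← Finset.sum_div]
  rw [Finset.sum_comm, div_div, div_div, mul_comm]

lemma dens_avg {ι : Type} [Fintype ι] [DecidableEq ι] (S : Finset (ι → V)) (X : Finset V)
    (P Q : V → (ι → V) → Prop) [∀ x f, Decidable (P x f)] [∀ x f, Decidable (Q x f)] (c ε : ℝ)
    (h : ∀ f ∈ S, c ≤ mu (X.filter (fun x => P x f)) + ε * mu (X.filter (fun x => Q x f))) :
    c * dens S ≤ avS X (fun x => dens (S.filter (P x))) + ε * avS X (fun x => dens (S.filter (Q x))) := by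
  rw [dens_swap, dens_swap, ← mul_div_assoc, ← add_div]
  unfold dens
  rw [← mul_div_assoc]
  apply div_le_div_of_nonneg_right _ (by positivity)
  rw [Finset.mul_sum, ← Finset.sum_add_distrib]
  calc c * (S.card : ℝ) = ∑ f ∈ S, c := by rw [Finset.sum_const, nsmul_eq_mul]; ring
    _ ≤ _ := Finset.sum_le_sum h

/-- stars inside `B`: bound through an out-leaf -/
lemma inside_bound (hopp : ∀ u v, A u v → ¬ A v u) (hn : 1 ≤ Fintype.card V) (hk : 1 ≤ k) (B : Finset V) :
    avS B (fun c => dens (St k 1 A c B)) ≤ lam (k-1) 1 * (lam k 1 * mu B ^ (k+2)) := by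
  refine (out_bound hopp hn hk B B).trans ?_
  have : lam (k-1) 1 * (lam k 1 * mu B ^ (k+2)) = (lam (k-1) 1 * (lam k 1 * mu B^(k+1))) * mu B := by ring
  rw [this]
  apply avS_le_const
  intro v _
  rw [show k + 1 - 1 = k by omega]
  have h1 := mu_split B (nb A v)
  have h2 : mu (inn A v ∩ B) ≤ mu (B ∩ nb A v) := by
    rw [inter_comm B]
    exact mu_mono (inter_subset_inter_right (by rw [nb_eq]; exact subset_union_right))
  have h3 := amgm k 1 (mu_nonneg (B \ nb A v)) (mu_nonneg (inn A v ∩ B))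
  have h4 : (mu (B \ nb A v) + mu (inn A v ∩ B))^(k+1) ≤ mu B^(k+1) :=
    pow_le_pow_left₀ (add_nonneg (mu_nonneg _) (mu_nonneg _)) (by linarith) _
  have h5 := h3.trans (mul_le_mul_of_nonneg_left h4 (lam_nonneg k 1))
  have h6 := mul_le_mul_of_nonneg_left h5 (lam_nonneg (k-1) 1)
  rw [pow_one] at h6
  linarith

/-- adjacent pairs of the neighbourhood of `x` in `Y`, not both in-neighbours -/
noncomputable def E1 (A : V → V → Prop) (Y : Finset V) (x : V) : ℝ :=
  avS (out A x ∩ Y) (fun u => mu ((nb A x ∩ Y) ∩ nb A u))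
   + avS (inn A x ∩ Y) (fun u => mu ((out A x ∩ Y) ∩ nb A u))

lemma E1_nonneg (x : V) : 0 ≤ E1 A Y x :=
  add_nonneg (avS_nonneg fun _ _ => mu_nonneg _) (avS_nonneg fun _ _ => mu_nonneg _)

lemma pairs_le (hopp : ∀ u v, A u v → ¬ A v u) (x : V) {R : ℝ} (hR : ∀ y ∈ Y, mu (nb A y ∩ Y) ≤ R) :
    avS (inn A x ∩ Y) (fun c => mu ((Y \ inn A x) ∩ nb A c)) + avS (Y \ inn A x) (fun c => mu (Y ∩ nb A c))
      ≤ E1 A Y x + 2 * R * mu (Y \ nb A x) := by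
  set I := inn A x ∩ Y with hI
  set O := out A x ∩ Y with hO
  set N := nb A x ∩ Y with hN
  set H := Y \ nb A x with hH
  have hdOI := disj_out_inn hopp x
  rw [Finset.disjoint_left] at hdOI
  have hNu : N = I ∪ O := by
    ext z; simp only [hN, hI, hO, mem_inter, mem_union, mem_nb, mem_inn, mem_out]; tauto
  have hYu : Y \ inn A x = O ∪ H := by
    ext z
    have := hdOI (a := z)
    simp only [hH, hO, mem_sdiff, mem_inter, mem_union, mem_nb, mem_inn, mem_out] at this ⊢; tauto
  have hdIO : Disjoint I O := by
    rw [Finset.disjoint_left]; intro z hz hz'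
    exact hdOI (mem_inter.1 hz').1 (mem_inter.1 hz).1
  have hdOH : Disjoint O H := by
    rw [Finset.disjoint_left]; intro z hz hz'
    simp only [hH, hO, mem_sdiff, mem_inter, mem_nb, mem_out] at hz hz'; tauto
  have hdNH : Disjoint N H := by
    rw [Finset.disjoint_left]; intro z hz hz'
    simp only [hH, hN, mem_sdiff, mem_inter] at hz hz'; tauto
  have hYN : Y = N ∪ H := by
    ext z; simp only [hH, hN, mem_sdiff, mem_inter, mem_union]; tauto
  have sp : ∀ S T U : Finset V, Disjoint T U →
      avS S (fun c => mu ((T ∪ U) ∩ nb A c)) = avS S (fun c => mu (T ∩ nb A c)) + avS S (fun c => mu (U ∩ nb A c)) := by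
    intro S T U hd
    rw [← avS_add]
    apply avS_congr
    intro c _
    rw [union_inter_distrib_right, mu_union]
    exact hd.mono inter_subset_left inter_subset_left
  have hb : ∀ S : Finset V, S ⊆ Y → avS H (fun u => mu (S ∩ nb A u)) ≤ R * mu H := by
    intro S hS
    apply avS_le_const
    intro u hu
    refine (mu_mono ?_).trans (hR u (mem_sdiff.1 hu).1)
    rw [inter_comm]; exact inter_subset_inter_left hS
  have e1 : avS I (fun c => mu ((Y \ inn A x) ∩ nb A c)) =
      avS I (fun c => mu (O ∩ nb A c)) + avS I (fun c => mu (H ∩ nb A c)) := by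
    rw [hYu, sp _ _ _ hdOH]
  have e2 : avS (Y \ inn A x) (fun c => mu (Y ∩ nb A c)) =
      avS O (fun c => mu (N ∩ nb A c)) + avS O (fun c => mu (H ∩ nb A c)) + avS H (fun c => mu (Y ∩ nb A c)) := by
    rw [hYu, avS_union hdOH, ← sp _ _ _ hdNH, ← hYN]
  have e3 : avS I (fun c => mu (H ∩ nb A c)) + avS O (fun c => mu (H ∩ nb A c)) =
      avS H (fun c => mu (N ∩ nb A c)) := by
    rw [← avS_union hdIO, ← hNu, e_comm]
  have h1 := hb N inter_subset_right
  have h2 := hb Y (le_refl _)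
  rw [e1, e2]
  change _ ≤ (avS O _ + avS I _) + _
  linarith

/-- stars in `Y` not contained in the in-neighbourhood of `x` -/
lemma bad_x (hopp : ∀ u v, A u v → ¬ A v u) (hn : 1 ≤ Fintype.card V) (hk : 1 ≤ k) (x : V) {R : ℝ}
    (hR : ∀ y ∈ Y, mu (nb A y ∩ Y) ≤ R) :
    avS Y (fun c => dens ((St k 1 A c Y).filter (fun f => ¬ (c ∈ inn A x ∧ ∀ a, f a ∈ inn A x)))) ≤
      R^k * (E1 A Y x + 2 * R * mu (Y \ nb A x)) := by
  have bb : ∀ c ∈ Y, ∀ Bad : Finset V, dens ((St k 1 A c Y).filter (fun f => ∃ a, f a ∈ Bad)) ≤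
      R^k * mu (Bad ∩ nb A c) := by
    intro c hc Bad
    have h := bad_bound (k := k) (l := 1) hopp hn hk le_rfl c Y Bad
    rw [lam_one_Lam hk, one_mul, show k + 1 - 1 = k by omega] at h
    have hR0 : 0 ≤ R := (mu_nonneg _).trans (hR c hc)
    refine h.trans ((avS_le_const (c := R^k) ?_).trans ?_)
    · intro v _
      exact pow_le_pow_left₀ (mu_nonneg _) ((mu_mono sdiff_subset).trans (hR c hc)) _
    · apply mul_le_mul_of_nonneg_left _ (by positivity)
      apply mu_mono
      intro z hz
      simp only [mem_filter, mem_inter] at hz ⊢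
      tauto
  rcases Y.eq_empty_or_nonempty with hY | ⟨y0, hy0⟩
  · subst hY; simp [avS, E1, mu]
  have hR0 : 0 ≤ R := (mu_nonneg _).trans (hR y0 hy0)
  refine le_trans ?_ (mul_le_mul_of_nonneg_left (pairs_le hopp x hR) (by positivity))
  rw [mul_add, ← avS_mul, ← avS_mul, avS_split Y (inn A x), inter_comm Y]
  apply add_le_add
  · apply avS_mono
    intro c hc
    refine (dens_mono ?_).trans (bb c (mem_inter.1 hc).2 (Y \ inn A x))
    intro f hf
    rw [mem_filter] at hf ⊢
    refine ⟨hf.1, ?_⟩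
    by_contra hcon
    push Not at hcon
    apply hf.2
    refine ⟨(mem_inter.1 hc).1, fun a => ?_⟩
    have h1 := hcon a
    have h2 := (mem_inter.1 (St_mem hf.1 a)).2
    simp only [mem_sdiff, not_and, not_not] at h1
    exact h1 h2
  · apply avS_mono
    intro c hc
    refine (dens_mono ?_).trans (bb c (mem_sdiff.1 hc).1 Y)
    intro f hf
    rw [mem_filter] at hf ⊢
    exact ⟨hf.1, ⟨Sum.inr 0, (mem_inter.1 (St_mem hf.1 _)).2⟩⟩

/-- `K ≤ T - T E'` -/
lemma KT1 (hopp : ∀ u v, A u v → ¬ A v u) (hn : 1 ≤ Fintype.card V) (hk : 2 ≤ k) (x : V)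
    (hT : 0 < mu (out A x ∩ Y) ^ k * mu (inn A x ∩ Y) ^ 1) :
    dens (St k 1 A x Y) ≤ mu (out A x ∩ Y) ^ k * mu (inn A x ∩ Y) ^ 1
      - mu (out A x ∩ Y) ^ k * mu (inn A x ∩ Y) ^ 1 * E1 A Y x := by
  have hp := pair1 (k := k) (l := 1) hopp hn hk le_rfl x Y
  rw [nn_eq, nn_eq] at hp
  have hν := mu_nb_part hopp x Y
  have hν1 := mu_le_one (nb A x ∩ Y)
  have hE := E1_nonneg (A := A) (Y := Y) x
  rw [← hν] at hp hν1
  have hp0 := mu_nonneg (out A x ∩ Y)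
  have hq0 := mu_nonneg (inn A x ∩ Y)
  unfold E1 at hE ⊢
  have hpp : 0 < mu (out A x ∩ Y) := by
    rcases hp0.eq_or_lt with h | h
    · rw [← h, zero_pow (by omega), zero_mul] at hT; exact absurd hT (lt_irrefl _)
    · exact h
  generalize mu (out A x ∩ Y) ^ k * mu (inn A x ∩ Y) ^ 1 = T at *
  generalize mu (out A x ∩ Y) = p at *
  generalize mu (inn A x ∩ Y) = q at *
  generalize dens (St k 1 A x Y) = K at *
  generalize avS (out A x ∩ Y) (fun u => mu ((nb A x ∩ Y) ∩ nb A u)) = e1 at *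
  generalize avS (inn A x ∩ Y) (fun u => mu ((out A x ∩ Y) ∩ nb A u)) = e2 at *
  have hs0 : 0 < p^2 + 2 * (p*q) := by positivity
  have hs1 : p^2 + 2*(p*q) ≤ 1 := by nlinarith
  have h1 : K * (p^2 + 2*(p*q)) ≤ (T - T * (e1+e2)) * (p^2 + 2*(p*q)) := by
    have := mul_le_mul_of_nonneg_left hs1 (mul_nonneg hT.le hE)
    nlinarith
  exact le_of_mul_le_mul_right h1 hs0

set_option maxHeartbeats 4000000 in
lemma Good.final_one (g : Good k 1 A X Y α) (hopp : ∀ u v, A u v → ¬ A v u) (hn : 1 ≤ Fintype.card V)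
    (hk : 5 ≤ k) : starProb k 1 V A ≤ OPT k 1 := by
  have hm : 6 ≤ k + 1 := by omega
  have hk' : (5:ℝ) ≤ k := by exact_mod_cast hk
  have hd := g.decomp hn le_rfl hm
  have hαp := g.hα_pos
  have hαs := g.hα_small hm
  have hL := lam_pos k 1
  have hC := lam_pos (k-1) 1
  have hR := g.rbound hopp hn hk
  have hα0 := g.hα0
  have hα1 := g.hα1
  push_cast at hα0 hα1
  rw [show (k:ℝ) + 1 + 1 = k + 2 by ring] at hα0 hα1
  set R : ℝ := 1.04/((k:ℝ)+2) with hRd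
  have hR0 : 0 < R := by rw [hRd]; positivity
  have hR1 : R ≤ 0.15 := by rw [hRd, div_le_iff₀ (by positivity)]; linarith
  set ε : ℝ := 1/(4*((k:ℝ)+1)) with hε
  have hε0 : 0 < ε := by rw [hε]; positivity
  have hε1 : ε ≤ 1 := by rw [hε, div_le_one (by positivity)]; linarith
  set Z : Finset V := Y.filter (fun y => mu (inn A y ∩ X) < ε * α) with hZ
  set Zx : V → Finset V := fun x => inn A x ∩ Z with hZx
  set C := lam (k-1) 1 with hCd
  set L := lam k 1 with hLd
  -- d0
  have hstar : ∀ c ∈ Y, (ε * α) * dens (St k 1 A c Y) ≤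
      avS X (fun x => dens ((St k 1 A c Y).filter (fun f => ¬ (c ∈ inn A x ∧ ∀ a, f a ∈ inn A x))))
      + ε * avS X (fun x => dens ((St k 1 A c Y).filter (fun f => c ∈ Zx x ∧ ∀ a, f a ∈ Zx x))) := by
    intro c hc
    refine dens_avg (St k 1 A c Y) X (fun x f => ¬ (c ∈ inn A x ∧ ∀ a, f a ∈ inn A x))
      (fun x f => c ∈ Zx x ∧ ∀ a, f a ∈ Zx x) (ε * α) ε ?_
    intro f hf
    have hfY : ∀ a, f a ∈ Y := fun a => (mem_inter.1 (St_mem hf a)).2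
    by_cases hall : c ∈ Z ∧ ∀ a, f a ∈ Z
    · have hX : α ≤ mu (X.filter (fun x => ¬ (c ∈ inn A x ∧ ∀ a, f a ∈ inn A x))) +
          mu (X.filter (fun x => c ∈ Zx x ∧ ∀ a, f a ∈ Zx x)) := by
        rw [g.hα]
        refine (mu_mono ?_).trans (mu_union_le _ _)
        intro x hx
        rw [mem_union, mem_filter, mem_filter]
        by_cases hin : c ∈ inn A x ∧ ∀ a, f a ∈ inn A x
        · right
          exact ⟨hx, mem_inter.2 ⟨hin.1, hall.1⟩, fun a => mem_inter.2 ⟨hin.2 a, hall.2 a⟩⟩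
        · left; exact ⟨hx, hin⟩
      have := mul_le_mul_of_nonneg_left hX hε0.le
      have h2 : ε * mu (X.filter (fun x => ¬ (c ∈ inn A x ∧ ∀ a, f a ∈ inn A x))) ≤
        mu (X.filter (fun x => ¬ (c ∈ inn A x ∧ ∀ a, f a ∈ inn A x))) :=
        mul_le_of_le_one_left (mu_nonneg _) hε1
      linarith
    · have : ∃ z, z ∈ Y ∧ z ∉ Z ∧ (z = c ∨ ∃ a, z = f a) := by
        by_cases hcZ : c ∈ Z
        · have : ∃ a, f a ∉ Z := by
            by_contra hcon; push Not at hcon; exact hall ⟨hcZ, hcon⟩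
          obtain ⟨a, ha⟩ := this
          exact ⟨f a, hfY a, ha, Or.inr ⟨a, rfl⟩⟩
        · exact ⟨c, hc, hcZ, Or.inl rfl⟩
      obtain ⟨z, hzY, hzZ, hzf⟩ := this
      have h1 : ε * α ≤ mu (inn A z ∩ X) := by
        rw [hZ, mem_filter] at hzZ
        by_contra hcon; push Not at hcon; exact hzZ ⟨hzY, hcon⟩
      have h2 : mu (inn A z ∩ X) ≤ mu (X.filter (fun x => ¬ (c ∈ inn A x ∧ ∀ a, f a ∈ inn A x))) := by
        apply mu_mono
        intro x hx
        rw [mem_inter, mem_inn] at hx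
        rw [mem_filter]
        refine ⟨hx.2, ?_⟩
        rintro ⟨hc1, hf1⟩
        have : A z x := by
          rcases hzf with h | ⟨a, h⟩
          · rw [h]; simpa using hc1
          · rw [h]; simpa using hf1 a
        exact hopp _ _ hx.1 this
      have h3 := mul_nonneg hε0.le (mu_nonneg (X.filter (fun x => c ∈ Zx x ∧ ∀ a, f a ∈ Zx x)))
      linarith
  have hd1 : (ε * α) * avS Y (fun c => dens (St k 1 A c Y)) ≤
      avS X (fun x => R^k * (E1 A Y x + 2 * R * mu (Y \ nb A x)) + ε * (C * (L * mu (Zx x)^(k+2)))) := by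
    rw [← avS_mul]
    refine (avS_mono hstar).trans ?_
    rw [avS_add, avS_mul, avS_comm Y X, avS_comm Y X, avS_add, avS_mul X ε]
    apply add_le_add
    · exact avS_mono fun x _ => bad_x hopp hn (by omega) x hR
    · apply mul_le_mul_of_nonneg_left _ hε0.le
      apply avS_mono
      intro x _
      refine le_trans ?_ (inside_bound hopp hn (by omega) (Zx x))
      have hsub : Zx x ⊆ Y := inter_subset_right.trans (filter_subset _ _)
      rw [avS_split Y (Zx x), inter_eq_right.2 hsub]
      have h0 : avS (Y \ Zx x) (fun c => dens ((St k 1 A c Y).filter (fun f => c ∈ Zx x ∧ ∀ a, f a ∈ Zx x))) ≤ 0 * mu (Y \ Zx x) := by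
        apply avS_le_const
        intro c hc
        have : (St k 1 A c Y).filter (fun f => c ∈ Zx x ∧ ∀ a, f a ∈ Zx x) = ∅ := by
          rw [filter_eq_empty_iff]
          rintro f _ ⟨h, _⟩
          exact (mem_sdiff.1 hc).2 h
        rw [this]; simp [dens]
      have h1 : avS (Zx x) (fun c => dens ((St k 1 A c Y).filter (fun f => c ∈ Zx x ∧ ∀ a, f a ∈ Zx x))) ≤
          avS (Zx x) (fun c => dens (St k 1 A c (Zx x))) := by
        apply avS_mono
        intro c _
        apply dens_mono
        intro f hf
        rw [mem_filter, mem_St] at hf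
        rw [mem_St]
        exact ⟨fun a => ⟨(hf.1.1 a).1, hf.2.2 _⟩, fun a => ⟨(hf.1.2.1 a).1, hf.2.2 _⟩, hf.1.2.2⟩
      linarith
  have hNE : R^k ≤ 0.36 * L * (ε * α) := by
    have h1 := NE hk
    rw [← hRd, ← hLd] at h1
    have h2 : R^k ≤ 0.36 * L * (ε * (0.6/((k:ℝ)+2))) := by
      have e : 4 * ((k:ℝ)+1) * R^k * (((k:ℝ)+2)/0.6) = R^k / (ε * (0.6/((k:ℝ)+2))) := by
        rw [hε]; field_simp
      rw [e, div_le_iff₀ (by positivity)] at h1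
      exact h1
    refine h2.trans ?_
    gcongr
  have hd2 : avS Y (fun c => dens (St k 1 A c Y)) ≤
      avS X (fun x => 0.36 * L * (E1 A Y x + 2 * R * mu (Y \ nb A x)) + C * (L * mu (Zx x)^(k+2) / α)) := by
    have hεα : 0 < ε * α := mul_pos hε0 hαp
    refine le_of_mul_le_mul_left (hd1.trans ?_) hεα
    rw [← avS_mul]
    apply avS_mono
    intro x _
    have h0 : 0 ≤ E1 A Y x + 2 * R * mu (Y \ nb A x) :=
      add_nonneg (E1_nonneg x) (mul_nonneg (by positivity) (mu_nonneg _))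
    have h1 := mul_le_mul_of_nonneg_right hNE h0
    have e : ε * α * (C * (L * mu (Zx x)^(k+2) / α)) = ε * (C * (L * mu (Zx x)^(k+2))) := by
      field_simp
    rw [mul_add (ε * α), e]
    linarith
  -- s_X
  have hsX : avS univ (fun c => dens (St k 1 A c X)) ≤
      avS X (fun x => C * ((mu (inn A x ∩ Y) - mu (Zx x) + mu (nb A x ∩ X)) * (α - mu (nb A x ∩ X))^k)
        + ε * mu (Zx x) * α^k) := by
    rw [avS_split univ Z, univ_inter, add_comm, avS_add]
    apply add_le_add
    · refine (out_bound hopp hn (by omega) (univ \ Z) X).trans ?_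
      apply avS_mono
      intro x _
      rw [show k + 1 - 1 = k by omega, ← g.muXr, ← hCd]
      have h1 : mu (inn A x ∩ (univ \ Z)) = mu (inn A x) - mu (Zx x) := by
        have := mu_split (inn A x) Z
        have e : inn A x ∩ (univ \ Z) = inn A x \ Z := by ext z; simp
        rw [e]; simp only [hZx]; linarith
      have h2 := g.inn_split x
      have h3 : mu (inn A x ∩ (univ \ Z)) ≤ mu (inn A x ∩ Y) - mu (Zx x) + mu (nb A x ∩ X) := by linarith
      have h4 : 0 ≤ C * mu (X \ nb A x)^k := mul_nonneg hC.le (pow_nonneg (mu_nonneg _) _)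
      have h5 := mul_le_mul_of_nonneg_right h3 h4
      linarith
    · have h1 : avS Z (fun c => dens (St k 1 A c X)) ≤ avS Z (fun c => avS (out A c ∩ X) (fun _ => ε * α^k)) := by
        apply avS_mono
        intro c hc
        rw [avS_const]
        refine (dens_St_T c X).trans ?_
        have h2 : mu (inn A c ∩ X) ≤ ε * α := (mem_filter.1 hc).2.le
        have h3 : mu (out A c ∩ X) ≤ α := by rw [g.hα]; exact mu_mono inter_subset_right
        have h0 := mu_nonneg (out A c ∩ X)
        have h0' := mu_nonneg (inn A c ∩ X)
        rw [pow_one]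
        calc mu (out A c ∩ X)^k * mu (inn A c ∩ X)
            = mu (out A c ∩ X)^(k-1) * mu (out A c ∩ X) * mu (inn A c ∩ X) := by
              rw [← pow_succ]; congr 2; omega
          _ ≤ α^(k-1) * mu (out A c ∩ X) * (ε * α) := by gcongr
          _ = ε * (α^(k-1) * α) * mu (out A c ∩ X) := by ring
          _ = _ := by rw [← pow_succ]; congr 3; omega
      refine h1.trans (le_of_eq ?_)
      rw [avS_out_inn]
      apply avS_congr
      intro x _
      rw [avS_const]; simp only [hZx]; ring
  -- pointwise
  have hfin : avS X (fun x => 0.6 * L * mu (Y \ nb A x)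
      + (C * ((mu (inn A x ∩ Y) - mu (Zx x) + mu (nb A x ∩ X)) * (α - mu (nb A x ∩ X))^k) + ε * mu (Zx x) * α^k)
      + dens (St k 1 A x Y)
      + (0.36 * L * (E1 A Y x + 2 * R * mu (Y \ nb A x)) + C * (L * mu (Zx x)^(k+2) / α)))
      ≤ (OPT k 1 / α) * mu X := by
    apply avS_le_const
    intro x hx
    have hT := g.hT x hx
    have hpq := g.hpq hopp hn x
    have hp0 := mu_nonneg (out A x ∩ Y)
    have hq0 := mu_nonneg (inn A x ∩ Y)
    have hh0 := mu_nonneg (Y \ nb A x)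
    have hp1 := mu_le_one (out A x ∩ Y)
    have hl1 := loss hp0 hp1 hq0 hh0 k 1
    have hK := KT1 hopp hn (by omega) x (k := k) (Y := Y) (by linarith)
    have hE := E1_nonneg (A := A) (Y := Y) x
    have hwq : mu (Zx x) ≤ mu (inn A x ∩ Y) := mu_mono (inter_subset_inter_left (filter_subset _ _))
    have hr := g.muXr x
    have hr0 := mu_nonneg (X \ nb A x)
    have hq1 : mu (inn A x ∩ Y) ≤ 1/2 := by
      by_contra hcon
      push Not at hcon
      have h1 := Nhalf hk
      have h2 : mu (out A x ∩ Y) ≤ 1/2 := by linarith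
      have h3 : mu (out A x ∩ Y)^k * mu (inn A x ∩ Y)^1 ≤ (1/2)^(k+1) := by
        have a1 : mu (out A x ∩ Y)^(k-1) ≤ (1/2)^(k-1) := pow_le_pow_left₀ hp0 h2 _
        have a2 : mu (out A x ∩ Y) * mu (inn A x ∩ Y) ≤ 1/4 := by nlinarith
        calc _ = mu (out A x ∩ Y)^(k-1) * (mu (out A x ∩ Y) * mu (inn A x ∩ Y)) := by
              rw [pow_one, ← mul_assoc, ← pow_succ]; congr 2; omega
          _ ≤ (1/2)^(k-1) * (1/4) := by
              apply mul_le_mul a1 a2 (mul_nonneg hp0 hq0) (by positivity)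
          _ = (1/2)^(k-1) * (1/2)^2 := by norm_num
          _ = _ := by rw [← pow_add]; congr 1; omega
      rw [← hLd] at h1
      linarith
    have hf := final1 hk hαp hα1 (g.hq x hx) hq1 (mu_nonneg (Zx x)) hwq (mu_nonneg (nb A x ∩ X)) (by linarith)
    rw [← hCd, ← hLd, ← hε] at hf
    rw [le_div_iff₀ hαp, mul_comm]
    refine le_trans (mul_le_mul_of_nonneg_left ?_ hαp.le) hf
    rw [show mu (out A x ∩ Y) + mu (Y \ nb A x) = 1 - α - mu (inn A x ∩ Y) by linarith, pow_one] at hl1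
    rw [pow_one] at hT hK
    generalize hTd : mu (out A x ∩ Y) ^ k * mu (inn A x ∩ Y) = T at *
    generalize mu (Y \ nb A x) = h at *
    generalize E1 A Y x = E at *
    generalize dens (St k 1 A x Y) = K at *
    have h3 : 0.36 * L * E ≤ T * E := mul_le_mul_of_nonneg_right hT hE
    have h4 : 5 * (0.36 * L * h) ≤ k * h * T := by
      have a1 : 0.36 * L * h ≤ h * T := by nlinarith
      have a2 : 0 ≤ h * T := mul_nonneg hh0 (by linarith)
      nlinarith
    have h5 : 0 ≤ L * h := mul_nonneg hL.le hh0
    have h6 : 0.36 * L * (2 * R * h) ≤ 0.36 * (L * h) := by nlinarith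
    linarith
  rw [avS_add, avS_add, avS_add, ← g.hα, div_mul_cancel₀ _ hαp.ne'] at hfin
  linarith

end
end OStar
end

theorem stmt3 (k l : ℕ) (hl : 1 ≤ l) (hlk : l ≤ k) (hm : 6 ≤ k + l)
    (V : Type) [Fintype V] (A : V → V → Prop)
    (hirr : Irreflexive A) (hopp : ∀ u v, A u v → ¬ A v u) (hn : 1 ≤ Fintype.card V)
    (hvert : ∀ v : V, OPT k l ≤ sVert k l A v) :
    starProb k l V A ≤ OPT k l := by
  by_contra hcon
  have hcon' : OPT k l < starProb k l V A := not_le.1 hcon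
  obtain ⟨X, Y, α, g⟩ := OStar.good_of hopp hn hl hlk hm hvert hcon'
  rcases Nat.lt_or_ge l 2 with h | h
  · have h1 : l = 1 := by omega
    subst h1
    exact hcon (g.final_one hopp hn (by omega))
  · rcases Nat.lt_or_ge l k with h2 | h2
    · exact hcon (g.final_gt hopp hn h h2 hm)
    · have h3 : l = k := by omega
      subst h3
      exact hcon (g.final_eq hopp hn hm)
end

section
/- For every vertex v of G one has s(v) ≤ (1/(m+1)) · (λ₀ · ρ(v)^m + λ₁ · ρ(v) · (1 − ρ(v))^{m−1}). -/
open scoped BigOperators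

open Finset in
lemma amgm_aux (k j : ℕ) (a b S : ℝ) (ha : 0 ≤ a) (hb : 0 ≤ b) (hS : a + b ≤ S) :
    a ^ k * b ^ j * ((k : ℝ) + j) ^ (k + j) ≤ (k : ℝ) ^ k * (j : ℝ) ^ j * S ^ (k + j) := by
  have hS0 : 0 ≤ S := by linarith
  rcases Nat.eq_zero_or_pos k with rfl | hk
  · simp only [pow_zero, one_mul, Nat.cast_zero, zero_add]
    rw [mul_comm]
    gcongr
    linarith
  rcases Nat.eq_zero_or_pos j with rfl | hj
  · simp only [pow_zero, mul_one, Nat.cast_zero, add_zero]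
    rw [mul_comm]
    gcongr
    linarith
  rcases hS0.eq_or_lt with h0 | hpos
  · have h1 : a = 0 := by linarith
    rw [h1, zero_pow (by omega)]
    simp only [zero_mul]
    positivity
  have hk' : (0 : ℝ) < k := by exact_mod_cast hk
  have hj' : (0 : ℝ) < j := by exact_mod_cast hj
  set M : ℝ := (k : ℝ) + j with hM
  have hM0 : 0 < M := by positivity
  set t := a * M / (k * S) with ht
  set u := b * M / (j * S) with hu
  have ht0 : 0 ≤ t := by positivity
  have hu0 : 0 ≤ u := by positivity
  have e1 : t ≤ Real.exp (t - 1) := by have := Real.add_one_le_exp (t - 1); linarith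
  have e2 : u ≤ Real.exp (u - 1) := by have := Real.add_one_le_exp (u - 1); linarith
  have hsum : k * (t - 1) + j * (u - 1) ≤ 0 := by
    have : k * t + j * u = (a + b) * M / S := by
      rw [ht, hu]; field_simp
    have h2 : (a + b) * M / S ≤ M := by
      rw [div_le_iff₀ hpos]; nlinarith
    nlinarith
  have key : t ^ k * u ^ j ≤ 1 := by
    calc t ^ k * u ^ j ≤ Real.exp (t - 1) ^ k * Real.exp (u - 1) ^ j := by gcongr
      _ = Real.exp (k * (t - 1) + j * (u - 1)) := by
        rw [Real.exp_add, Real.exp_nat_mul, Real.exp_nat_mul]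
      _ ≤ 1 := by rw [Real.exp_le_one_iff]; exact hsum
  have hA : a * M = t * (k * S) := by rw [ht]; field_simp
  have hB : b * M = u * (j * S) := by rw [hu]; field_simp
  calc a ^ k * b ^ j * M ^ (k + j) = (a * M) ^ k * (b * M) ^ j := by
        rw [pow_add, mul_pow, mul_pow]; ring
    _ = (t ^ k * u ^ j) * ((k : ℝ) ^ k * (j : ℝ) ^ j * S ^ (k + j)) := by
        rw [hA, hB, pow_add]; simp only [mul_pow]; ring
    _ ≤ 1 * ((k : ℝ) ^ k * (j : ℝ) ^ j * S ^ (k + j)) := by gcongr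
    _ = _ := one_mul _

noncomputable def Bc (k j : ℕ) : ℝ := (k : ℝ) ^ k * (j : ℝ) ^ j / ((k : ℝ) + j) ^ (k + j)

lemma Bc_nonneg (k j : ℕ) : 0 ≤ Bc k j := by unfold Bc; positivity

lemma amgm_Bc (k j : ℕ) (h : 1 ≤ k + j) (a b S : ℝ) (ha : 0 ≤ a) (hb : 0 ≤ b) (hS : a + b ≤ S) :
    a ^ k * b ^ j ≤ Bc k j * S ^ (k + j) := by
  have := amgm_aux k j a b S ha hb hS
  have hp : (0 : ℝ) < (k : ℝ) + j := by exact_mod_cast h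
  unfold Bc
  rw [div_mul_eq_mul_div, le_div_iff₀ (by positivity)]
  exact this

lemma mono_aux (K L : ℕ) (h : L ≤ K) :
    (K : ℝ) ^ K * ((L : ℝ) + 1) ^ L ≤ ((K : ℝ) + 1) ^ K * (L : ℝ) ^ L := by
  obtain ⟨d, rfl⟩ := Nat.exists_eq_add_of_le h
  have := amgm_aux L d ((L : ℝ) + 1) d ((L : ℝ) + d + 1) (by positivity) (by positivity)
    (by linarith)
  have hd : (0 : ℝ) < (d : ℝ) ^ d := by
    rcases Nat.eq_zero_or_pos d with rfl | hd
    · simp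
    · positivity
  push_cast
  refine le_of_mul_le_mul_right ?_ hd
  linarith

lemma Bc_comp (k l : ℕ) (hl : 1 ≤ l) (hlk : l ≤ k) :
    (k : ℝ) * Bc (k - 1) l ≤ l * Bc k (l - 1) := by
  obtain ⟨K, rfl⟩ := Nat.exists_eq_add_of_le' (hl.trans hlk)
  obtain ⟨L, rfl⟩ := Nat.exists_eq_add_of_le' hl
  have := mono_aux K L (by omega)
  unfold Bc
  simp only [Nat.add_sub_cancel]
  push_cast
  rw [show (K : ℝ) + ((L : ℝ) + 1) = K + 1 + L by ring, show K + (L + 1) = K + 1 + L by ring,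
    ← mul_div_assoc, ← mul_div_assoc]
  gcongr ?_ / _
  have h3 := mul_le_mul_of_nonneg_left this (show (0 : ℝ) ≤ ((K : ℝ) + 1) * (L + 1) by positivity)
  rw [pow_succ, pow_succ]
  linarith

lemma prod_center (k l x y : ℕ) :
    ∏ a : Fin (k + l + 1), (if a.val = 0 then 1 else if a.val ≤ k then x else y)
      = x ^ k * y ^ l := by
  rw [Fin.prod_univ_eq_prod_range (fun a => if a = 0 then 1 else if a ≤ k then x else y),
    Finset.prod_range_succ', Finset.prod_range_add]
  have h1 : ∀ i ∈ Finset.range k, (if i + 1 = 0 then 1 else if i + 1 ≤ k then x else y) = x := by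
    intro i hi
    rw [Finset.mem_range] at hi
    rw [if_neg (by omega), if_pos (by omega)]
  have h2 : ∀ i ∈ Finset.range l,
      (if k + i + 1 = 0 then 1 else if k + i + 1 ≤ k then x else y) = y := by
    intro i hi
    rw [if_neg (by omega), if_neg (by omega)]
  rw [Finset.prod_congr rfl h1, Finset.prod_congr rfl h2]
  simp

lemma prod_in (k l x y : ℕ) (hl : 1 ≤ l) :
    ∏ a : Fin (k + l + 1), (if a.val = 0 then 1 else if a.val = k + 1 then 1 else
      if a.val ≤ k then x else y) = x ^ k * y ^ (l - 1) := by
  obtain ⟨L, rfl⟩ := Nat.exists_eq_add_of_le' hl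
  rw [Fin.prod_univ_eq_prod_range
      (fun a => if a = 0 then 1 else if a = k + 1 then 1 else if a ≤ k then x else y),
    Finset.prod_range_succ', Finset.prod_range_add, Finset.prod_range_succ']
  have h1 : ∀ i ∈ Finset.range k, (if i + 1 = 0 then 1 else if i + 1 = k + 1 then 1 else
      if i + 1 ≤ k then x else y) = x := by
    intro i hi
    rw [Finset.mem_range] at hi
    rw [if_neg (by omega), if_neg (by omega), if_pos (by omega)]
  have h2 : ∀ i ∈ Finset.range L,
      (if k + (i + 1) + 1 = 0 then 1 else if k + (i + 1) + 1 = k + 1 then 1 else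
        if k + (i + 1) + 1 ≤ k then x else y) = y := by
    intro i hi
    rw [if_neg (by omega), if_neg (by omega), if_neg (by omega)]
  rw [Finset.prod_congr rfl h1, Finset.prod_congr rfl h2]
  simp

lemma prod_out (k l x y : ℕ) (hk : 1 ≤ k) :
    ∏ a : Fin (k + l + 1), (if a.val = 0 then 1 else if a.val = 1 then 1 else
      if a.val ≤ k then x else y) = x ^ (k - 1) * y ^ l := by
  obtain ⟨K, rfl⟩ := Nat.exists_eq_add_of_le' hk
  rw [Fin.prod_univ_eq_prod_range
      (fun a => if a = 0 then 1 else if a = 1 then 1 else if a ≤ K + 1 then x else y),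
    Finset.prod_range_succ', Finset.prod_range_add, Finset.prod_range_succ']
  have h1 : ∀ i ∈ Finset.range K, (if i + 1 + 1 = 0 then 1 else if i + 1 + 1 = 1 then 1 else
      if i + 1 + 1 ≤ K + 1 then x else y) = x := by
    intro i hi
    rw [Finset.mem_range] at hi
    rw [if_neg (by omega), if_neg (by omega), if_pos (by omega)]
  have h2 : ∀ i ∈ Finset.range l,
      (if K + 1 + i + 1 = 0 then 1 else if K + 1 + i + 1 = 1 then 1 else
        if K + 1 + i + 1 ≤ K + 1 then x else y) = y := by
    intro i hi
    rw [if_neg (by omega), if_neg (by omega), if_neg (by omega)]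
  rw [Finset.prod_congr rfl h1, Finset.prod_congr rfl h2]
  simp

open Classical in
noncomputable def oN {V : Type*} [Fintype V] (A : V → V → Prop) (v : V) : Finset V :=
  Finset.univ.filter (fun u => A v u)
open Classical in
noncomputable def iN {V : Type*} [Fintype V] (A : V → V → Prop) (v : V) : Finset V :=
  Finset.univ.filter (fun u => A u v)
open Classical in
noncomputable def aN {V : Type*} [Fintype V] (A : V → V → Prop) (v : V) : Finset V :=
  Finset.univ.filter (fun u => A v u ∨ A u v)

lemma center_count (k l : ℕ) {V : Type*} [Fintype V] (A : V → V → Prop) (v : V) :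
    Nat.card {φ : Fin (k + l + 1) → V // IsStarEmb k l A φ ∧ φ 0 = v}
      ≤ (oN A v).card ^ k * (iN A v).card ^ l := by
  classical
  rw [Nat.card_eq_fintype_card, Fintype.card_subtype]
  have hsub : (Finset.univ.filter fun φ : Fin (k + l + 1) → V => IsStarEmb k l A φ ∧ φ 0 = v) ⊆
      Fintype.piFinset (fun a : Fin (k + l + 1) =>
        if a.val = 0 then {v} else if a.val ≤ k then oN A v else iN A v) := by
    intro φ hφ
    rw [Finset.mem_filter] at hφ
    obtain ⟨-, ⟨-, hs⟩, h0⟩ := hφ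
    rw [Fintype.mem_piFinset]
    intro a
    split_ifs with h1 h2
    · have : a = 0 := Fin.ext h1
      rw [this, h0]; simp
    · have := (hs 0 a).1 (Or.inl ⟨rfl, by omega, h2⟩)
      rw [h0] at this
      simpa [oN] using this
    · have := (hs a 0).1 (Or.inr ⟨rfl, by omega⟩)
      rw [h0] at this
      simpa [iN] using this
  refine (Finset.card_le_card hsub).trans ?_
  rw [Fintype.card_piFinset, ← prod_center]
  refine le_of_eq (Finset.prod_congr rfl fun a _ => ?_)
  split_ifs <;> simp

lemma leaf_count (k l : ℕ) {V : Type*} [Fintype V] (A : V → V → Prop) (v : V)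
    [DecidableEq V] (z : Fin (k + l + 1)) (hz : z.val ≠ 0) (S : Finset V)
    (hS : ∀ φ, IsStarEmb k l A φ → φ z = v → φ 0 ∈ S) :
    Nat.card {φ : Fin (k + l + 1) → V // IsStarEmb k l A φ ∧ φ z = v}
      ≤ ∑ c ∈ S, ∏ a : Fin (k + l + 1), (if a.val = 0 then 1 else if a.val = z.val then 1 else
        if a.val ≤ k then (oN A c \ aN A v).card else (iN A c \ aN A v).card) := by
  classical
  rw [Nat.card_eq_fintype_card, Fintype.card_subtype]
  have hsub : (Finset.univ.filter fun φ : Fin (k + l + 1) → V => IsStarEmb k l A φ ∧ φ z = v) ⊆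
      S.biUnion (fun c => Fintype.piFinset (fun a : Fin (k + l + 1) =>
        if a.val = 0 then {c} else if a.val = z.val then {v} else
        if a.val ≤ k then oN A c \ aN A v else iN A c \ aN A v)) := by
    intro φ hφ
    rw [Finset.mem_filter] at hφ
    obtain ⟨-, hst, h0⟩ := hφ
    have hS' := hS φ hst h0
    obtain ⟨hinj, hs⟩ := hst
    rw [Finset.mem_biUnion]
    refine ⟨φ 0, hS', ?_⟩
    rw [Fintype.mem_piFinset]
    intro a
    have hna : a.val ≠ 0 → φ a ∉ aN A v := by
      intro ha hmem
      simp only [aN, Finset.mem_filter, Finset.mem_univ, true_and] at hmem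
      rw [← h0, ← hs, ← hs] at hmem
      unfold StarArc at hmem
      omega
    split_ifs with h1 h2 h3
    · have : a = 0 := Fin.ext h1
      rw [this]; simp
    · have : a = z := Fin.ext h2
      rw [this, h0]; simp
    · have := (hs 0 a).1 (Or.inl ⟨rfl, by omega, h3⟩)
      rw [Finset.mem_sdiff]
      exact ⟨by simpa [oN] using this, hna h1⟩
    · have := (hs a 0).1 (Or.inr ⟨rfl, by omega⟩)
      rw [Finset.mem_sdiff]
      exact ⟨by simpa [iN] using this, hna h1⟩
  refine (Finset.card_le_card hsub).trans (Finset.card_biUnion_le.trans ?_)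
  refine le_of_eq (Finset.sum_congr rfl fun c _ => ?_)
  rw [Fintype.card_piFinset]
  refine Finset.prod_congr rfl fun a _ => ?_
  split_ifs <;> simp

lemma disj_count {V : Type*} [Fintype V] [DecidableEq V] (A : V → V → Prop)
    (hopp : ∀ u v, A u v → ¬ A v u) (c v : V) :
    (oN A c \ aN A v).card + (iN A c \ aN A v).card + (aN A v).card ≤ Fintype.card V := by
  rw [← Finset.card_union_of_disjoint, ← Finset.card_union_of_disjoint]
  · exact Finset.card_le_univ _
  · rw [Finset.disjoint_left]
    intro x hx
    simp only [Finset.mem_union, Finset.mem_sdiff] at hx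
    tauto
  · rw [Finset.disjoint_left]
    intro x hx hy
    simp only [Finset.mem_sdiff, oN, iN, Finset.mem_filter, Finset.mem_univ, true_and] at hx hy
    exact hopp _ _ hx.1 hy.1

lemma split_count {V : Type*} [Fintype V] (A : V → V → Prop)
    (hopp : ∀ u v, A u v → ¬ A v u) (v : V) :
    (oN A v).card + (iN A v).card = (aN A v).card := by
  classical
  rw [← Finset.card_union_of_disjoint]
  · congr 1
    ext x
    simp [oN, iN, aN]
  · rw [Finset.disjoint_left]
    intro x hx hy
    simp only [oN, iN, Finset.mem_filter, Finset.mem_univ, true_and] at hx hy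
    exact hopp _ _ hx hy

theorem stmt8 (k l : ℕ) (hl : 1 ≤ l) (hlk : l ≤ k) (hm : 6 ≤ k + l)
    (V : Type) [Fintype V] (A : V → V → Prop)
    (hirr : Irreflexive A) (hopp : ∀ u v, A u v → ¬ A v u) (hn : 1 ≤ Fintype.card V)
    (v : V) :
    sVert k l A v ≤ (1 / ((k : ℝ) + l + 1)) *
      (lam0 k l * rho A v ^ (k + l) + lam1 k l * rho A v * (1 - rho A v) ^ (k + l - 1)) := by
  classical
  set n : ℝ := (Fintype.card V : ℝ) with hnn
  have hn0 : 0 < n := by rw [hnn]; exact_mod_cast hn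
  set p : ℝ := ((oN A v).card : ℝ) with hp
  set q : ℝ := ((iN A v).card : ℝ) with hq
  set d : ℝ := ((aN A v).card : ℝ) with hd
  have hpq : p + q = d := by
    rw [hp, hq, hd]; exact_mod_cast split_count A hopp v
  have hp0 : 0 ≤ p := by positivity
  have hq0 : 0 ≤ q := by positivity
  have hdn : d ≤ n := by rw [hd, hnn]; exact_mod_cast Finset.card_le_univ _
  have hrho : rho A v = d / n := by
    unfold rho
    rw [Nat.card_eq_fintype_card, Fintype.card_subtype, hd, hnn]
    unfold aN
    congr!
  have hl0 : lam0 k l = Bc k l := rfl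
  have hl1 : lam1 k l = l * Bc k (l - 1) := by
    unfold lam1 Bc
    rw [Nat.cast_sub hl, Nat.cast_one, show k + (l - 1) = k + l - 1 by omega,
      ← add_sub_assoc]
    ring
  -- center
  have hc : sCond k l A 0 v ≤ Bc k l * (d / n) ^ (k + l) := by
    unfold sCond
    have h1 : (Nat.card {φ : Fin (k + l + 1) → V // IsStarEmb k l A φ ∧ φ 0 = v} : ℝ)
        ≤ p ^ k * q ^ l := by
      rw [hp, hq]; exact_mod_cast center_count k l A v
    have h2 := amgm_Bc k l (by omega) p q d hp0 hq0 hpq.le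
    rw [div_pow, ← mul_div_assoc]
    gcongr
    exact h1.trans h2
  have hW : ∀ c : V, ((oN A c \ aN A v).card : ℝ) + ((iN A c \ aN A v).card : ℝ) ≤ n - d := by
    intro c
    have := disj_count A hopp c v
    have h2 : ((oN A c \ aN A v).card : ℝ) + ((iN A c \ aN A v).card : ℝ) + d ≤ n := by
      rw [hd, hnn]; exact_mod_cast this
    linarith
  have e1 : 1 - d / n = (n - d) / n := by field_simp
  have hpow : n ^ (k + l) = n * n ^ (k + l - 1) := by
    rw [← pow_succ']; congr 1; omega
  have hfin : ∀ (B x : ℝ), x * (B * (n - d) ^ (k + l - 1)) / n ^ (k + l)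
      = B * (x / n) * ((n - d) / n) ^ (k + l - 1) := by
    intro B x
    rw [hpow, div_pow]; field_simp
  have hi : ∀ z : Fin (k + l + 1), z.val = k + 1 →
      sCond k l A z v ≤ Bc k (l - 1) * (p / n) * ((n - d) / n) ^ (k + l - 1) := by
    intro z hz
    unfold sCond
    rw [← hfin]
    gcongr
    have h1 := leaf_count k l A v z (by omega) (oN A v) (by
      intro φ hφ h0
      have := (hφ.2 z 0).1 (Or.inr ⟨rfl, by omega⟩)
      rw [h0] at this
      simpa [oN] using this)
    simp only [hz] at h1
    simp only [prod_in k l _ _ hl] at h1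
    have h1' : (Nat.card {φ : Fin (k + l + 1) → V // IsStarEmb k l A φ ∧ φ z = v} : ℝ) ≤ _ :=
      Nat.cast_le.2 h1
    refine h1'.trans ?_
    push_cast
    rw [hp, ← nsmul_eq_mul]
    refine Finset.sum_le_card_nsmul _ _ _ fun c _ => ?_
    have := amgm_Bc k (l - 1) (by omega) _ _ _ (Nat.cast_nonneg _) (Nat.cast_nonneg _) (hW c)
    rwa [show k + (l - 1) = k + l - 1 by omega] at this
  have ho : ∀ z : Fin (k + l + 1), z.val = 1 →
      sCond k l A z v ≤ Bc (k - 1) l * (q / n) * ((n - d) / n) ^ (k + l - 1) := by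
    intro z hz
    unfold sCond
    rw [← hfin]
    gcongr
    have h1 := leaf_count k l A v z (by omega) (iN A v) (by
      intro φ hφ h0
      have := (hφ.2 0 z).1 (Or.inl ⟨rfl, by omega, by omega⟩)
      rw [h0] at this
      simpa [iN] using this)
    simp only [hz] at h1
    simp only [prod_out k l _ _ (hl.trans hlk)] at h1
    have h1' : (Nat.card {φ : Fin (k + l + 1) → V // IsStarEmb k l A φ ∧ φ z = v} : ℝ) ≤ _ :=
      Nat.cast_le.2 h1
    refine h1'.trans ?_
    push_cast
    rw [hq, ← nsmul_eq_mul]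
    refine Finset.sum_le_card_nsmul _ _ _ fun c _ => ?_
    have := amgm_Bc (k - 1) l (by omega) _ _ _ (Nat.cast_nonneg _) (Nat.cast_nonneg _) (hW c)
    rwa [show k - 1 + l = k + l - 1 by omega] at this
  unfold sVert
  rw [one_div_mul_eq_div, hrho, e1, hl0, hl1]
  refine div_le_div_of_nonneg_right ?_ (by positivity)
  have hi' := hi (Fin.ofNat (k + l + 1) (k + 1)) (by
    simp only [Fin.ofNat]
    exact Nat.mod_eq_of_lt (by omega))
  have ho' := ho 1 (by
    rw [Fin.val_one']
    exact Nat.mod_eq_of_lt (by omega))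
  set R := ((n - d) / n) ^ (k + l - 1) with hR
  have hR0 : 0 ≤ R := by
    have : 0 ≤ n - d := by linarith
    positivity
  have hi2 := mul_le_mul_of_nonneg_left hi' (Nat.cast_nonneg (α := ℝ) l)
  have ho2 := mul_le_mul_of_nonneg_left ho' (Nat.cast_nonneg (α := ℝ) k)
  have h5 := mul_le_mul_of_nonneg_right (Bc_comp k l hl hlk)
    (show 0 ≤ q / n * R by positivity)
  have h6 : d / n = p / n + q / n := by rw [← hpq]; ring
  have h7 : (l : ℝ) * Bc k (l - 1) * (d / n) * R
      = l * Bc k (l - 1) * (p / n) * R + l * Bc k (l - 1) * (q / n * R) := by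
    rw [h6]; ring
  rw [h7]
  have h8 : (l : ℝ) * sCond k l A (Fin.ofNat (k + l + 1) (k + 1)) v
      ≤ l * Bc k (l - 1) * (p / n) * R := by linarith
  have h9 : (k : ℝ) * sCond k l A 1 v ≤ l * Bc k (l - 1) * (q / n * R) := by linarith
  have h10 := add_le_add (add_le_add hc h8) h9
  rw [add_assoc (Bc k l * (d / n) ^ (k + l))] at h10
  exact h10
end
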